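/- For every planar simple graph G₁ on n vertices and every planar simple graph G₂ with 4·|V(G₂)| ≤ n, there exists a SefeNoMap of G₁ and G₂. -/

import Mathlib

open Set Bornology

/-- Points of the Euclidean plane. -/
abbrev Pt : Type := ℝ × ℝ

/-- `A` is an arc connecting `p` and `q`: the image of a continuous injective map
from `[0,1]` to the plane sending `0` to `p` and `1` to `q`. -/
def IsArcBetween (A : Set Pt) (p q : Pt) : Prop :=
  ∃ f : ℝ → Pt, ContinuousOn f (Set.Icc 0 1) ∧ Set.InjOn f (Set.Icc 0 1) ∧
    f 0 = p ∧ f 1 = q ∧ A = f '' Set.Icc 0 1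

/-- A planar drawing of a finite simple graph `G`: an injective placement of the
vertices in the plane, together with an arc for each edge joining the images of its
endpoints, such that no arc passes through the image of a vertex other than its two
endpoints, and two distinct arcs intersect only at images of shared endpoints. -/
structure PlanarDrawing {V : Type} [Fintype V] (G : SimpleGraph V) where
  ρ : V → Pt
  inj : Function.Injective ρ
  arc : Sym2 V → Set Pt
  arc_isArc : ∀ u v : V, G.Adj u v → IsArcBetween (arc s(u, v)) (ρ u) (ρ v)
  vertex_mem : ∀ e ∈ G.edgeSet, ∀ w : V, ρ w ∈ arc e → w ∈ e
  arcs_cross : ∀ e ∈ G.edgeSet, ∀ e' ∈ G.edgeSet, e ≠ e' →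
    ∀ x ∈ arc e ∩ arc e', ∃ w : V, w ∈ e ∧ w ∈ e' ∧ x = ρ w

/-- A SefeNoMap of `G₁` and `G₂`: a pair of planar drawings such that the vertex
points of `Γ₂` form a subset of the vertex points of `Γ₁`, and whenever an edge of
`G₁` and an edge of `G₂` have their endpoints mapped to the same pair of points, the
two edges are represented by the same arc. -/
def IsSefeNoMap {V₁ V₂ : Type} [Fintype V₁] [Fintype V₂]
    {G₁ : SimpleGraph V₁} {G₂ : SimpleGraph V₂}
    (Γ₁ : PlanarDrawing G₁) (Γ₂ : PlanarDrawing G₂) : Prop :=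
  Set.range Γ₂.ρ ⊆ Set.range Γ₁.ρ ∧
  ∀ u v : V₁, ∀ a b : V₂, G₁.Adj u v → G₂.Adj a b →
    ({Γ₁.ρ u, Γ₁.ρ v} : Set Pt) = ({Γ₂.ρ a, Γ₂.ρ b} : Set Pt) →
    Γ₁.arc s(u, v) = Γ₂.arc s(a, b)

/-!
By compactness, a planar drawing can be fattened to a drawing in the integer grid, with disjoint
boxes for vertices and disjoint grid paths for edges; reading it back gives a drawing with
polygonal edges. In the grid, the mod-2 cycles are exactly the coboundaries of the functions on the
unit squares (count the crossings with a ray). This duality replaces the Jordan curve theorem and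
Euler's formula: it passes to minors and bounds the number of edges of a planar graph by
`3 * |V| - 3`, so planar graphs are 5-degenerate. Adding the vertices one by one, each with at most
five earlier neighbours, one can place them in three classes so that each has at most one earlier
neighbour in its own class; hence the classes induce forests. The largest of them contains an
induced linear forest on at least 3/4 of its vertices, so at least a quarter of the vertices of `G₁`
can be listed with only consecutive ones adjacent.

List the first `|V₂|` of these, and the vertices of `G₂` in any order. Some homeomorphism of the
plane takes the `j`-th listed vertex of `G₁` to `(j, 0)` and the common edges of the two lists to
segments of the horizontal axis, because these edges form disjoint polygonal arcs, which can be
straightened; another does the same for `G₂`. The two resulting drawings agree on the common edges,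
and there is no other pair of edges with the same ends.
-/

/-- The mod-2 boundary operator of the multigraph whose edge `e` joins `a e` to `b e`. -/
noncomputable def boundary {E V : Type*} (a b : E → V) :
    (E →₀ ZMod 2) →ₗ[ZMod 2] (V →₀ ZMod 2) :=
  Finsupp.linearCombination (ZMod 2) fun e => Finsupp.single (a e) 1 + Finsupp.single (b e) 1

/-- The mod-2 coboundary of the function `w`, for edges separating the faces `l e` and `r e`. -/
def coboundary {E F : Type*} (l r : E → F) (w : F → ZMod 2) (e : E) : ZMod 2 :=
  w (l e) + w (r e)

/-- Planar duality in algebraic form: the cycles of the multigraph with ends `a`, `b` are the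
coboundaries of the functions on the faces, `l e` and `r e` being the two sides of `e`. -/
def IsPlanarDual {E V F : Type*} (a b : E → V) (l r : E → F) : Prop :=
  ∀ z : E →₀ ZMod 2, boundary a b z = 0 ↔ ∃ w, coboundary l r w = z

section Boundary

variable {E V : Type*} (a b : E → V)

lemma boundary_single (e : E) (t : ZMod 2) :
    boundary a b (Finsupp.single e t) = Finsupp.single (a e) t + Finsupp.single (b e) t := by
  simp [boundary]

lemma boundary_apply [DecidableEq V] (z : E →₀ ZMod 2) (v : V) :
    boundary a b z v =
      ∑ e ∈ z.support, z e * ((if a e = v then 1 else 0) + (if b e = v then 1 else 0)) := by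
  simp [boundary, Finsupp.linearCombination_apply, Finsupp.sum, Finsupp.finsetSum_apply,
    Finsupp.single_apply, mul_add]

lemma card_edges_add_one_le_finrank_cycles [Fintype E] [Fintype V] [Nonempty V] :
    Fintype.card E + 1 ≤
      Module.finrank (ZMod 2) (LinearMap.ker (boundary a b)) + Fintype.card V := by
  let total : (V →₀ ZMod 2) →ₗ[ZMod 2] ZMod 2 := Finsupp.linearCombination (ZMod 2) fun _ => 1
  have total_surjective : Function.Surjective total := fun c =>
    ⟨Finsupp.single (Classical.arbitrary V) c, by simp [total]⟩
  have range_le : LinearMap.range (boundary a b) ≤ LinearMap.ker total := by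
    rw [LinearMap.range_le_ker_iff]
    ext e
    simp [boundary, total, CharTwo.add_self_eq_zero]
  have rank_boundary := LinearMap.finrank_range_add_finrank_ker (boundary a b)
  have rank_total := LinearMap.finrank_range_add_finrank_ker total
  rw [LinearMap.range_eq_top.2 total_surjective] at rank_total
  have := Submodule.finrank_mono range_le
  simp only [finrank_top, Module.finrank_self, Module.finrank_finsupp_self]
    at rank_boundary rank_total
  omega

variable {a b}

lemma exists_ne_of_boundary_eq_zero {z : E →₀ ZMod 2} (hz : boundary a b z = 0)
    {e : E} (he : z e ≠ 0) (hab : a e ≠ b e) {v : V} (hv : v ∈ s(a e, b e)) :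
    ∃ e', e' ≠ e ∧ z e' ≠ 0 ∧ v ∈ s(a e', b e') := by
  classical
  have hsum := boundary_apply a b z v
  rw [hz, Finsupp.zero_apply] at hsum
  by_contra! hcon
  rw [Finset.sum_eq_single e] at hsum
  · rcases Sym2.mem_iff.1 hv with rfl | rfl <;>
      exact he (by simpa [hab, hab.symm] using hsum.symm)
  · intro e' he' hne
    have := hcon e' hne (Finsupp.mem_support_iff.1 he')
    rw [Sym2.mem_iff, not_or] at this
    simp [Ne.symm this.1, Ne.symm this.2]
  · simp [he]

lemma three_le_card_support_of_boundary_eq_zero (hab : ∀ e, a e ≠ b e)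
    (hinj : Function.Injective fun e => s(a e, b e)) {z : E →₀ ZMod 2}
    (hz : boundary a b z = 0) (hz0 : z ≠ 0) : 3 ≤ z.support.card := by
  classical
  obtain ⟨e, he⟩ := Finsupp.ne_iff.1 hz0
  obtain ⟨e₁, hne₁, hz₁, ha⟩ := exists_ne_of_boundary_eq_zero hz he (hab e) (Sym2.mem_mk_left _ _)
  obtain ⟨e₂, hne₂, hz₂, hb⟩ := exists_ne_of_boundary_eq_zero hz he (hab e) (Sym2.mem_mk_right _ _)
  have hne : e₁ ≠ e₂ := by
    rintro rfl
    exact hne₁ (hinj ((Sym2.mem_and_mem_iff (hab e)).1 ⟨ha, hb⟩))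
  have hcard : ({e, e₁, e₂} : Finset E).card = 3 :=
    Finset.card_eq_three.2 ⟨e, e₁, e₂, hne₁.symm, hne₂.symm, hne, rfl⟩
  rw [← hcard]
  refine Finset.card_le_card fun x hx => Finsupp.mem_support_iff.2 ?_
  simp only [Finset.mem_insert, Finset.mem_singleton] at hx
  rcases hx with rfl | rfl | rfl <;> assumption

end Boundary

section Count

variable {E V F : Type*} [Fintype E] {a b : E → V} {l r : E → F}

open scoped Classical in
/-- The boundary walk of the face `f`, as a mod-2 chain. -/
noncomputable def faceCycle (l r : E → F) (f : F) : E →₀ ZMod 2 :=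
  Finsupp.equivFunOnFinite.symm (coboundary l r (Pi.single f 1))

lemma faceCycle_apply [DecidableEq F] (f : F) (e : E) :
    faceCycle l r f e = (if l e = f then 1 else 0) + (if r e = f then 1 else 0) := by
  simp only [faceCycle, Finsupp.equivFunOnFinite_symm_apply_apply, coboundary, Pi.single_apply]
  congr

lemma sum_card_support_faceCycle_le (Φ : Finset F) :
    ∑ f ∈ Φ, (faceCycle l r f).support.card ≤ 2 * Fintype.card E := by
  classical
  have sides (e : E) : (Φ.filter fun f => e ∈ (faceCycle l r f).support).card ≤ 2 := by
    refine (Finset.card_le_card fun f hf => ?_).trans (Finset.card_le_two (a := l e) (b := r e))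
    have := (Finset.mem_filter.1 hf).2
    rw [Finsupp.mem_support_iff, faceCycle_apply] at this
    simp only [Finset.mem_insert, Finset.mem_singleton]
    by_contra! hne
    simp [hne.1.symm, hne.2.symm] at this
  calc ∑ f ∈ Φ, (faceCycle l r f).support.card
      = ∑ e, (Φ.filter fun f => e ∈ (faceCycle l r f).support).card := by
        refine .trans ?_ (Finset.sum_card_bipartiteAbove_eq_sum_card_bipartiteBelow
          fun f e => e ∈ (faceCycle l r f).support)
        simp only [Finset.bipartiteAbove, Finset.filter_univ_mem]
    _ ≤ 2 * Fintype.card E := by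
        simpa [mul_comm] using Finset.sum_le_card_nsmul Finset.univ _ 2 fun e _ => sides e

lemma IsPlanarDual.cycle_mem_span_faceCycle (hdual : IsPlanarDual a b l r) {Φ : Finset F}
    (hΦ : ∀ e, ∀ f ∈ s(l e, r e), f ∈ Φ ∨ faceCycle l r f = 0) {z : E →₀ ZMod 2}
    (hz : boundary a b z = 0) :
    z ∈ Submodule.span (ZMod 2) (faceCycle l r '' (Φ : Set F)) := by
  classical
  obtain ⟨w, hw⟩ := (hdual z).1 hz
  let Ψ : Finset F := Finset.univ.image l ∪ Finset.univ.image r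
  have hzw : z = ∑ f ∈ Ψ, w f • faceCycle l r f := by
    ext e
    have hl : l e ∈ Ψ := by simp [Ψ]
    have hr : r e ∈ Ψ := by simp [Ψ]
    simp [Finsupp.finsetSum_apply, faceCycle_apply, mul_add, Finset.sum_add_distrib, hl, hr,
      ← hw, coboundary]
  rw [hzw]
  refine Submodule.sum_mem _ fun f hf => Submodule.smul_mem _ _ ?_
  have hmem : f ∈ Φ ∨ faceCycle l r f = 0 := by
    simp only [Ψ, Finset.mem_union, Finset.mem_image, Finset.mem_univ, true_and] at hf
    rcases hf with ⟨e, rfl⟩ | ⟨e, rfl⟩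
    · exact hΦ e _ (Sym2.mem_mk_left _ _)
    · exact hΦ e _ (Sym2.mem_mk_right _ _)
  rcases hmem with hf | hf
  · exact Submodule.subset_span ⟨f, hf, rfl⟩
  · simp [hf]

/- The nonzero face boundaries span the cycle space, have at least three edges each, and together
use every edge at most twice; with Euler's formula for the rank of the cycle space this gives the
bound. -/
theorem IsPlanarDual.card_edges_add_three_le [Fintype V] [Nonempty V]
    (hdual : IsPlanarDual a b l r) (hab : ∀ e, a e ≠ b e)
    (hinj : Function.Injective fun e => s(a e, b e)) :
    Fintype.card E + 3 ≤ 3 * Fintype.card V := by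
  classical
  let Φ : Finset F := (Finset.univ.image l ∪ Finset.univ.image r).filter (faceCycle l r · ≠ 0)
  have hΦ (e : E) (f : F) (hf : f ∈ s(l e, r e)) : f ∈ Φ ∨ faceCycle l r f = 0 := by
    rcases Sym2.mem_iff.1 hf with rfl | rfl <;> simp [Φ, em']
  have rank_le : Module.finrank (ZMod 2) (LinearMap.ker (boundary a b)) ≤ Φ.card := by
    refine (Submodule.finrank_mono fun z hz =>
      hdual.cycle_mem_span_faceCycle hΦ (LinearMap.mem_ker.1 hz)).trans ?_
    rw [← Finset.coe_image]
    exact (finrank_span_finset_le_card _).trans Finset.card_image_le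
  have three_le (f : F) (hf : f ∈ Φ) : 3 ≤ (faceCycle l r f).support.card :=
    three_le_card_support_of_boundary_eq_zero hab hinj ((hdual _).2 ⟨_, rfl⟩)
      (Finset.mem_filter.1 hf).2
  have := card_edges_add_one_le_finrank_cycles a b
  have := sum_card_support_faceCycle_le (l := l) (r := r) Φ
  have := Finset.card_nsmul_le_sum Φ _ 3 three_le
  rw [smul_eq_mul] at this
  omega

end Count

/-- The edges of the integer grid: `(p, true)` goes from `p` to the right, `(p, false)` upwards. -/
abbrev GridEdge : Type := (ℤ × ℤ) × Bool

namespace GridEdge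

/-- The lower left end of a grid edge. -/
def src (x : GridEdge) : ℤ × ℤ := x.1

/-- The upper right end of a grid edge. -/
def tgt (x : GridEdge) : ℤ × ℤ := if x.2 then x.1 + (1, 0) else x.1 + (0, 1)

/-- The unit square above or to the right of a grid edge, named by its lower left corner. -/
def upper (x : GridEdge) : ℤ × ℤ := x.1

/-- The unit square below or to the left of a grid edge, named by its lower left corner. -/
def lower (x : GridEdge) : ℤ × ℤ := if x.2 then x.1 - (0, 1) else x.1 - (1, 0)

lemma boundary_apply (z : GridEdge →₀ ZMod 2) (p : ℤ × ℤ) :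
    boundary src tgt z p =
      z (p, true) + z (p - (1, 0), true) + z (p, false) + z (p - (0, 1), false) := by
  classical
  induction z using Finsupp.induction_linear with
  | zero => simp
  | add z z' hz hz' => rw [map_add, Finsupp.add_apply, hz, hz']; simp only [Finsupp.add_apply]; ring
  | single x t =>
    obtain ⟨q, _ | _⟩ := x <;>
      simp [boundary_single, Finsupp.single_apply, src, tgt, eq_sub_iff_add_eq]

lemma boundary_eq_zero_of_coboundary_eq {w : ℤ × ℤ → ZMod 2} {z : GridEdge →₀ ZMod 2}
    (h : coboundary upper lower w = z) : boundary src tgt z = 0 := by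
  ext ⟨i, j⟩
  rw [boundary_apply, ← h]
  simp only [coboundary, upper, lower, Prod.mk_sub_mk, sub_zero, if_true, Bool.false_eq_true,
    if_false, Finsupp.zero_apply]
  have cancel (s : ℤ × ℤ) : w s + w s = 0 := CharTwo.add_self_eq_zero _
  linear_combination cancel (i, j) + cancel (i - 1, j) + cancel (i, j - 1) + cancel (i - 1, j - 1)

/-- The mod-2 number of crossings of the chain `z` with the horizontal ray that starts in the
square `s` and runs to the left, starting the count at abscissa `N`. -/
noncomputable def crossings (z : GridEdge →₀ ZMod 2) (N : ℤ) (s : ℤ × ℤ) : ZMod 2 :=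
  ∑ i ∈ Finset.Ico N (s.1 + 1), z ((i, s.2), false)

section Crossings

variable {z : GridEdge →₀ ZMod 2} {N : ℤ}

lemma crossings_of_lt {i : ℤ} (h : i < N) (j : ℤ) : crossings z N (i, j) = 0 := by
  rw [crossings, Finset.Ico_eq_empty (by simpa using h), Finset.sum_empty]

lemma crossings_eq_add (hN : ∀ x, z x ≠ 0 → N ≤ x.1.1) (i j : ℤ) :
    crossings z N (i, j) = crossings z N (i - 1, j) + z ((i, j), false) := by
  rcases lt_or_ge i N with h | h
  · have : z ((i, j), false) = 0 := by
      by_contra h0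
      exact h.not_ge (hN _ h0)
    rw [crossings_of_lt h, crossings_of_lt (by omega), this, add_zero]
  · simp only [crossings, sub_add_cancel]
    rw [← Finset.insert_Ico_right_eq_Ico_add_one h, Finset.sum_insert (by simp), add_comm]

lemma crossings_add_crossings_pred (hN : ∀ x, z x ≠ 0 → N ≤ x.1.1)
    (hz : boundary src tgt z = 0) (i j : ℤ) :
    crossings z N (i, j) + crossings z N (i, j - 1) = z ((i, j), true) := by
  rcases lt_or_ge i N with h | h
  · have : z ((i, j), true) = 0 := by
      by_contra h0
      exact h.not_ge (hN _ h0)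
    rw [crossings_of_lt h, crossings_of_lt h, this, add_zero]
  · obtain ⟨n, rfl⟩ : ∃ n : ℕ, i = N - 1 + n := ⟨(i - N + 1).toNat, by omega⟩
    clear h
    induction n with
    | zero =>
      have : z ((N - 1, j), true) = 0 := by
        by_contra h0
        simpa using hN _ h0
      simp [crossings_of_lt, this]
    | succ n ih =>
      have hpred : N - 1 + ((n + 1 : ℕ) : ℤ) - 1 = N - 1 + n := by push_cast; ring
      have hcycle := boundary_apply z (N - 1 + (n + 1 : ℕ), j)
      simp only [hz, Finsupp.zero_apply, Prod.mk_sub_mk, sub_zero, hpred] at hcycle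
      rw [crossings_eq_add hN, crossings_eq_add hN _ (j - 1), hpred]
      linear_combination ih - hcycle -
        CharTwo.add_self_eq_zero (z ((N - 1 + (n + 1 : ℕ), j), true))

end Crossings

lemma exists_coboundary_eq_of_boundary_eq_zero {z : GridEdge →₀ ZMod 2}
    (hz : boundary src tgt z = 0) : ∃ w, coboundary upper lower w = z := by
  obtain ⟨N, hN⟩ := (z.support.image fun x => x.1.1).bddBelow
  replace hN (x) (hx : z x ≠ 0) : N ≤ x.1.1 :=
    hN (Finset.mem_coe.2 (Finset.mem_image_of_mem _ (Finsupp.mem_support_iff.2 hx)))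
  refine ⟨crossings z N, ?_⟩
  ext ⟨⟨i, j⟩, _ | _⟩
  · simp only [coboundary, upper, lower, Bool.false_eq_true, if_false, Prod.mk_sub_mk, sub_zero]
    rw [crossings_eq_add hN i j]
    linear_combination CharTwo.add_self_eq_zero (crossings z N (i - 1, j))
  · simpa [coboundary, upper, lower] using crossings_add_crossings_pred hN hz i j

theorem isPlanarDual : IsPlanarDual src tgt upper lower := fun _ =>
  ⟨exists_coboundary_eq_of_boundary_eq_zero, fun ⟨_, h⟩ => boundary_eq_zero_of_coboundary_eq h⟩

end GridEdge

/-- The square grid on `ℤ × ℤ`. -/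
noncomputable abbrev gridGraph : SimpleGraph (ℤ × ℤ) := SimpleGraph.hasse ℤ □ SimpleGraph.hasse ℤ

lemma gridGraph_adj {p q : ℤ × ℤ} :
    gridGraph.Adj p q ↔ (p.1 + 1 = q.1 ∨ q.1 + 1 = p.1) ∧ p.2 = q.2 ∨
      (p.2 + 1 = q.2 ∨ q.2 + 1 = p.2) ∧ p.1 = q.1 := by
  simp only [SimpleGraph.boxProd_adj, SimpleGraph.hasse_adj, ← Order.succ_eq_iff_covBy,
    Order.succ_eq_add_one]

lemma gridGraph_adj_iff_exists_gridEdge {p q : ℤ × ℤ} :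
    gridGraph.Adj p q ↔ ∃ x : GridEdge, s(x.src, x.tgt) = s(p, q) := by
  obtain ⟨p₁, p₂⟩ := p
  obtain ⟨q₁, q₂⟩ := q
  simp only [gridGraph_adj, GridEdge.src, GridEdge.tgt, Prod.exists, Bool.exists_bool, Sym2.eq_iff]
  constructor
  · rintro (⟨rfl | rfl, rfl⟩ | ⟨rfl | rfl, rfl⟩)
    · exact ⟨p₁, p₂, by simp⟩
    · exact ⟨q₁, p₂, by simp⟩
    · exact ⟨p₁, p₂, by simp⟩
    · exact ⟨p₁, q₂, by simp⟩
  · rintro ⟨i, j, h⟩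
    simp only [Prod.mk.injEq, Prod.mk_add_mk, if_true, if_false, Bool.false_eq_true] at h
    omega

/-- A grid minor structure on the multigraph whose edge `e` joins `a e` to `b e`: disjoint connected
branch sets of grid points, one for each vertex, and for each edge a grid edge between the
branch sets of its ends. -/
structure GridMinor {E V : Type*} (a b : E → V) where
  branch : V → Finset (ℤ × ℤ)
  disjoint : Pairwise (Function.onFun Disjoint branch)
  connected : ∀ v, (gridGraph.induce (branch v : Set (ℤ × ℤ))).Connected
  edge : E → GridEdge
  src_mem : ∀ e, (edge e).src ∈ branch (a e)
  tgt_mem : ∀ e, (edge e).tgt ∈ branch (b e)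

lemma single_add_single_self {V : Type*} (v : V) (t : ZMod 2) :
    Finsupp.single v t + Finsupp.single v t = 0 := by
  rw [← Finsupp.single_add, CharTwo.add_self_eq_zero, Finsupp.single_zero]

lemma exists_chain_of_reachable {B : Set (ℤ × ℤ)} {p q : B}
    (h : (gridGraph.induce B).Reachable p q) :
    ∃ z : GridEdge →₀ ZMod 2, (∀ x, z x ≠ 0 → x.src ∈ B ∧ x.tgt ∈ B) ∧
      boundary GridEdge.src GridEdge.tgt z = Finsupp.single p.1 1 + Finsupp.single q.1 1 := by
  classical
  obtain ⟨walk⟩ := h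
  induction walk with
  | nil => exact ⟨0, by simp, by rw [map_zero, single_add_single_self]⟩
  | @cons p r q hadj _ ih =>
    obtain ⟨z, hz, hbd⟩ := ih
    obtain ⟨x, hx⟩ := gridGraph_adj_iff_exists_gridEdge.1 (SimpleGraph.comap_adj.1 hadj)
    have hends : x.src ∈ B ∧ x.tgt ∈ B := by
      rcases Sym2.eq_iff.1 hx with ⟨h₁, h₂⟩ | ⟨h₁, h₂⟩ <;> rw [h₁, h₂]
      exacts [⟨p.2, r.2⟩, ⟨r.2, p.2⟩]
    refine ⟨Finsupp.single x 1 + z, fun y hy => ?_, ?_⟩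
    · rcases eq_or_ne x y with rfl | hxy
      · exact hends
      · exact hz y (by simpa [Finsupp.single_apply, hxy] using hy)
    · have hsum : Finsupp.single x.src (1 : ZMod 2) + Finsupp.single x.tgt 1 =
          Finsupp.single p.1 1 + Finsupp.single r.1 1 := by
        rcases Sym2.eq_iff.1 hx with ⟨h₁, h₂⟩ | ⟨h₁, h₂⟩ <;> rw [h₁, h₂]
        · rfl
        · exact add_comm _ _
      rw [map_add, boundary_single, hbd, hsum, add_assoc,
        ← add_assoc (Finsupp.single r.1 1) (Finsupp.single r.1 1), single_add_single_self,
        zero_add]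

namespace GridMinor

variable {E V : Type*} {a b : E → V} (M : GridMinor a b)

lemma eq_of_mem_branch {u v : V} {p : ℤ × ℤ} (hu : p ∈ M.branch u) (hv : p ∈ M.branch v) :
    u = v :=
  M.disjoint.eq (Finset.not_disjoint_iff.2 ⟨p, hu, hv⟩)

/-- The grid edges of the subgraph of the grid that realises the minor. -/
def support : Set GridEdge :=
  {x | ∃ v, x.src ∈ M.branch v ∧ x.tgt ∈ M.branch v} ∪ Set.range M.edge

lemma finite_support [Finite V] [Finite E] : M.support.Finite := by
  refine Set.Finite.union ?_ (Set.finite_range _)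
  refine Set.Finite.subset ((Set.finite_iUnion fun v => (M.branch v).finite_toSet).prod
    (Set.finite_univ (α := Bool))) ?_
  rintro x ⟨v, hv, -⟩
  exact ⟨Set.mem_iUnion.2 ⟨v, hv⟩, Set.mem_univ _⟩

/-- Two squares lie in the same face when they can be joined without crossing the support. -/
def Face : Type :=
  Quot fun s t => ∃ x ∉ M.support, s = GridEdge.upper x ∧ t = GridEdge.lower x

/-- The face containing a square. -/
def face (s : ℤ × ℤ) : M.Face := Quot.mk _ s

lemma face_upper_eq_face_lower {x : GridEdge} (hx : x ∉ M.support) :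
    M.face x.upper = M.face x.lower :=
  Quot.sound ⟨x, hx, rfl, rfl⟩

lemma exists_comp_face_eq {w : ℤ × ℤ → ZMod 2}
    (hw : ∀ x ∉ M.support, coboundary GridEdge.upper GridEdge.lower w x = 0) :
    ∃ w' : M.Face → ZMod 2, w' ∘ M.face = w := by
  refine ⟨Quot.lift w ?_, rfl⟩
  rintro _ _ ⟨x, hx, rfl, rfl⟩
  exact CharTwo.add_eq_zero.1 (hw x hx)

variable {M}

lemma edge_injective (hinj : Function.Injective fun e => s(a e, b e)) :
    Function.Injective M.edge := fun e e' h =>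
  hinj (by
    dsimp only
    rw [M.eq_of_mem_branch (M.src_mem e) (h ▸ M.src_mem e'),
      M.eq_of_mem_branch (M.tgt_mem e) (h ▸ M.tgt_mem e')])

lemma edge_not_mem_branch (hab : ∀ e, a e ≠ b e) (e : E) (v : V) :
    ¬((M.edge e).src ∈ M.branch v ∧ (M.edge e).tgt ∈ M.branch v) := fun h =>
  hab e ((M.eq_of_mem_branch (M.src_mem e) h.1).trans (M.eq_of_mem_branch (M.tgt_mem e) h.2).symm)

variable (M)

/-- A grid point of the branch set of `v`, to which all edges at `v` are joined. -/
noncomputable def center (v : V) : ℤ × ℤ := (M.connected v).nonempty.some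

lemma exists_branch_chain {v : V} {p q : ℤ × ℤ} (hp : p ∈ M.branch v) (hq : q ∈ M.branch v) :
    ∃ z : GridEdge →₀ ZMod 2, (∀ x, z x ≠ 0 → x.src ∈ M.branch v ∧ x.tgt ∈ M.branch v) ∧
      boundary GridEdge.src GridEdge.tgt z = Finsupp.single p 1 + Finsupp.single q 1 :=
  exists_chain_of_reachable ((M.connected v).preconnected ⟨p, hp⟩ ⟨q, hq⟩)

variable {M} (hab : ∀ e, a e ≠ b e) (hinj : Function.Injective fun e => s(a e, b e))
include hab

lemma chain_edge_eq_zero {v : V} {z : GridEdge →₀ ZMod 2}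
    (hz : ∀ x, z x ≠ 0 → x.src ∈ M.branch v ∧ x.tgt ∈ M.branch v) (e : E) : z (M.edge e) = 0 := by
  by_contra h
  exact edge_not_mem_branch hab e v (hz _ h)

include hinj

lemma exists_lift_single [DecidableEq E] (e : E) :
    ∃ κ : GridEdge →₀ ZMod 2, (∀ x ∉ M.support, κ x = 0) ∧
      (∀ e', κ (M.edge e') = if e = e' then 1 else 0) ∧
      boundary GridEdge.src GridEdge.tgt κ =
        Finsupp.single (M.center (a e)) 1 + Finsupp.single (M.center (b e)) 1 := by
  obtain ⟨z₁, hz₁, hbd₁⟩ :=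
    M.exists_branch_chain (M.connected (a e)).nonempty.some.2 (M.src_mem e)
  obtain ⟨z₂, hz₂, hbd₂⟩ :=
    M.exists_branch_chain (M.tgt_mem e) (M.connected (b e)).nonempty.some.2
  refine ⟨z₁ + Finsupp.single (M.edge e) 1 + z₂, fun x hx => ?_, fun e' => ?_, ?_⟩
  · have h₁ : z₁ x = 0 := by
      by_contra h
      exact hx (Or.inl ⟨_, hz₁ x h⟩)
    have h₂ : z₂ x = 0 := by
      by_contra h
      exact hx (Or.inl ⟨_, hz₂ x h⟩)
    have hne : M.edge e ≠ x := fun h => hx (Or.inr ⟨e, h⟩)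
    simp [h₁, h₂, hne]
  · simp [chain_edge_eq_zero hab hz₁, chain_edge_eq_zero hab hz₂, Finsupp.single_apply,
      (edge_injective hinj).eq_iff]
  · have hsrc := single_add_single_self (M.edge e).src 1
    have htgt := single_add_single_self (M.edge e).tgt 1
    rw [map_add, map_add, hbd₁, hbd₂, boundary_single, center, center]
    linear_combination (norm := module) hsrc + htgt

lemma exists_lift_of_boundary_eq_zero {z : E →₀ ZMod 2} (hz : boundary a b z = 0) :
    ∃ ζ : GridEdge →₀ ZMod 2, boundary GridEdge.src GridEdge.tgt ζ = 0 ∧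
      (∀ x ∉ M.support, ζ x = 0) ∧ ∀ e, ζ (M.edge e) = z e := by
  classical
  choose κ hκ hκedge hκbd using exists_lift_single (M := M) hab hinj
  have hcomm : boundary GridEdge.src GridEdge.tgt ∘ₗ Finsupp.linearCombination (ZMod 2) κ =
      Finsupp.lmapDomain (ZMod 2) (ZMod 2) M.center ∘ₗ boundary a b := by
    ext e : 2
    simp [hκbd, boundary_single, Finsupp.mapDomain_add, Finsupp.mapDomain_single]
  refine ⟨Finsupp.linearCombination (ZMod 2) κ z, ?_, fun x hx => ?_, fun e => ?_⟩
  · simpa [hz] using LinearMap.congr_fun hcomm z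
  · simp [Finsupp.linearCombination_apply, Finsupp.sum, hκ _ x hx]
  · simp [Finsupp.linearCombination_apply, Finsupp.sum, hκedge, eq_comm]

lemma boundary_comapDomain_edge_apply {ζ : GridEdge →₀ ZMod 2} (hζ : ∀ x ∉ M.support, ζ x = 0)
    (v : V) : boundary a b (ζ.comapDomain M.edge (edge_injective hinj).injOn) v =
      ∑ p ∈ M.branch v, boundary GridEdge.src GridEdge.tgt ζ p := by
  classical
  let restrict := Finsupp.lapply v ∘ₗ boundary a b ∘ₗ
    Finsupp.lcomapDomain (M := ZMod 2) (R := ZMod 2) M.edge (edge_injective hinj)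
  let total := (∑ p ∈ M.branch v, Finsupp.lapply p) ∘ₗ
    boundary (E := GridEdge) GridEdge.src GridEdge.tgt
  suffices Set.EqOn restrict total (Finsupp.supported (ZMod 2) (ZMod 2) M.support) by
    simpa [restrict, total] using this ((Finsupp.mem_supported' _ _).2 hζ)
  rw [Finsupp.supported_eq_span_single]
  refine LinearMap.eqOn_span ?_
  rintro _ ⟨x, hx | ⟨e, rfl⟩, rfl⟩
  · obtain ⟨u, hsrc, htgt⟩ := hx
    have hsrc' : x.src ∈ M.branch v ↔ u = v := ⟨M.eq_of_mem_branch hsrc, fun h => h ▸ hsrc⟩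
    have htgt' : x.tgt ∈ M.branch v ↔ u = v := ⟨M.eq_of_mem_branch htgt, fun h => h ▸ htgt⟩
    have hcomap : (Finsupp.single x (1 : ZMod 2)).comapDomain M.edge
        (edge_injective hinj).injOn = 0 := by
      ext e
      have : x ≠ M.edge e := by
        rintro rfl
        exact edge_not_mem_branch hab e u ⟨hsrc, htgt⟩
      simp [this]
    simp [restrict, total, hcomap, boundary_single, Finsupp.single_apply, Finset.sum_add_distrib,
      hsrc', htgt', CharTwo.add_self_eq_zero]
  · have hsrc : (M.edge e).src ∈ M.branch v ↔ a e = v :=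
      ⟨M.eq_of_mem_branch (M.src_mem e), fun h => h ▸ M.src_mem e⟩
    have htgt : (M.edge e).tgt ∈ M.branch v ↔ b e = v :=
      ⟨M.eq_of_mem_branch (M.tgt_mem e), fun h => h ▸ M.tgt_mem e⟩
    simp [restrict, total, boundary_single, Finsupp.single_apply, Finset.sum_add_distrib,
      hsrc, htgt]

theorem isPlanarDual [Finite V] [Finite E] :
    IsPlanarDual a b (M.face ∘ GridEdge.upper ∘ M.edge) (M.face ∘ GridEdge.lower ∘ M.edge) := by
  classical
  intro z
  constructor
  · intro hz
    obtain ⟨ζ, hζbd, hζ, hζz⟩ := exists_lift_of_boundary_eq_zero (M := M) hab hinj hz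
    obtain ⟨w, hw⟩ := (GridEdge.isPlanarDual ζ).1 hζbd
    obtain ⟨w', rfl⟩ := M.exists_comp_face_eq fun x hx => (congrFun hw x).trans (hζ x hx)
    exact ⟨w', funext fun e => (congrFun hw (M.edge e)).trans (hζz e)⟩
  · rintro ⟨w, hw⟩
    let ζ : GridEdge →₀ ZMod 2 := Finsupp.onFinset M.finite_support.toFinset
      (coboundary GridEdge.upper GridEdge.lower (w ∘ M.face)) fun x hx => by
        rw [Set.Finite.mem_toFinset]
        by_contra h
        simp [coboundary, M.face_upper_eq_face_lower h, CharTwo.add_self_eq_zero] at hx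
    have hζ (x) (hx : x ∉ M.support) : ζ x = 0 := by
      simp [ζ, coboundary, M.face_upper_eq_face_lower hx, CharTwo.add_self_eq_zero]
    have hζz : ζ.comapDomain M.edge (edge_injective hinj).injOn = z := by
      ext e
      exact congrFun hw e
    ext v
    rw [← hζz, boundary_comapDomain_edge_apply hab hinj hζ,
      (GridEdge.isPlanarDual ζ).2 ⟨w ∘ M.face, rfl⟩]
    simp

theorem card_edges_add_three_le [Fintype V] [Nonempty V] [Fintype E] (M : GridMinor a b) :
    Fintype.card E + 3 ≤ 3 * Fintype.card V := by
  classical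
  exact (isPlanarDual (M := M) hab hinj).card_edges_add_three_le hab hinj

end GridMinor

/-- Every nonempty finite set of vertices of `G` contains a vertex with at most `k` neighbours in
the set. -/
def IsDegenerate {V : Type*} (G : SimpleGraph V) (k : ℕ) : Prop :=
  ∀ S : Finset V, S.Nonempty → ∃ v ∈ S, ((S : Set V) ∩ G.neighborSet v).ncard ≤ k

section GridModel

variable {V : Type*} {G : SimpleGraph V} {B : V → Finset (ℤ × ℤ)}

lemma card_edgeSet_add_three_le_of_gridModel [Fintype V] [Nonempty V]
    (disjoint : Pairwise (Function.onFun Disjoint B))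
    (connected : ∀ v, (gridGraph.induce (B v : Set (ℤ × ℤ))).Connected)
    (exists_adj : ∀ u v, G.Adj u v → ∃ p ∈ B u, ∃ q ∈ B v, gridGraph.Adj p q) :
    Nat.card G.edgeSet + 3 ≤ 3 * Fintype.card V := by
  classical
  have exists_crossing (e : G.edgeSet) : ∃ (u v : V) (x : GridEdge),
      s(u, v) = e ∧ x.src ∈ B u ∧ x.tgt ∈ B v := by
    obtain ⟨e, he⟩ := e
    induction e with
    | _ u v =>
      obtain ⟨p, hp, q, hq, hpq⟩ := exists_adj u v he
      obtain ⟨x, hx⟩ := gridGraph_adj_iff_exists_gridEdge.1 hpq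
      rcases Sym2.eq_iff.1 hx with ⟨rfl, rfl⟩ | ⟨rfl, rfl⟩
      exacts [⟨u, v, x, rfl, hp, hq⟩, ⟨v, u, x, Sym2.eq_swap, hq, hp⟩]
  choose a b edge hab hsrc htgt using exists_crossing
  let M : GridMinor a b := ⟨B, disjoint, connected, edge, hsrc, htgt⟩
  have hne (e) : a e ≠ b e := G.ne_of_adj (by rw [← SimpleGraph.mem_edgeSet, hab]; exact e.2)
  have hinj : Function.Injective fun e => s(a e, b e) := by
    simpa only [hab] using Subtype.val_injective
  rw [Nat.card_eq_fintype_card]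
  exact GridMinor.card_edges_add_three_le hne hinj M

theorem isDegenerate_five_of_gridModel (disjoint : Pairwise (Function.onFun Disjoint B))
    (connected : ∀ v, (gridGraph.induce (B v : Set (ℤ × ℤ))).Connected)
    (exists_adj : ∀ u v, G.Adj u v → ∃ p ∈ B u, ∃ q ∈ B v, gridGraph.Adj p q) :
    IsDegenerate G 5 := by
  classical
  intro S hS
  have : Nonempty S := hS.to_subtype
  let H := G.induce (S : Set V)
  have edge_bound : Nat.card H.edgeSet + 3 ≤ 3 * Fintype.card S :=
    card_edgeSet_add_three_le_of_gridModel (B := fun v : S => B v)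
      (fun u v huv => disjoint (Subtype.coe_injective.ne huv)) (fun v => connected v)
      fun u v => exists_adj u v
  by_contra! hcon
  have six_le_degree (v : S) : 6 ≤ H.degree v := by
    have hdeg : H.degree v = ((S : Set V) ∩ G.neighborSet v).ncard := by
      rw [← SimpleGraph.card_neighborSet_eq_degree, ← Nat.card_eq_fintype_card,
        Nat.card_coe_set_eq, ← Set.ncard_image_of_injective _ Subtype.val_injective]
      congr 1
      ext w
      simp [H, and_comm]
    rw [hdeg]
    exact hcon v v.2
  have handshake : ∑ v : S, H.degree v = 2 * H.edgeFinset.card :=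
    H.sum_degrees_eq_twice_card_edges
  have := Finset.card_nsmul_le_sum Finset.univ (fun v : S => H.degree v) 6 fun v _ =>
    six_le_degree v
  rw [Finset.card_univ, smul_eq_mul] at this
  rw [Nat.card_eq_fintype_card, ← SimpleGraph.edgeFinset_card] at edge_bound
  omega

end GridModel

section LinearForest

variable {V : Type*} (G : SimpleGraph V)

/-- A list in which only consecutive entries may be adjacent in `G`, so that it lists the vertices
of an induced linear forest path by path. -/
def IsLinear : List V → Prop
  | [] => True
  | a :: l => (∀ b ∈ l.tail, ¬G.Adj a b) ∧ IsLinear l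

/-- No vertex of `l` is equal or adjacent to a vertex of `l'`. -/
def Separated (l l' : List V) : Prop := ∀ a ∈ l, ∀ b ∈ l', a ≠ b ∧ ¬G.Adj a b

/-- `y` has a neighbour that precedes it in `L`. -/
def HasEarlier (L : List V) (y : V) : Prop := ∃ x, [x, y].Sublist L ∧ G.Adj x y

/-- An ordering in which every vertex has at most one earlier neighbour; it exhibits the graph
induced on its entries as a forest. -/
def IsForestOrder (L : List V) : Prop :=
  ∀ x y z, [x, y, z].Sublist L → ¬(G.Adj x z ∧ G.Adj y z)

variable {G}

lemma IsLinear.not_adj {l : List V} (hl : IsLinear G l) {i j : ℕ} (hij : i + 1 < j)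
    (hj : j < l.length) : ¬G.Adj (l[i]'(by omega)) l[j] := by
  induction l generalizing i j with
  | nil => simp at hj
  | cons a l ih =>
    obtain ⟨j, rfl⟩ : ∃ k, j = k + 1 := ⟨j - 1, by omega⟩
    cases i with
    | zero =>
      obtain ⟨j, rfl⟩ : ∃ k, j = k + 1 := ⟨j - 1, by omega⟩
      refine hl.1 _ (List.mem_iff_getElem.2 ⟨j, ?_, ?_⟩) <;> simp at hj ⊢
      omega
    | succ i => exact ih hl.2 (by omega) (by simpa using hj)

lemma Separated.symm {l l' : List V} (h : Separated G l l') : Separated G l' l :=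
  fun a ha b hb => ⟨(h b hb a ha).1.symm, fun hab => (h b hb a ha).2 hab.symm⟩

lemma separated_flatten_left {A : List (List V)} {l : List V} :
    Separated G A.flatten l ↔ ∀ l' ∈ A, Separated G l' l := by
  simp only [Separated, List.mem_flatten]
  grind

lemma IsLinear.append {l l' : List V} (hl : IsLinear G l) (hl' : IsLinear G l')
    (h : Separated G l l') : IsLinear G (l ++ l') := by
  induction l with
  | nil => exact hl'
  | cons a l ih =>
    refine ⟨fun b hb => ?_, ih hl.2 fun c hc => h c (List.mem_cons_of_mem a hc)⟩
    cases l with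
    | nil => exact (h a (by simp) b (List.mem_of_mem_tail hb)).2
    | cons c l =>
      rcases List.mem_append.1 hb with hb | hb
      · exact hl.1 b hb
      · exact (h a (by simp) b hb).2

lemma isLinear_flatten {A : List (List V)} (hA : A.Pairwise (Separated G))
    (h : ∀ l ∈ A, IsLinear G l ∧ l.Nodup) : IsLinear G A.flatten ∧ A.flatten.Nodup := by
  induction A with
  | nil => exact ⟨trivial, by simp⟩
  | cons l A ih =>
    rw [List.pairwise_cons] at hA
    obtain ⟨hlin, hnodup⟩ := ih hA.2 fun l' hl' => h l' (List.mem_cons_of_mem l hl')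
    have hsep : Separated G l A.flatten :=
      (separated_flatten_left.2 fun l' hl' => (hA.1 l' hl').symm).symm
    have hl := h l (by simp)
    exact ⟨hl.1.append hlin hsep, List.nodup_append.2
      ⟨hl.2, hnodup, fun a ha b hb => (hsep a ha b hb).1⟩⟩

lemma HasEarlier.cons {L : List V} {y : V} (h : HasEarlier G L y) (x : V) :
    HasEarlier G (x :: L) y :=
  let ⟨z, hz, hadj⟩ := h
  ⟨z, hz.cons x, hadj⟩

lemma hasEarlier_cons_of_adj {L : List V} {x y : V} (hy : y ∈ L) (hadj : G.Adj x y) :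
    HasEarlier G (x :: L) y :=
  ⟨x, (List.singleton_sublist.2 hy).cons_cons x, hadj⟩

lemma IsForestOrder.of_cons {L : List V} {x : V} (h : IsForestOrder G (x :: L)) :
    IsForestOrder G L :=
  fun a b c habc => h a b c (habc.cons x)

lemma IsForestOrder.not_hasEarlier {L : List V} {x y : V} (h : IsForestOrder G (x :: L))
    (hadj : G.Adj x y) : ¬HasEarlier G L y := fun ⟨z, hz, hadj'⟩ =>
  h x z y (hz.cons_cons x) ⟨hadj, hadj'⟩

lemma IsForestOrder.concat {L : List V} {v : V} (hnodup : L.Nodup) (hL : IsForestOrder G L)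
    (hv : ∀ x ∈ L, ∀ y ∈ L, G.Adj x v → G.Adj y v → x = y) : IsForestOrder G (L ++ [v]) := by
  rintro x y z hxyz ⟨hxz, hyz⟩
  obtain ⟨l₁, l₂, heq, h₁, h₂⟩ := List.sublist_append_iff.1 hxyz
  rcases List.sublist_singleton.1 h₂ with rfl | rfl
  · rw [List.append_nil] at heq
    exact hL x y z (heq ▸ h₁) ⟨hxz, hyz⟩
  · obtain ⟨rfl, rfl⟩ : [x, y] = l₁ ∧ z = v := by
      have := List.append_inj' (s₁ := [x, y]) (t₁ := [z]) heq rfl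
      simpa using this
    have hne : x ≠ y := by simpa using h₁.nodup hnodup
    exact hne (hv x (h₁.subset (by simp)) y (h₁.subset (by simp)) hxz hyz)

variable (G) in
/-- A short induced path that may still be extended at its unique vertex without earlier neighbour,
which is the first vertex of the path unless the path has three vertices. -/
structure IsLiveBlock (L l : List V) : Prop where
  linear : IsLinear G l
  nodup : l.Nodup
  length_le : l.length ≤ 3
  eq_of_not_hasEarlier : ∀ y ∈ l, ∀ y' ∈ l, ¬HasEarlier G L y → ¬HasEarlier G L y' → y = y'
  hasEarlier_of_mem_tail : l.length ≤ 2 → ∀ y ∈ l.tail, HasEarlier G L y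

lemma isLiveBlock_join {L : List V} {x a b : V} (hab : Separated G [a] [b]) (ha : G.Adj x a)
    (hb : G.Adj x b) (haL : a ∈ L) (hbL : b ∈ L) : IsLiveBlock G (x :: L) [a, x, b] := by
  have early_a := hasEarlier_cons_of_adj haL ha
  have early_b := hasEarlier_cons_of_adj hbL hb
  have hsep := hab a (by simp) b (by simp)
  exact ⟨by simpa [IsLinear] using hsep.2, by simp [ha.ne', hb.ne, hsep.1], by simp, by grind,
    by simp⟩

lemma IsLiveBlock.cons_order {L l : List V} (hl : IsLiveBlock G L l) (x : V) :
    IsLiveBlock G (x :: L) l where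
  linear := hl.linear
  nodup := hl.nodup
  length_le := hl.length_le
  eq_of_not_hasEarlier y hy y' hy' h h' :=
    hl.eq_of_not_hasEarlier y hy y' hy' (fun h₀ => h (h₀.cons x)) fun h₀ => h' (h₀.cons x)
  hasEarlier_of_mem_tail hlen y hy := (hl.hasEarlier_of_mem_tail hlen y hy).cons x

section Block

variable {L : List V} {x : V} (horder : IsForestOrder G (x :: L))
include horder

lemma IsLiveBlock.hasEarlier_cons {l : List V} (hl : IsLiveBlock G L l) (hadj : ∃ y ∈ l, G.Adj x y)
    (hsub : l ⊆ L) : ∀ y ∈ l, HasEarlier G (x :: L) y := by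
  intro y hy
  by_cases hearly : HasEarlier G L y
  · exact hearly.cons x
  · obtain ⟨z, hz, hxz⟩ := hadj
    obtain rfl := hl.eq_of_not_hasEarlier z hz y hy (horder.not_hasEarlier hxz) hearly
    exact hasEarlier_cons_of_adj (hsub hz) hxz

lemma IsLiveBlock.cons {l : List V} (hl : IsLiveBlock G L l) (hadj : ∃ y ∈ l, G.Adj x y)
    (hsub : l ⊆ L) (hx : x ∉ L) (hlen : l.length ≤ 2) : IsLiveBlock G (x :: L) (x :: l) where
  linear := ⟨fun y hy hxy => horder.not_hasEarlier hxy (hl.hasEarlier_of_mem_tail hlen y hy),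
    hl.linear⟩
  nodup := List.nodup_cons.2 ⟨fun h => hx (hsub h), hl.nodup⟩
  length_le := Nat.succ_le_succ hlen
  eq_of_not_hasEarlier := by
    have := hl.hasEarlier_cons horder hadj hsub
    grind
  hasEarlier_of_mem_tail _ := hl.hasEarlier_cons horder hadj hsub

lemma exists_isLiveBlock_perm {hit : List (List V)} (hx : x ∉ L) (hsub : ∀ l ∈ hit, l ⊆ L)
    (hsep : hit.Pairwise (Separated G)) (hlive : ∀ l ∈ hit, IsLiveBlock G L l)
    (hadj : ∀ l ∈ hit, ∃ y ∈ l, G.Adj x y) (hlen : hit.flatten.length ≤ 2) :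
    ∃ l, l.Perm (x :: hit.flatten) ∧ IsLiveBlock G (x :: L) l := by
  rcases hit with _ | ⟨l, _ | ⟨l', rest⟩⟩
  · exact ⟨[x], .refl _, by simp [IsLinear], by simp, by simp, by simp, by simp⟩
  · refine ⟨x :: l, by simp, ?_⟩
    exact (hlive l (by simp)).cons horder (hadj l (by simp)) (hsub l (by simp)) hx
      (by simpa using hlen)
  · obtain ⟨a, ha, hxa⟩ := hadj l (by simp)
    obtain ⟨b, hb, hxb⟩ := hadj l' (by simp)
    have pos := List.length_pos_of_mem ha
    have pos' := List.length_pos_of_mem hb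
    simp only [List.flatten_cons, List.length_append] at hlen
    obtain ⟨a', rfl⟩ := List.length_eq_one_iff.1 (show l.length = 1 by omega)
    obtain ⟨b', rfl⟩ := List.length_eq_one_iff.1 (show l'.length = 1 by omega)
    obtain rfl := List.mem_singleton.1 ha
    obtain rfl := List.mem_singleton.1 hb
    have rest_nil : rest.flatten = [] := List.length_eq_zero_iff.1 (by omega)
    refine ⟨[a, x, b], by simpa [rest_nil] using List.Perm.swap x a [b], ?_⟩
    exact isLiveBlock_join (List.rel_of_pairwise_cons hsep (by simp)) hxa hxb
      (hsub [a] (by simp) ha) (hsub [b] (by simp) hb)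

end Block

variable (G) in
/-- A partial linear forest chosen among the vertices of `L`: a list `retired` without
extendable vertices and a list `live` of extendable paths, all separated from each other. Each
rejected vertex of `L` is paid for by three retired ones. -/
structure IsForestState (L retired : List V) (live : List (List V)) : Prop where
  subset : ∀ l ∈ retired :: live, l ⊆ L
  separated : (retired :: live).Pairwise (Separated G)
  linear : IsLinear G retired
  nodup : retired.Nodup
  hasEarlier : ∀ y ∈ retired, HasEarlier G L y
  isLiveBlock : ∀ l ∈ live, IsLiveBlock G L l
  length_le : 3 * L.length ≤ 3 * live.flatten.length + 4 * retired.length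

namespace IsForestState

variable {L retired : List V} {live hit miss : List (List V)} {x : V}

lemma perm {live' : List (List V)} (h : IsForestState G L retired live) (hperm : live.Perm live') :
    IsForestState G L retired live' where
  subset l hl := h.subset l ((hperm.cons retired).mem_iff.2 hl)
  separated := (List.Perm.pairwise_iff Separated.symm (hperm.cons retired)).1 h.separated
  linear := h.linear
  nodup := h.nodup
  hasEarlier := h.hasEarlier
  isLiveBlock l hl := h.isLiveBlock l (hperm.mem_iff.2 hl)
  length_le := by simpa [hperm.flatten.length_eq] using h.length_le

section Step

variable (h : IsForestState G L retired (hit ++ miss))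
  (hhit : ∀ l ∈ hit, ∃ y ∈ l, G.Adj x y) (hmiss : ∀ l ∈ miss, ∀ y ∈ l, ¬G.Adj x y)
include h

lemma separated_hit : (retired :: hit).Pairwise (Separated G) :=
  h.separated.sublist ((List.sublist_append_left _ _).cons_cons _)

lemma separated_miss : (retired :: miss).Pairwise (Separated G) :=
  h.separated.sublist ((List.sublist_append_right _ _).cons_cons _)

lemma separated_hit_miss : ∀ l ∈ miss, Separated G hit.flatten l := fun l hl =>
  separated_flatten_left.2 fun _ hl' =>
    (List.pairwise_append.1 (List.pairwise_cons.1 h.separated).2).2.2 _ hl' l hl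

lemma flatten_hit_subset : hit.flatten ⊆ L := fun y hy =>
  let ⟨l, hl, hyl⟩ := List.mem_flatten.1 hy
  h.subset l (by simp [hl]) hyl

variable (horder : IsForestOrder G (x :: L))
include horder

include hhit in
lemma retire (hlen : 3 ≤ hit.flatten.length) :
    IsForestState G (x :: L) (hit.flatten ++ retired) miss := by
  have hlive (l) (hl : l ∈ hit) := h.isLiveBlock l (by simp [hl])
  have hsep_retired : Separated G hit.flatten retired := separated_flatten_left.2
    fun l hl => ((List.pairwise_cons.1 h.separated_hit).1 l hl).symm
  obtain ⟨hlin, hnodup⟩ := isLinear_flatten (List.pairwise_cons.1 h.separated_hit).2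
    fun l hl => ⟨(hlive l hl).linear, (hlive l hl).nodup⟩
  refine ⟨?_, List.pairwise_cons.2 ⟨fun l hl => ?_, (List.pairwise_cons.1 h.separated_miss).2⟩,
    hlin.append h.linear hsep_retired, List.nodup_append.2
      ⟨hnodup, h.nodup, fun a ha b hb => (hsep_retired a ha b hb).1⟩,
    fun y hy => ?_, fun l hl => (h.isLiveBlock l (by simp [hl])).cons_order x, ?_⟩
  · refine List.forall_mem_cons.2 ⟨List.append_subset.2 ⟨?_, ?_⟩, fun l hl => ?_⟩
    · exact List.subset_cons_of_subset x h.flatten_hit_subset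
    · exact List.subset_cons_of_subset x (h.subset retired (by simp))
    · exact List.subset_cons_of_subset x (h.subset l (by simp [hl]))
  · have := h.separated_hit_miss l hl
    have := (List.pairwise_cons.1 h.separated_miss).1 l hl
    grind [Separated]
  · rcases List.mem_append.1 hy with hy | hy
    · obtain ⟨l, hl, hyl⟩ := List.mem_flatten.1 hy
      exact (hlive l hl).hasEarlier_cons horder (hhit l hl) (h.subset l (by simp [hl])) y hyl
    · exact (h.hasEarlier y hy).cons x
  · have := h.length_le
    simp only [List.flatten_append, List.length_append, List.length_cons] at this ⊢
    omega

include hmiss in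
lemma extend {l : List V} (hx : x ∉ L) (hl : IsLiveBlock G (x :: L) l)
    (hperm : l.Perm (x :: hit.flatten)) : IsForestState G (x :: L) retired (l :: miss) := by
  have mem_l {y : V} : y ∈ l ↔ y = x ∨ y ∈ hit.flatten := by rw [hperm.mem_iff, List.mem_cons]
  have separated_l {l' : List V} (hsub : l' ⊆ L) (hxl' : ∀ y ∈ l', ¬G.Adj x y)
      (hhit' : Separated G hit.flatten l') : Separated G l l' := fun y hy y' hy' => by
    rcases mem_l.1 hy with rfl | hy
    · exact ⟨fun heq => hx (heq ▸ hsub hy'), hxl' y' hy'⟩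
    · exact hhit' y hy y' hy'
  have hsep := List.pairwise_cons.1 h.separated_miss
  have retired_l : Separated G retired l := by
    refine (separated_l (h.subset retired (by simp)) (fun y hy hxy => ?_) ?_).symm
    · exact horder.not_hasEarlier hxy (h.hasEarlier y hy)
    · exact separated_flatten_left.2 fun l hl =>
        ((List.pairwise_cons.1 h.separated_hit).1 l hl).symm
  refine ⟨?_, ?_, h.linear, h.nodup, fun y hy => (h.hasEarlier y hy).cons x, ?_, ?_⟩
  · refine List.forall_mem_cons.2 ⟨?_, List.forall_mem_cons.2 ⟨fun y hy => ?_, fun l' hl' => ?_⟩⟩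
    · exact List.subset_cons_of_subset x (h.subset retired (by simp))
    · exact List.cons_subset_cons x h.flatten_hit_subset (hperm.subset hy)
    · exact List.subset_cons_of_subset x (h.subset l' (by simp [hl']))
  · refine List.pairwise_cons.2 ⟨?_, List.pairwise_cons.2 ⟨fun l' hl' => ?_, hsep.2⟩⟩
    · exact List.forall_mem_cons.2 ⟨retired_l, hsep.1⟩
    · exact separated_l (h.subset l' (by simp [hl'])) (hmiss l' hl') (h.separated_hit_miss l' hl')
  · exact List.forall_mem_cons.2
      ⟨hl, fun l' hl' => (h.isLiveBlock l' (by simp [hl'])).cons_order x⟩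
  · have := h.length_le
    simp only [List.flatten_append, List.flatten_cons, List.length_append, List.length_cons,
      hperm.length_eq] at this ⊢
    omega

end Step

lemma exists_cons (h : IsForestState G L retired live) (horder : IsForestOrder G (x :: L))
    (hx : x ∉ L) : ∃ retired' live', IsForestState G (x :: L) retired' live' := by
  classical
  let hits (l : List V) : Bool := decide (∃ y ∈ l, G.Adj x y)
  replace h := h.perm (List.filter_append_perm hits live).symm
  have hhit : ∀ l ∈ live.filter hits, ∃ y ∈ l, G.Adj x y := fun l hl => by
    simpa [hits] using List.of_mem_filter hl
  have hmiss : ∀ l ∈ live.filter (!hits ·), ∀ y ∈ l, ¬G.Adj x y := fun l hl => by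
    simpa [hits] using List.of_mem_filter hl
  rcases le_or_gt 3 (live.filter hits).flatten.length with hlen | hlen
  · exact ⟨_, _, h.retire hhit horder hlen⟩
  · obtain ⟨l, hperm, hl⟩ := exists_isLiveBlock_perm horder hx
      (fun l hl => h.subset l (by simp [List.mem_filter.1 hl]))
      (List.pairwise_cons.1 h.separated_hit).2
      (fun l hl => h.isLiveBlock l (by simp [List.mem_filter.1 hl])) hhit (by omega)
    exact ⟨_, _, h.extend hmiss horder hx hl hperm⟩

end IsForestState

lemma IsForestOrder.exists_isForestState {L : List V} (hL : IsForestOrder G L) (hnodup : L.Nodup) :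
    ∃ retired live, IsForestState G L retired live := by
  induction L with
  | nil => exact ⟨[], [], by simp, by simp, trivial, by simp, by simp, by simp, by simp⟩
  | cons x L ih =>
    rw [List.nodup_cons] at hnodup
    obtain ⟨retired, live, h⟩ := ih hL.of_cons hnodup.2
    exact h.exists_cons hL hnodup.1

theorem IsForestOrder.exists_isLinear {L : List V} (hL : IsForestOrder G L) (hnodup : L.Nodup) :
    ∃ l : List V, l.Nodup ∧ IsLinear G l ∧ 3 * L.length ≤ 4 * l.length := by
  obtain ⟨retired, live, h⟩ := hL.exists_isForestState hnodup
  obtain ⟨hlin, hl⟩ := isLinear_flatten h.separated (List.forall_mem_cons.2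
    ⟨⟨h.linear, h.nodup⟩, fun l hl => ⟨(h.isLiveBlock l hl).linear, (h.isLiveBlock l hl).nodup⟩⟩)
  refine ⟨_, hl, hlin, ?_⟩
  have := h.length_le
  rw [List.flatten_cons, List.length_append]
  omega

/-- The lists `L c` order the colour classes of `f` on `S` as forests. -/
structure IsForestColouring (G : SimpleGraph V) {C : Type*} (S : Finset V) (f : V → C)
    (L : C → List V) : Prop where
  nodup : ∀ c, (L c).Nodup
  mem_iff : ∀ c v, v ∈ L c ↔ v ∈ S ∧ f v = c
  isForestOrder : ∀ c, IsForestOrder G (L c)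

/- A vertex with fewer than `2 * |C|` neighbours among the others has at most one of them in some
colour class, and can be added at the end of that class. -/
lemma exists_isForestColouring {k : ℕ} {C : Type*} [Fintype C] (hC : k < 2 * Fintype.card C)
    (hG : IsDegenerate G k) (S : Finset V) :
    ∃ (f : V → C) (L : C → List V), IsForestColouring G S f L := by
  classical
  have : Nonempty C := Fintype.card_pos_iff.1 (by omega)
  induction S using Finset.strongInduction with
  | H S ih =>
    obtain rfl | hS := S.eq_empty_or_nonempty
    · exact ⟨fun _ => Classical.arbitrary C, fun _ => [], by simp, by simp, by simp [IsForestOrder]⟩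
    obtain ⟨v, hv, hdeg⟩ := hG S hS
    obtain ⟨f, L, h⟩ := ih _ (Finset.erase_ssubset hv)
    have card_le : {u ∈ S | G.Adj v u}.card ≤ k := by
      rw [← Set.ncard_coe_finset]
      convert hdeg using 2
      ext u
      simp
    obtain ⟨c, -, hc⟩ := Finset.exists_card_fiber_lt_of_card_lt_mul (f := f) (n := 2)
      (s := {u ∈ S | G.Adj v u}) (t := Finset.univ) (by rw [Finset.card_univ]; omega)
    have eq_of_adj : ∀ x ∈ L c, ∀ y ∈ L c, G.Adj x v → G.Adj y v → x = y := by
      intro x hx y hy hxv hyv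
      have := Finset.card_le_one.1 (Nat.le_of_lt_succ hc)
      rw [h.mem_iff, Finset.mem_erase] at hx hy
      exact this x (by simp [hx, hxv.symm]) y (by simp [hy, hyv.symm])
    have hvL : v ∉ L c := by simp [h.mem_iff]
    refine ⟨Function.update f v c, Function.update L c (L c ++ [v]), fun d => ?_, fun d u => ?_,
      fun d => ?_⟩
    · rcases eq_or_ne d c with rfl | hd
      · simpa [List.nodup_append, h.nodup d] using fun a ha => ne_of_mem_of_not_mem ha hvL
      · simpa [hd] using h.nodup d
    · have := h.mem_iff d u
      grind
    · rcases eq_or_ne d c with rfl | hd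
      · simpa using (h.isForestOrder d).concat (h.nodup d) eq_of_adj
      · simpa [hd] using h.isForestOrder d

theorem exists_isForestOrder_of_isDegenerate_five [Fintype V] (hG : IsDegenerate G 5) :
    ∃ L : List V, L.Nodup ∧ IsForestOrder G L ∧ Fintype.card V ≤ 3 * L.length := by
  classical
  obtain ⟨f, L, h⟩ := exists_isForestColouring (C := Fin 3) (by simp) hG Finset.univ
  have card_fiber (c : Fin 3) : Finset.card {v | f v = c} = (L c).length := by
    rw [← List.toFinset_card_of_nodup (h.nodup c)]
    congr 1
    ext v
    simp [h.mem_iff]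
  have card_eq : Fintype.card V = ∑ c, (L c).length := by
    rw [← Finset.card_univ, Finset.card_eq_sum_card_fiberwise (t := Finset.univ) (f := f) (by simp)]
    exact Finset.sum_congr rfl fun c _ => card_fiber c
  obtain ⟨c, -, hc⟩ := Finset.exists_le_of_sum_le (s := (Finset.univ : Finset (Fin 3)))
    Finset.univ_nonempty (f := fun _ => Fintype.card V) (g := fun c => 3 * (L c).length) (by
      rw [← Finset.mul_sum, ← card_eq]
      simp)
  exact ⟨L c, h.nodup c, h.isForestOrder c, hc⟩

theorem exists_isLinear_of_isDegenerate_five [Fintype V] (hG : IsDegenerate G 5) :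
    ∃ l : List V, l.Nodup ∧ IsLinear G l ∧ Fintype.card V ≤ 4 * l.length := by
  obtain ⟨L, hnodup, hL, hcard⟩ := exists_isForestOrder_of_isDegenerate_five hG
  obtain ⟨l, hl, hlin, hlen⟩ := hL.exists_isLinear hnodup
  exact ⟨l, hl, hlin, by omega⟩

end LinearForest

section MovesInto

variable {X : Type*} [TopologicalSpace X]

/-- The set `S` can be moved into `T` by a homeomorphism of the ambient space that fixes every
point of `K`. -/
def MovesInto (K S T : Set X) : Prop := ∃ h : X ≃ₜ X, EqOn h id K ∧ MapsTo h S T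

lemma MovesInto.trans {K S T U : Set X} (hST : MovesInto K S T) (hTU : MovesInto K T U) :
    MovesInto K S U := by
  obtain ⟨f, hfK, hf⟩ := hST
  obtain ⟨g, hgK, hg⟩ := hTU
  exact ⟨f.trans g, fun p hp => by simp [hfK hp, hgK hp], hg.comp hf⟩

lemma MovesInto.mono {K K' S S' T T' : Set X} (h : MovesInto K S T) (hK : K' ⊆ K) (hS : S' ⊆ S)
    (hT : T ⊆ T') : MovesInto K' S' T' := by
  obtain ⟨f, hfK, hf⟩ := h
  exact ⟨f, hfK.mono hK, hf.mono hS hT⟩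

lemma exists_homeomorph_mapsTo_of_movesInto [T2Space X] {ι : Type*} [Finite ι] {S T : ι → Set X}
    {P : ι → X} (hS : ∀ i, IsCompact (S i)) (hP : ∀ i, P i ∈ S i)
    (hdisj : Pairwise (Function.onFun Disjoint S))
    (hmove : ∀ i K, IsClosed K → Disjoint K (S i) → MovesInto (insert (P i) K) (S i) (T i)) :
    ∃ h : X ≃ₜ X, ∀ i, h (P i) = P i ∧ MapsTo h (S i) (T i) := by
  classical
  have := Fintype.ofFinite ι
  suffices ∀ A : Finset ι, ∃ h : X ≃ₜ X, (∀ i ∈ A, h (P i) = P i ∧ MapsTo h (S i) (T i)) ∧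
      ∀ i ∉ A, EqOn h id (S i) by
    simpa using this Finset.univ
  intro A
  induction A using Finset.induction_on with
  | empty => exact ⟨.refl X, by simp, fun _ _ _ _ => rfl⟩
  | insert n A hn ih =>
    obtain ⟨h, hA, hAc⟩ := ih
    let K : Set X := ⋃ i ∈ ({n}ᶜ : Finset ι), h '' S i
    have hK : IsClosed K :=
      (Finset.isCompact_biUnion _ fun i _ => (hS i).image h.continuous).isClosed
    have hKn : Disjoint K (S n) := by
      refine disjoint_iUnion₂_left.2 fun i hi => ?_
      rw [← image_id (S n), ← (hAc n hn).image_eq, disjoint_image_iff h.injective]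
      exact hdisj (by simpa using hi)
    obtain ⟨g, hgK, hg⟩ := hmove n K hK hKn
    have g_fix {i} (hi : i ≠ n) {p} (hp : p ∈ S i) : g (h p) = h p :=
      hgK (.inr (mem_iUnion₂.2 ⟨i, by simpa, p, hp, rfl⟩))
    have h_fix {p} (hp : p ∈ S n) : h p = p := hAc n hn hp
    refine ⟨h.trans g, fun i hi => ?_, fun i hi p hp => ?_⟩
    · rcases eq_or_ne i n with rfl | hin
      · exact ⟨(congrArg g (h_fix (hP i))).trans (hgK (.inl rfl)),
          fun p hp => (congrArg g (h_fix hp)).symm ▸ hg hp⟩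
      · have hiA := hA i (Finset.mem_of_mem_insert_of_ne hi hin)
        exact ⟨(g_fix hin (hP i)).trans hiA.1, fun p hp => (g_fix hin hp).symm ▸ hiA.2 hp⟩
    · rw [Finset.mem_insert, not_or] at hi
      exact (g_fix hi.1 hp).trans (hAc i hi.2 hp)

end MovesInto

section Homeomorph

variable {E : Type*} [NormedAddCommGroup E] [NormedSpace ℝ E]

lemma exists_homeomorph_add_of_lipschitzWith [CompleteSpace E] {φ : E → E} {c : NNReal}
    (hφ : LipschitzWith c φ) (hc : c < 1) : ∃ h : E ≃ₜ E, ∀ p, h p = p + φ p := by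
  have happrox : ApproximatesLinearOn (fun p => p + φ p)
      ((ContinuousLinearEquiv.refl ℝ E : E ≃L[ℝ] E) : E →L[ℝ] E) univ c := fun x _ y _ => by
    simpa [add_sub_add_comm, dist_eq_norm] using hφ.dist_le_mul x y
  rcases subsingleton_or_nontrivial E with hE | hE
  · exact ⟨.refl E, fun p => Subsingleton.elim _ _⟩
  · refine ⟨happrox.toHomeomorph _ (Or.inr (hc.trans_eq ?_)), fun p => rfl⟩
    have : ‖((ContinuousLinearEquiv.refl ℝ E).symm : E →L[ℝ] E)‖₊ = 1 :=
      NNReal.eq (ContinuousLinearMap.norm_id (𝕜 := ℝ) (E := E))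
    rw [this, inv_one]

variable [CompleteSpace E]

lemma exists_homeomorph_add_smul {a : E → ℝ} {L : NNReal} (ha : LipschitzWith L a) {v : E}
    (hv : L * ‖v‖₊ < 1) : ∃ h : E ≃ₜ E, ∀ p, h p = p + a p • v := by
  refine exists_homeomorph_add_of_lipschitzWith (φ := fun p => a p • v)
    (LipschitzWith.of_dist_le_mul fun p q => ?_) hv
  rw [dist_eq_norm, ← sub_smul, norm_smul, ← dist_eq_norm, NNReal.coe_mul, coe_nnnorm,
    mul_right_comm]
  gcongr
  exact ha.dist_le_mul p q

/- The flow along `v` for time `1`, as an iterate of a short step. -/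
lemma exists_homeomorph_flow {a : E → ℝ} {L : NNReal} (ha : LipschitzWith L a) (v : E) :
    ∃ h : E ≃ₜ E, (∀ p, a p = 0 → h p = p) ∧
      ∀ p, (∀ s ∈ Icc (0 : ℝ) 1, a (p + (s * a p) • v) = a p) → h p = p + a p • v := by
  obtain ⟨N, hN⟩ := exists_nat_gt ((L * ‖v‖₊ : NNReal) : ℝ)
  have N_pos : (0 : ℝ) < N := (NNReal.coe_nonneg _).trans_lt hN
  obtain ⟨g, hg⟩ := exists_homeomorph_add_smul ha (v := (N : ℝ)⁻¹ • v) (by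
    rw [nnnorm_smul, mul_left_comm, nnnorm_inv, inv_mul_lt_iff₀ (by simpa using N_pos)]
    simpa using mod_cast hN)
  have iterate (p) (hp : ∀ s ∈ Icc (0 : ℝ) 1, a (p + (s * a p) • v) = a p) (k : ℕ) (hk : k ≤ N) :
      (g ^ k) p = p + ((k / N : ℝ) * a p) • v := by
    induction k with
    | zero => simp
    | succ k ih =>
      rw [pow_succ', Homeomorph.mul_apply, ih (by omega), hg, hp]
      · push_cast
        module
      · exact ⟨by positivity, (div_le_one N_pos).2 (mod_cast by omega)⟩
  have flow (p) (hp : ∀ s ∈ Icc (0 : ℝ) 1, a (p + (s * a p) • v) = a p) :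
      (g ^ N) p = p + a p • v := by
    rw [iterate p hp N le_rfl, div_self N_pos.ne', one_mul]
  exact ⟨g ^ N, fun p hp => by simpa [hp] using flow p (by simp [hp]), flow⟩

lemma exists_homeomorph_bend {B c c' : E} {w : E →L[ℝ] ℝ} (hc : w c = 1) (hc' : w c' = 1) {ρ : ℝ}
    (hρ : 0 < ρ) : ∃ r > (0 : ℝ), ∃ h : E ≃ₜ E, (∀ p, w (p - B) ≤ 0 → h p = p) ∧
      EqOn h id (Metric.ball B ρ)ᶜ ∧ ∀ t ∈ Icc 0 r, h (B + t • c) = B + t • c' := by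
  let a (p : E) : ℝ := max 0 (min (w (p - B)) (ρ - dist p B))
  have ha : LipschitzWith (max ‖w‖₊ 1) a := by
    refine (LipschitzWith.min ?_ ?_).const_max 0
    · simpa only [map_sub, add_zero] using w.lipschitz.sub (.const (w B))
    · simpa using (LipschitzWith.const ρ).sub (LipschitzWith.dist_left B)
  obtain ⟨h, hfix, hflow⟩ := exists_homeomorph_flow ha (c' - c)
  have hw (s : ℝ) : w (c + s • (c' - c)) = 1 := by simp [hc, hc']
  refine ⟨ρ / (1 + ‖c‖ + ‖c' - c‖), by positivity, h, fun p hp => hfix p ?_,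
    fun p hp => hfix p ?_, fun t ht => ?_⟩
  · exact max_eq_left ((min_le_left _ _).trans hp)
  · exact max_eq_left ((min_le_right _ _).trans (by simpa using hp))
  · have htρ := (le_div_iff₀ (by positivity)).1 ht.2
    have const (s : ℝ) (hs : s ∈ Icc 0 1) : a (B + t • (c + s • (c' - c))) = t := by
      have norm_le : ‖t • (c + s • (c' - c))‖ ≤ t * (‖c‖ + ‖c' - c‖) := by
        rw [norm_smul, Real.norm_of_nonneg ht.1]
        refine mul_le_mul_of_nonneg_left ((norm_add_le _ _).trans ?_) ht.1
        gcongr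
        rw [norm_smul, Real.norm_of_nonneg hs.1]
        exact mul_le_of_le_one_left (norm_nonneg _) hs.2
      simp only [a, add_sub_cancel_left, dist_self_add_left, map_smul, hw, smul_eq_mul, mul_one]
      rw [min_eq_left (by linarith), max_eq_right ht.1]
    have at_start : a (B + t • c) = t := by simpa using const 0 (by simp)
    rw [hflow, at_start]
    · module
    · intro s hs
      rw [at_start, ← const s hs]
      congr 1
      rw [const s hs]
      module

/- Points `p` are pushed towards `B` at a speed proportional to their distance from `K ∪ {B}`. -/
lemma exists_homeomorph_pull_step {B C : E} (hBC : B ≠ C) {K : Set E} (hK : IsClosed K) {t : ℝ}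
    (ht : 0 < t) (htK : ∀ s ∈ Icc t 1, AffineMap.lineMap B C s ∉ K) :
    ∃ μ > 0, ∃ h : E ≃ₜ E, EqOn h id K ∧ ∀ s ∈ Icc (0 : ℝ) 1,
      ∃ s' ∈ Icc 0 (max t (s - μ)), s' ≤ 1 ∧
        h (AffineMap.lineMap B C s) = AffineMap.lineMap B C s' := by
  have hd : 0 < dist B C := dist_pos.2 hBC
  have hK' : IsClosed (insert B K) := isClosed_singleton.union hK
  let a (p : E) : ℝ := Metric.infDist p (insert B K)
  have ha : LipschitzWith 1 a := Metric.lipschitz_infDist_pt _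
  have a_line_pos : ∀ s ∈ Icc t 1, 0 < a (AffineMap.lineMap B C s) := fun s hs => by
    refine (hK'.notMem_iff_infDist_pos (insert_nonempty _ _)).1 ?_
    rw [mem_insert_iff, AffineMap.lineMap_eq_left_iff, not_or, not_or]
    exact ⟨⟨hBC, (ht.trans_le hs.1).ne'⟩, htK s hs⟩
  obtain ⟨η, hη, hη_le⟩ : ∃ η > 0, ∀ s ∈ Icc t 1, η ≤ a (AffineMap.lineMap B C s) :=
    isCompact_Icc.exists_forall_le' (ha.continuous.comp AffineMap.lineMap_continuous).continuousOn
      a_line_pos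
  let c : ℝ := (2 * dist B C)⁻¹
  have hc : 0 < c := by positivity
  have hc_half : c * dist B C = 1 / 2 := by simp only [c]; field_simp
  obtain ⟨h, hh⟩ := exists_homeomorph_add_smul ha (v := c • (B - C)) (by
    rw [← NNReal.coe_lt_coe, one_mul, coe_nnnorm, norm_smul, ← dist_eq_norm,
      Real.norm_of_nonneg hc.le, hc_half]
    norm_num)
  refine ⟨c * η, by positivity, h, fun p hp => ?_, fun s hs => ?_⟩
  · simp [hh, a, Metric.infDist_zero_of_mem (mem_insert_of_mem B hp)]
  · let s' := s - c * a (AffineMap.lineMap B C s)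
    have s'_le : s' ≤ s := sub_le_self _ (mul_nonneg hc.le Metric.infDist_nonneg)
    have s'_nonneg : 0 ≤ s' := by
      have : a (AffineMap.lineMap B C s) ≤ s * dist B C :=
        (Metric.infDist_le_dist_of_mem (mem_insert B K)).trans_eq
          (by rw [dist_lineMap_left, Real.norm_of_nonneg hs.1])
      have := mul_le_mul_of_nonneg_left this hc.le
      rw [mul_left_comm, hc_half] at this
      linarith [hs.1]
    refine ⟨s', ⟨s'_nonneg, ?_⟩, s'_le.trans hs.2, ?_⟩
    · rcases le_or_gt t s with hts | hts
      · exact le_max_of_le_right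
          (sub_le_sub_left (mul_le_mul_of_nonneg_left (hη_le s ⟨hts, hs.2⟩) hc.le) s)
      · exact le_max_of_le_left (s'_le.trans hts.le)
    · simp only [hh, s', AffineMap.lineMap_apply_module]
      module

lemma movesInto_lineMap_image {B C : E} {K : Set E} (hK : IsClosed K) {t : ℝ} (ht : 0 < t)
    (htK : ∀ s ∈ Icc t 1, AffineMap.lineMap B C s ∉ K) :
    MovesInto K (segment ℝ B C) (AffineMap.lineMap B C '' Icc 0 t) := by
  rw [segment_eq_image_lineMap]
  rcases eq_or_ne B C with rfl | hBC
  · refine ⟨.refl E, fun _ _ => rfl, ?_⟩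
    rintro _ ⟨s, -, rfl⟩
    exact ⟨0, ⟨le_rfl, ht.le⟩, by simp⟩
  obtain ⟨μ, hμ, g, hgK, hg⟩ := exists_homeomorph_pull_step hBC hK ht htK
  have iterate (k : ℕ) : EqOn (g ^ k) id K ∧ ∀ s ∈ Icc (0 : ℝ) 1, ∃ s' ∈ Icc 0 (max t (1 - k * μ)),
      s' ≤ 1 ∧ (g ^ k) (AffineMap.lineMap B C s) = AffineMap.lineMap B C s' := by
    induction k with
    | zero => exact ⟨fun _ _ => rfl, fun s hs => ⟨s, ⟨hs.1, by simp [hs.2]⟩, hs.2, rfl⟩⟩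
    | succ k ih =>
      refine ⟨fun p hp => ?_, fun s hs => ?_⟩
      · rw [pow_succ', Homeomorph.mul_apply, ih.1 hp]
        exact hgK hp
      · obtain ⟨s₁, hs₁, hs₁_le, h₁⟩ := ih.2 s hs
        obtain ⟨s₂, hs₂, hs₂_le, h₂⟩ := hg s₁ ⟨hs₁.1, hs₁_le⟩
        refine ⟨s₂, ⟨hs₂.1, ?_⟩, hs₂_le, by rw [pow_succ', Homeomorph.mul_apply, h₁, h₂]⟩
        push_cast
        grind
  obtain ⟨N, hN⟩ := exists_nat_gt (1 / μ)
  have hN : 1 - N * μ ≤ t := by linarith [(div_lt_iff₀ hμ).1 hN]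
  refine ⟨g ^ N, (iterate N).1, ?_⟩
  rintro _ ⟨s, hs, rfl⟩
  obtain ⟨s', hs', -, h'⟩ := (iterate N).2 s hs
  exact ⟨s', by rwa [max_eq_left hN] at hs', h'.symm⟩

omit [CompleteSpace E] in
lemma isCompact_segment (a b : E) : IsCompact (segment ℝ a b) := by
  rw [segment_eq_image_lineMap]
  exact isCompact_Icc.image AffineMap.lineMap_continuous

omit [CompleteSpace E] in
lemma exists_clm_pos_of_zero_notMem_segment {d e : E} (h : (0 : E) ∉ segment ℝ d e) :
    ∃ w : E →L[ℝ] ℝ, 0 < w d ∧ 0 < w e := by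
  obtain ⟨w, s, h₀, hw⟩ := geometric_hahn_banach_point_closed (convex_segment d e)
    (isCompact_segment d e).isClosed h
  rw [map_zero] at h₀
  exact ⟨w, h₀.trans (hw _ (left_mem_segment _ _ _)), h₀.trans (hw _ (right_mem_segment _ _ _))⟩

/- The segment `[B, C]` is first pulled close to `B`, and then bent onto `[B, D]`. -/
lemma movesInto_segment {B C D : E} {K : Set E} (hK : IsClosed K)
    (hBC : Disjoint K (openSegment ℝ B C)) (hCK : C ∉ K)
    (hD : (0 : E) ∉ segment ℝ (C - B) (D - B))
    {ρ : ℝ} (hρ : 0 < ρ) (hBK : ∀ p ∈ K, p ∈ Metric.ball B ρ → ∃ s ≥ (0 : ℝ), p = B - s • (D - B)) :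
    MovesInto K (segment ℝ B C) (segment ℝ B D) := by
  obtain ⟨w, hwC, hwD⟩ := exists_clm_pos_of_zero_notMem_segment hD
  obtain ⟨r, hr, g, hg_neg, hg_ball, hg⟩ := exists_homeomorph_bend (B := B)
    (c := (w (C - B))⁻¹ • (C - B)) (c' := (w (D - B))⁻¹ • (D - B)) (w := w)
    (by rw [map_smul, smul_eq_mul, inv_mul_cancel₀ hwC.ne'])
    (by rw [map_smul, smul_eq_mul, inv_mul_cancel₀ hwD.ne']) hρ
  let t : ℝ := min r (w (D - B)) / w (C - B)
  have ht : 0 < t := div_pos (lt_min hr hwD) hwC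
  refine (movesInto_lineMap_image hK ht fun s hs => ?_).trans ⟨g, fun p hp => ?_, ?_⟩
  · rcases hs.2.eq_or_lt with rfl | hs1
    · simpa using hCK
    · refine Set.disjoint_right.1 hBC ?_
      rw [openSegment_eq_image_lineMap]
      exact ⟨s, ⟨ht.trans_le hs.1, hs1⟩, rfl⟩
  · by_cases hpρ : p ∈ Metric.ball B ρ
    · obtain ⟨s, hs, rfl⟩ := hBK p hp hpρ
      refine hg_neg _ ?_
      rw [sub_sub_cancel_left, map_neg, map_smul, smul_eq_mul]
      exact neg_nonpos.2 (mul_nonneg hs hwD.le)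
    · exact hg_ball hpρ
  · rintro _ ⟨s, hs, rfl⟩
    have hsw := (le_div_iff₀ hwC).1 hs.2
    have := hg (s * w (C - B)) ⟨mul_nonneg hs.1 hwC.le, hsw.trans (min_le_left _ _)⟩
    rw [smul_smul, smul_smul, mul_inv_cancel_right₀ hwC.ne'] at this
    rw [AffineMap.lineMap_apply_module', add_comm, this, segment_eq_image_lineMap]
    refine ⟨s * w (C - B) * (w (D - B))⁻¹, ⟨?_, ?_⟩, ?_⟩
    · exact mul_nonneg (mul_nonneg hs.1 hwC.le) (inv_nonneg.2 hwD.le)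
    · rw [← div_eq_mul_inv, div_le_one hwD]
      exact hsw.trans (min_le_right _ _)
    · rw [AffineMap.lineMap_apply_module', add_comm]

end Homeomorph

section Polyline

variable {E : Type*} [AddCommGroup E] [Module ℝ E]

/-- The broken line with the given successive vertices. -/
def polyline : List E → Set E
  | [] => ∅
  | [a] => {a}
  | a :: b :: l => segment ℝ a b ∪ polyline (b :: l)

/-- The successive vertices in the list are distinct, and two edges of its broken line meet only if
they are consecutive, and then only at their common vertex. -/
def IsSimplePolyline : List E → Prop
  | [] => True
  | [_] => True
  | a :: b :: l => a ≠ b ∧ segment ℝ a b ∩ polyline (b :: l) ⊆ {b} ∧ IsSimplePolyline (b :: l)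

lemma mem_polyline_of_mem {a : E} : ∀ {l : List E}, a ∈ l → a ∈ polyline l
  | [_], h => by simpa [polyline] using h
  | _ :: _ :: _, h => by
    rcases List.mem_cons.1 h with rfl | h
    · exact Or.inl (left_mem_segment ℝ _ _)
    · exact Or.inr (mem_polyline_of_mem h)

lemma polyline_pair (a b : E) : polyline [a, b] = segment ℝ a b :=
  union_eq_left.2 (singleton_subset_iff.2 (right_mem_segment ℝ a b))

lemma polyline_append_cons (l₁ : List E) (x : E) (l₂ : List E) :
    polyline (l₁ ++ x :: l₂) = polyline (l₁ ++ [x]) ∪ polyline (x :: l₂) := by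
  induction l₁ with
  | nil => exact (union_eq_right.2 (singleton_subset_iff.2 (mem_polyline_of_mem (by simp)))).symm
  | cons a l₁ ih =>
    cases l₁ with
    | nil => simp only [List.cons_append, List.nil_append, polyline_pair, polyline]
    | cons b l₁ =>
      simp only [List.cons_append, polyline] at ih ⊢
      rw [ih, union_assoc]

lemma polyline_cons (a : E) {l : List E} (hl : l ≠ []) :
    polyline (a :: l) = segment ℝ a (l.head hl) ∪ polyline l := by
  cases l with
  | nil => exact absurd rfl hl
  | cons b l => rfl

lemma polyline_concat {l : List E} (hl : l ≠ []) (b : E) :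
    polyline (l ++ [b]) = polyline l ∪ segment ℝ (l.getLast hl) b := by
  conv_lhs => rw [← List.dropLast_concat_getLast hl, List.append_assoc, List.singleton_append]
  rw [polyline_append_cons, List.dropLast_concat_getLast, polyline_pair]

lemma polyline_reverse (l : List E) : polyline l.reverse = polyline l := by
  induction l with
  | nil => rfl
  | cons a l ih =>
    cases l with
    | nil => rfl
    | cons b l =>
      rw [List.reverse_cons, List.reverse_cons, List.append_assoc, List.singleton_append,
        polyline_append_cons, ← List.reverse_cons, ih, polyline_pair, segment_symm, union_comm]
      rfl

lemma IsSimplePolyline.append {x : E} {l₁ l₂ : List E} (h₁ : IsSimplePolyline (l₁ ++ [x]))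
    (h₂ : IsSimplePolyline (x :: l₂)) (h : polyline (l₁ ++ [x]) ∩ polyline (x :: l₂) ⊆ {x}) :
    IsSimplePolyline (l₁ ++ x :: l₂) := by
  induction l₁ with
  | nil => exact h₂
  | cons a l₁ ih =>
    cases l₁ with
    | nil => exact ⟨h₁.1, fun p hp => h ⟨Or.inl hp.1, hp.2⟩, h₂⟩
    | cons b l₁ =>
      refine ⟨h₁.1, ?_, ih h₁.2.2 fun p hp => h ⟨Or.inr hp.1, hp.2⟩⟩
      rintro p ⟨hp₁, hp₂⟩
      change p ∈ polyline (b :: l₁ ++ x :: l₂) at hp₂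
      rw [polyline_append_cons] at hp₂
      rcases hp₂ with hp₂ | hp₂
      · exact h₁.2.1 ⟨hp₁, hp₂⟩
      · obtain rfl := h ⟨Or.inl hp₁, hp₂⟩
        exact h₁.2.1 ⟨hp₁, mem_polyline_of_mem (by simp)⟩

lemma IsSimplePolyline.cons {a : E} {l : List E} (h : IsSimplePolyline l) (hl : l ≠ [])
    (ha : a ≠ l.head hl) (hmeet : segment ℝ a (l.head hl) ∩ polyline l ⊆ {l.head hl}) :
    IsSimplePolyline (a :: l) := by
  cases l with
  | nil => exact absurd rfl hl
  | cons b l => exact ⟨ha, hmeet, h⟩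

lemma IsSimplePolyline.concat {b : E} {l : List E} (h : IsSimplePolyline l) (hl : l ≠ [])
    (hb : l.getLast hl ≠ b) (hmeet : polyline l ∩ segment ℝ (l.getLast hl) b ⊆ {l.getLast hl}) :
    IsSimplePolyline (l ++ [b]) := by
  rw [← List.dropLast_concat_getLast hl, List.append_assoc, List.singleton_append]
  refine .append ?_ ⟨hb, fun p hp => hp.2, trivial⟩ ?_
  · rwa [List.dropLast_concat_getLast]
  · rwa [List.dropLast_concat_getLast, polyline_pair]

lemma IsSimplePolyline.reverse {l : List E} (h : IsSimplePolyline l) :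
    IsSimplePolyline l.reverse := by
  induction l with
  | nil => exact h
  | cons a l ih =>
    cases l with
    | nil => exact h
    | cons b l =>
      rw [List.reverse_cons, List.reverse_cons, List.append_assoc, List.singleton_append]
      refine .append ?_ ⟨h.1.symm, fun p hp => hp.2, trivial⟩ ?_
      · rw [← List.reverse_cons]
        exact ih h.2.2
      · rw [← List.reverse_cons, polyline_reverse, polyline_pair, segment_symm, inter_comm]
        exact h.2.1

end Polyline

section Straighten

variable {E : Type*} [NormedAddCommGroup E] [NormedSpace ℝ E]

lemma isCompact_polyline : ∀ l : List E, IsCompact (polyline l)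
  | [] => isCompact_empty
  | [_] => isCompact_singleton
  | a :: b :: l => (isCompact_segment a b).union (isCompact_polyline (b :: l))

lemma segment_subset_ball {B D : E} {ρ : ℝ} (hρ : ‖D - B‖ < ρ) :
    segment ℝ B D ⊆ Metric.ball B ρ :=
  (convex_ball B ρ).segment_subset
    (Metric.mem_ball_self ((norm_nonneg _).trans_lt hρ)) (mem_ball_iff_norm.2 hρ)

lemma exists_pos_norm_smul_lt (v : E) {ρ : ℝ} (hρ : 0 < ρ) : ∃ q > (0 : ℝ), ‖q • v‖ < ρ := by
  refine ⟨ρ / (‖v‖ + 1), by positivity, ?_⟩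
  rw [norm_smul, Real.norm_of_nonneg (by positivity), div_mul_eq_mul_div,
    div_lt_iff₀ (by positivity)]
  linarith

lemma zero_notMem_segment_of_linearIndependent {x y : E} (h : LinearIndependent ℝ ![x, y]) :
    (0 : E) ∉ segment ℝ x y := by
  rintro ⟨a, b, -, -, hab, h0⟩
  obtain ⟨rfl, rfl⟩ := LinearIndependent.pair_iff.1 h a b h0
  norm_num at hab

lemma segment_subset_union {x y z : E} (hy : y ∈ segment ℝ x z) :
    segment ℝ x z ⊆ segment ℝ x y ∪ segment ℝ y z := by
  rw [segment_eq_image_lineMap] at hy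
  rw [← insert_endpoints_openSegment ℝ x z, insert_subset_iff, insert_subset_iff]
  refine ⟨.inl (left_mem_segment ℝ x y), .inr (right_mem_segment ℝ y z),
    (openSegment_subset_union x z (image_subset_range _ _ hy)).trans (insert_subset ?_ ?_)⟩
  · exact .inl (right_mem_segment ℝ x y)
  · exact union_subset_union (openSegment_subset_segment _ _ _) (openSegment_subset_segment _ _ _)

lemma mem_segment_extension (A B : E) {q : ℝ} (hq : 0 < q) : B ∈ segment ℝ (B + q • (B - A)) A := by
  refine ⟨1 / (1 + q), q / (1 + q), by positivity, by positivity, by field_simp, ?_⟩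
  match_scalars <;> field_simp
  ring

lemma zero_notMem_segment_of_inter_subset {A B C : E} (hCB : C ≠ B) (hBA : B ≠ A)
    (h : segment ℝ C B ∩ segment ℝ B A ⊆ {B}) {q : ℝ} (hq : 0 < q) :
    (0 : E) ∉ segment ℝ (C - B) (q • (B - A)) := by
  rintro ⟨a, b, ha, hb, hab, h₀⟩
  have hpos : 0 < a + b * q := by
    rcases ha.eq_or_lt with rfl | ha
    · rw [zero_add] at hab
      simp [hab, hq]
    · positivity
  have hx : B + (a / (a + b * q)) • (C - B) = B + (b * q / (a + b * q)) • (A - B) := by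
    linear_combination (norm := module) (a + b * q)⁻¹ • h₀
  have hxB : B + (a / (a + b * q)) • (C - B) = B := by
    refine h ⟨?_, ?_⟩
    · rw [segment_symm, segment_eq_image']
      exact ⟨_, ⟨by positivity, (div_le_one hpos).2 (by nlinarith)⟩, rfl⟩
    · rw [hx, segment_eq_image']
      exact ⟨_, ⟨by positivity, (div_le_one hpos).2 (by linarith)⟩, rfl⟩
  have ha : a = 0 := by simpa [sub_eq_zero, hCB, hpos.ne'] using hxB
  subst ha
  simp_all [sub_eq_zero]

variable [CompleteSpace E]

/- A segment that cannot be swung directly onto `[B, B + e]`, being opposite to it, is first swung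
onto a short segment in an independent direction. -/
lemma movesInto_segment_of_isolated (hE : 1 < Module.rank ℝ E) {B C e : E} {K : Set E}
    (hK : IsClosed K) (hBC : Disjoint K (openSegment ℝ B C)) (hC : C ∉ K) (hCB : C ≠ B) (he : e ≠ 0)
    {ρ : ℝ} (hρ : 0 < ρ) (hBK : ∀ p ∈ K, p ∈ Metric.ball B ρ → p = B) :
    MovesInto K (segment ℝ B C) (segment ℝ B (B + e)) := by
  have isolated (D : E) : ∀ p ∈ K, p ∈ Metric.ball B ρ → ∃ s ≥ (0 : ℝ), p = B - s • (D - B) :=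
    fun p hp hpB => ⟨0, le_rfl, by simpa using hBK p hp hpB⟩
  by_cases h₀ : (0 : E) ∈ segment ℝ (C - B) e
  swap
  · exact movesInto_segment hK hBC hC (by simpa using h₀) hρ (isolated _)
  obtain ⟨f, hf⟩ := exists_linearIndependent_pair_of_one_lt_rank hE he
  obtain ⟨q, hq, hqρ⟩ := exists_pos_norm_smul_lt f hρ
  have hqf : LinearIndependent ℝ ![e, q • f] := by
    rw [LinearIndependent.pair_iff] at hf ⊢
    intro s t hst
    simpa [hq.ne'] using hf s (t * q) (by rwa [mul_smul])
  have hC_qf : LinearIndependent ℝ ![C - B, q • f] := by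
    obtain ⟨a, b, -, -, hab, h0⟩ := h₀
    have ha : a ≠ 0 := by
      rintro rfl
      simp_all
    have hb : b ≠ 0 := by
      rintro rfl
      simp_all [sub_eq_zero]
    rw [LinearIndependent.pair_iff] at hqf ⊢
    intro s t hst
    have := hqf (-(s * b)) (t * a) (by linear_combination (norm := module) a • hst - s • h0)
    simpa [ha, hb] using this
  have mem_ball : segment ℝ B (B + q • f) ⊆ Metric.ball B ρ := segment_subset_ball (by simpa)
  have hq0 : B + q • f ≠ B := by simpa using hqf.ne_zero 1
  refine (movesInto_segment (D := B + q • f) hK hBC hC ?_ hρ (isolated _)).trans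
    (movesInto_segment hK (Set.disjoint_left.2 fun p hp hp' => ?_) (fun hmem => ?_) ?_ hρ
      (isolated _))
  · simpa using zero_notMem_segment_of_linearIndependent hC_qf
  · obtain rfl := hBK p hp (mem_ball (openSegment_subset_segment _ _ _ hp'))
    exact hq0 (left_mem_openSegment_iff.1 hp').symm
  · exact hq0 (hBK _ hmem (mem_ball (right_mem_segment _ _ _)))
  · simpa [segment_symm] using zero_notMem_segment_of_linearIndependent
      (LinearIndependent.pair_symm_iff.1 hqf)

omit [CompleteSpace E] in
lemma exists_ball_subset_compl {A B C : E} {l : List E} (h : IsSimplePolyline (C :: B :: A :: l))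
    {K : Set E} (hK : IsClosed K) (hKl : Disjoint K (polyline (C :: B :: A :: l))) :
    ∃ ρ > 0, Metric.ball B ρ ⊆ (K ∪ polyline (A :: l))ᶜ := by
  obtain ⟨-, -, hBA, hB, -⟩ := h
  have hBl : B ∉ polyline (A :: l) := fun hmem => hBA (hB ⟨left_mem_segment ℝ B A, hmem⟩)
  have hBK : B ∉ K := fun hmem => disjoint_left.1 hKl hmem (mem_polyline_of_mem (by simp))
  exact Metric.isOpen_iff.1
    (hK.union (isCompact_polyline (A :: l)).isClosed).isOpen_compl B (by simp [hBK, hBl])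

lemma movesInto_first_edge {A B C : E} {l : List E} (h : IsSimplePolyline (C :: B :: A :: l))
    {K : Set E} (hK : IsClosed K) (hKl : Disjoint K (polyline (C :: B :: A :: l)))
    {q : ℝ} (hq : 0 < q) :
    MovesInto (K ∪ polyline (B :: A :: l)) (segment ℝ B C) (segment ℝ B (B + q • (B - A))) := by
  obtain ⟨ρ, hρ, hball⟩ := exists_ball_subset_compl h hK hKl
  obtain ⟨hCB, hC, hBA, -⟩ := h
  refine movesInto_segment (hK.union (isCompact_polyline _).isClosed) ?_ ?_ ?_ hρ ?_
  · refine disjoint_left.2 fun p hp hpo => ?_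
    have hpC : p ∈ segment ℝ C B := segment_symm ℝ B C ▸ openSegment_subset_segment _ _ _ hpo
    obtain rfl : p = B :=
      hp.elim (fun hp => (disjoint_left.1 hKl hp (.inl hpC)).elim) fun hp => hC ⟨hpC, hp⟩
    exact hCB (left_mem_openSegment_iff.1 hpo).symm
  · rintro (hmem | hmem)
    · exact disjoint_left.1 hKl hmem (.inl (left_mem_segment ℝ C B))
    · exact hCB (hC ⟨left_mem_segment ℝ C B, hmem⟩)
  · simpa using zero_notMem_segment_of_inter_subset hCB hBA
      (fun p hp => hC ⟨hp.1, .inl hp.2⟩) hq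
  · rintro p (hp | hp | hp) hpρ
    · exact (hball hpρ (.inl hp)).elim
    · rw [segment_eq_image'] at hp
      obtain ⟨s, hs, rfl⟩ := hp
      refine ⟨s / q, div_nonneg hs.1 hq.le, ?_⟩
      match_scalars <;> field_simp
      ring
    · exact (hball hpρ (.inr hp)).elim

/- The first edge `[C, B]` is swung onto a short extension of the second edge `[A, B]`. -/
lemma exists_movesInto_fold {A B C : E} {l : List E} (h : IsSimplePolyline (C :: B :: A :: l))
    {K : Set E} (hK : IsClosed K) (hKl : Disjoint K (polyline (C :: B :: A :: l))) :
    ∃ B', IsSimplePolyline (B' :: A :: l) ∧ Disjoint K (polyline (B' :: A :: l)) ∧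
      MovesInto (K ∪ polyline (B :: A :: l)) (polyline (C :: B :: A :: l))
        (polyline (B' :: A :: l)) := by
  obtain ⟨ρ, hρ, hball⟩ := exists_ball_subset_compl h hK hKl
  obtain ⟨q, hq, hqρ⟩ := exists_pos_norm_smul_lt (B - A) hρ
  obtain ⟨g, hg, hg'⟩ := movesInto_first_edge h hK hKl hq
  obtain ⟨-, -, -, hB, hl⟩ := h
  let B' := B + q • (B - A)
  have hBB' : segment ℝ B B' ⊆ (K ∪ polyline (A :: l))ᶜ :=
    (segment_subset_ball (by simpa [B'])).trans hball
  have hB' : B ∈ segment ℝ B' A := mem_segment_extension A B hq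
  have hsub : segment ℝ B' A ⊆ segment ℝ B B' ∪ segment ℝ B A := by
    rw [segment_symm ℝ B B']
    exact segment_subset_union hB'
  refine ⟨B', ⟨?_, ?_, hl⟩, ?_, g, hg, ?_⟩
  · intro h_eq
    exact hBB' (right_mem_segment ℝ B B') (.inr (h_eq ▸ mem_polyline_of_mem (by simp)))
  · rintro p ⟨hp, hpl⟩
    exact (hsub hp).elim (fun hp => (hBB' hp (.inr hpl)).elim) fun hp => hB ⟨hp, hpl⟩
  · refine disjoint_left.2 fun p hpK hp => ?_
    rcases hp with hp | hp
    · exact (hsub hp).elim (fun hp => hBB' hp (.inl hpK))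
        fun hp => disjoint_left.1 hKl hpK (.inr (.inl hp))
    · exact disjoint_left.1 hKl hpK (.inr (.inr hp))
  · have hB'B : segment ℝ B B' ⊆ segment ℝ B' A :=
      (convex_segment B' A).segment_subset hB' (left_mem_segment ℝ B' A)
    have hBA' : segment ℝ B A ⊆ segment ℝ B' A :=
      (convex_segment B' A).segment_subset hB' (right_mem_segment ℝ B' A)
    rintro p (hp | hp)
    · exact .inl (hB'B (hg' (segment_symm ℝ C B ▸ hp)))
    · rw [hg (.inr hp)]
      exact hp.imp (@hBA' p) id

lemma movesInto_polyline (hE : 1 < Module.rank ℝ E) {P e : E} (he : e ≠ 0) {K : Set E}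
    (hK : IsClosed K) : ∀ l : List E, IsSimplePolyline (l ++ [P]) →
      Disjoint K (polyline (l ++ [P])) →
      MovesInto (insert P K) (polyline (l ++ [P])) (segment ℝ P (P + e))
  | [], _, _ => ⟨.refl E, fun _ _ => rfl, fun p hp => hp ▸ left_mem_segment ℝ P (P + e)⟩
  | [C], h, hKl => by
    simp only [List.cons_append, List.nil_append, polyline_pair, segment_symm ℝ C] at hKl ⊢
    have hPK : P ∉ K := fun hmem => disjoint_left.1 hKl hmem (left_mem_segment ℝ P C)
    obtain ⟨ρ, hρ, hball⟩ := Metric.isOpen_iff.1 hK.isOpen_compl P hPK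
    refine movesInto_segment_of_isolated hE (isClosed_singleton.union hK) ?_ ?_ h.1 he hρ
      fun p hp hpρ => hp.resolve_right (hball hpρ)
    · refine disjoint_insert_left.2 ⟨fun hP => h.1 (left_mem_openSegment_iff.1 hP).symm, ?_⟩
      exact hKl.mono_right (openSegment_subset_segment ℝ P C)
    · exact not_or.2 ⟨h.1, fun hmem => disjoint_left.1 hKl hmem (right_mem_segment ℝ P C)⟩
  | C :: B :: l, h, hKl => by
    obtain ⟨A, m, hm⟩ : ∃ A m, l ++ [P] = A :: m := List.exists_cons_of_ne_nil (by simp)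
    simp only [List.cons_append, hm] at h hKl ⊢
    obtain ⟨B', hB', hKB', hmove⟩ := exists_movesInto_fold h hK hKl
    have hPm : P ∈ B :: A :: m := by simp [← hm]
    rw [← hm] at hB' hKB'
    have straight := movesInto_polyline hE he hK (B' :: l) hB' hKB'
    rw [List.cons_append, hm] at straight
    exact (hmove.mono (insert_subset (.inr (mem_polyline_of_mem hPm)) subset_union_left)
      subset_rfl subset_rfl).trans straight
termination_by l => l.length

lemma exists_homeomorph_mapsTo_segment (hE : 1 < Module.rank ℝ E) {e : E} (he : e ≠ 0)
    {ι : Type*} [Finite ι] {l : ι → List E} {P : ι → E}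
    (hl : ∀ i, IsSimplePolyline (l i ++ [P i]))
    (hdisj : Pairwise (Function.onFun Disjoint fun i => polyline (l i ++ [P i]))) :
    ∃ h : E ≃ₜ E, ∀ i, h (P i) = P i ∧
      MapsTo h (polyline (l i ++ [P i])) (segment ℝ (P i) (P i + e)) :=
  exists_homeomorph_mapsTo_of_movesInto (fun _ => isCompact_polyline _)
    (fun _ => mem_polyline_of_mem (by simp)) hdisj
    fun i _ hK hKl => movesInto_polyline hE he hK (l i) (hl i) hKl

end Straighten

section Arc

lemma isArcBetween_iff_exists_path {A : Set Pt} {p q : Pt} :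
    IsArcBetween A p q ↔ ∃ γ : Path p q, Function.Injective γ ∧ A = range γ := by
  constructor
  · rintro ⟨f, hf, hinj, rfl, rfl, rfl⟩
    refine ⟨⟨⟨(Icc 0 1).domRestrict f, hf.domRestrict⟩, rfl, rfl⟩, hinj.injective, ?_⟩
    exact (range_domRestrict f (Icc 0 1)).symm
  · rintro ⟨γ, hγ, rfl⟩
    refine ⟨γ.extend, γ.continuous_extend.continuousOn, ?_, by simp, by simp, ?_⟩
    · intro s hs t ht hst
      rw [γ.extend_apply hs, γ.extend_apply ht] at hst
      exact congrArg Subtype.val (hγ hst)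
    · ext x
      simp only [mem_range, mem_image]
      exact ⟨fun ⟨t, ht⟩ => ⟨t, t.2, by simp [ht]⟩, fun ⟨t, ht, htx⟩ => ⟨⟨t, ht⟩, by
        rwa [γ.extend_apply ht] at htx⟩⟩

lemma IsArcBetween.image_homeomorph {A : Set Pt} {p q : Pt} (hA : IsArcBetween A p q)
    (h : Pt ≃ₜ Pt) : IsArcBetween (h '' A) (h p) (h q) := by
  obtain ⟨f, hf, hinj, rfl, rfl, rfl⟩ := hA
  exact ⟨h ∘ f, h.continuous.comp_continuousOn hf, h.injective.comp_injOn hinj, rfl, rfl,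
    (image_comp h f _).symm⟩

lemma isArcBetween_segment {p q : Pt} (hpq : p ≠ q) : IsArcBetween (segment ℝ p q) p q :=
  ⟨AffineMap.lineMap p q, AffineMap.lineMap_continuous.continuousOn,
    (AffineMap.lineMap_injective ℝ hpq).injOn, by simp, by simp, segment_eq_image_lineMap ℝ p q⟩

lemma IsArcBetween.union {A B : Set Pt} {p q r : Pt} (hA : IsArcBetween A p q)
    (hB : IsArcBetween B q r) (hAB : A ∩ B ⊆ {q}) : IsArcBetween (A ∪ B) p r := by
  rw [isArcBetween_iff_exists_path] at hA hB ⊢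
  obtain ⟨γ, hγ, rfl⟩ := hA
  obtain ⟨δ, hδ, rfl⟩ := hB
  refine ⟨γ.trans δ, fun s t hst => ?_, (γ.trans_range δ).symm⟩
  have meet {s t : unitInterval} (h : γ s = δ t) : s = 1 ∧ t = 0 := by
    have hq : γ s = q := hAB ⟨mem_range_self s, h ▸ mem_range_self t⟩
    exact ⟨hγ (hq.trans γ.target.symm), hδ ((h.symm.trans hq).trans δ.source.symm)⟩
  rw [Path.trans_apply, Path.trans_apply] at hst
  apply Subtype.ext
  split_ifs at hst with hs ht ht
  · have := congrArg Subtype.val (hγ hst)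
    simpa using this
  · have := meet hst
    simp only [Subtype.ext_iff, Icc.coe_one, Icc.coe_zero] at this
    linarith
  · have := meet hst.symm
    simp only [Subtype.ext_iff, Icc.coe_one, Icc.coe_zero] at this
    linarith
  · have := congrArg Subtype.val (hδ hst)
    simpa using this

lemma isArcBetween_polyline {a b : Pt} {l : List Pt} (h : IsSimplePolyline (a :: (l ++ [b]))) :
    IsArcBetween (polyline (a :: (l ++ [b]))) a b := by
  induction l generalizing a with
  | nil =>
    rw [List.nil_append, polyline_pair]
    exact isArcBetween_segment h.1
  | cons c l ih => exact (isArcBetween_segment h.1).union (ih h.2.2) h.2.1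

lemma IsArcBetween.eq_segment_of_axis {A : Set Pt} {a b : ℝ} (hA : IsArcBetween A (a, 0) (b, 0))
    (h₀ : ∀ x ∈ A, x.2 = 0) : A = segment ℝ (a, 0) (b, 0) := by
  obtain ⟨f, hf, hinj, h0, h1, rfl⟩ := hA
  have f_eq {t} (ht : t ∈ Icc (0 : ℝ) 1) : f t = ((f t).1, 0) :=
    Prod.ext rfl (h₀ _ (mem_image_of_mem f ht))
  have inj_fst : InjOn (fun t => (f t).1) (Icc 0 1) := fun s hs t ht hst =>
    hinj hs ht ((f_eq hs).trans ((congrArg (·, (0 : ℝ)) hst).trans (f_eq ht).symm))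
  have cont : ContinuousOn (fun t => (f t).1) (Icc 0 1) := by fun_prop
  have image_fst : (fun t => (f t).1) '' Icc 0 1 = uIcc a b := by
    have mono := cont.strictMonoOn_of_injOn_Icc' zero_le_one inj_fst
    rw [← uIcc_of_le (zero_le_one' ℝ)] at cont mono ⊢
    rw [mono.elim (fun h => cont.image_uIcc_of_monotoneOn h.monotoneOn)
      fun h => cont.image_uIcc_of_antitoneOn h.antitoneOn, h0, h1]
  rw [← Prod.image_mk_segment_left, segment_eq_uIcc, ← image_fst, image_image]
  exact image_congr fun t ht => f_eq ht

end Arc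

section Transport

/-- The homeomorphism `(x, y) ↦ (x + f y, y)` of the plane. -/
def shearX (f : C(ℝ, ℝ)) : Pt ≃ₜ Pt where
  toFun p := (p.1 + f p.2, p.2)
  invFun p := (p.1 - f p.2, p.2)
  left_inv p := by simp
  right_inv p := by simp
  continuous_toFun := by fun_prop
  continuous_invFun := by fun_prop

/-- The homeomorphism `(x, y) ↦ (x, y + f x)` of the plane. -/
def shearY (f : C(ℝ, ℝ)) : Pt ≃ₜ Pt where
  toFun p := (p.1, p.2 + f p.1)
  invFun p := (p.1, p.2 - f p.1)
  left_inv p := by simp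
  right_inv p := by simp
  continuous_toFun := by fun_prop
  continuous_invFun := by fun_prop

lemma exists_continuousMap_steps (y : ℕ → ℝ) (n : ℕ) :
    ∃ H : C(ℝ, ℝ), (∀ i ≤ n, ∀ x ∈ Icc (2 * i : ℝ) (2 * i + 1), H x = y i) ∧
      ∀ x ≥ 2 * (n : ℝ), H x = y n := by
  induction n with
  | zero => exact ⟨.const ℝ (y 0), by simp, by simp⟩
  | succ n ih =>
    obtain ⟨H, hH, hHn⟩ := ih
    refine ⟨⟨fun x => H x + (y (n + 1) - y n) * max 0 (min 1 (x - (2 * n + 1))), by fun_prop⟩,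
      fun i hi x hx => ?_, fun x hx => ?_⟩ <;>
      simp only [ContinuousMap.coe_mk]
    · rcases hi.lt_or_eq with hi | rfl
      · have : (i : ℝ) ≤ n := mod_cast Nat.le_of_lt_succ hi
        rw [hH i (Nat.le_of_lt_succ hi) x hx, max_eq_left (min_le_of_right_le (by linarith [hx.2])),
          mul_zero, add_zero]
      · have := hx.1
        push_cast at this
        rw [hHn x (by linarith), min_eq_left (by linarith)]
        simp
    · push_cast at hx
      rw [hHn x (by linarith), min_eq_left (by linarith)]
      simp

lemma exists_injective_snd_add_mul_fst {ι : Type*} [Finite ι] {q : ι → Pt}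
    (hq : Function.Injective q) :
    ∃ m : ℝ, Function.Injective fun i => (q i).2 + m * (q i).1 := by
  obtain ⟨m, hm⟩ := (finite_range fun z : ι × ι =>
    -((q z.1).2 - (q z.2).2) / ((q z.1).1 - (q z.2).1)).exists_notMem
  refine ⟨m, fun i j hij => hq ?_⟩
  have hij : (q i).2 + m * (q i).1 = (q j).2 + m * (q j).1 := hij
  by_cases hx : (q i).1 = (q j).1
  · exact Prod.ext hx (by simpa [hx] using hij)
  · refine (hm ⟨(i, j), ?_⟩).elim
    rw [div_eq_iff (sub_ne_zero.2 hx)]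
    linarith

/- The slope of `e` is chosen such that the parallels to `e` through the points `q j` are distinct.
Shearing makes them horizontal; they can then be shifted independently, first horizontally as lines
and then vertically, each on its own interval of abscissae. -/
lemma exists_homeomorph_apply_add_smul {s : Finset ℕ} {q : ℕ → Pt} (hq : InjOn q s) :
    ∃ e : Pt, e ≠ 0 ∧ ∃ h : Pt ≃ₜ Pt, ∀ j ∈ s, ∀ t ∈ Icc (0 : ℝ) 1,
      h (q j + t • e) = (2 * j + t, 0) := by
  obtain ⟨m, hm⟩ := exists_injective_snd_add_mul_fst hq.injective
  let y (j : ℕ) : ℝ := (q j).2 + m * (q j).1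
  let r (j : ℕ) : ℝ := 2 * j - (q j).1
  obtain ⟨H, hH, -⟩ := exists_continuousMap_steps y (s.sup id)
  let L := Lagrange.interpolate s y r
  have hL (j : ℕ) (hj : j ∈ s) : L.eval (y j) = r j :=
    Lagrange.eval_interpolate_at_node r (injOn_iff_injective.2 hm) hj
  refine ⟨(1, -m), by simp, (shearY ⟨fun x => m * x, by fun_prop⟩).trans
    ((shearX ⟨fun z => L.eval z, L.continuous⟩).trans (shearY (-H))), fun j hj t ht => ?_⟩
  have e₁ : shearY ⟨fun x => m * x, by fun_prop⟩ (q j + t • ((1, -m) : Pt)) =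
      ((q j).1 + t, y j) := by
    ext <;> simp [shearY, y]
    ring
  have e₂ : shearX ⟨fun z => L.eval z, L.continuous⟩ ((q j).1 + t, y j) = (2 * j + t, y j) := by
    ext <;> simp [shearX, hL j hj, r]
    ring
  have e₃ : shearY (-H) (2 * j + t, y j) = (2 * j + t, 0) := by
    have := hH j (Finset.le_sup (f := id) hj) (2 * j + t) ⟨by linarith [ht.1], by linarith [ht.2]⟩
    ext <;> simp [shearY, this]
  rw [Homeomorph.trans_apply, Homeomorph.trans_apply, e₁, e₂, e₃]

lemma exists_orderIso_eqOn_Iic (k : ℝ) {d : ℝ} (hd : 0 < d) :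
    ∃ ψ : ℝ ≃o ℝ, (∀ z ≤ k, ψ z = z) ∧ ψ (k + d) = k + 1 := by
  let ψ (z : ℝ) : ℝ := if z ≤ k then z else k + (z - k) / d
  have mono : StrictMono ψ := by
    intro a b hab
    have hdiv : (a - k) / d < (b - k) / d := by gcongr
    simp only [ψ]
    split_ifs with ha hb
    · exact hab
    · linarith [div_pos (sub_pos.2 (not_le.1 hb)) hd]
    · linarith
    · linarith
  have surj : Function.Surjective ψ := by
    intro z
    rcases le_or_gt z k with hz | hz
    · exact ⟨z, if_pos hz⟩
    · have : 0 < (z - k) * d := mul_pos (by linarith) hd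
      refine ⟨k + (z - k) * d, (if_neg (by linarith)).trans ?_⟩
      field_simp
      ring
  refine ⟨mono.orderIsoOfSurjective ψ surj, fun z hz => if_pos hz, (if_neg (by linarith)).trans ?_⟩
  rw [add_sub_cancel_left, div_self hd.ne']

lemma exists_orderIso_apply_eq_natCast {x : ℕ → ℝ} {m : ℕ}
    (hx : ∀ i, i + 1 < m → x i < x (i + 1)) : ∃ φ : ℝ ≃o ℝ, ∀ i < m, φ (x i) = i := by
  induction m with
  | zero => exact ⟨.refl ℝ, by simp⟩
  | succ m ih =>
    obtain ⟨φ, hφ⟩ := ih fun i hi => hx i (by omega)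
    cases m with
    | zero => exact ⟨.addRight (-x 0), by simp⟩
    | succ k =>
      have hk : φ (x k) = k := hφ k k.lt_succ_self
      have hlt : (k : ℝ) < φ (x (k + 1)) := hk ▸ φ.strictMono (hx k (by omega))
      obtain ⟨ψ, hψ, hψk⟩ := exists_orderIso_eqOn_Iic k (sub_pos.2 hlt)
      refine ⟨φ.trans ψ, fun i hi => ?_⟩
      rcases (Nat.le_of_lt_succ hi).lt_or_eq with hi | rfl
      · rw [OrderIso.trans_apply, hφ i hi, hψ]
        exact mod_cast Nat.le_of_lt_succ hi
      · rw [add_sub_cancel] at hψk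
        rw [OrderIso.trans_apply, hψk, Nat.cast_succ]

end Transport

section Chain

variable {E : Type*} [AddCommGroup E] [Module ℝ E]

/-- A sequence of points, some consecutive pairs of which are joined by broken lines that do not
meet each other, nor pass through a further point of the sequence, except at common ends. -/
structure PolygonalChain (E : Type*) [AddCommGroup E] [Module ℝ E] (m : ℕ) where
  point : ℕ → E
  joined : ℕ → Prop
  inner : ℕ → List E
  lt_of_joined : ∀ j, joined j → j + 1 < m
  injOn : InjOn point (Iio m)
  isSimplePolyline : ∀ j, joined j → IsSimplePolyline (point (j + 1) :: (inner j ++ [point j]))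
  eq_of_mem_of_mem : ∀ i j, joined i → joined j → i < j →
    ∀ x ∈ polyline (point (i + 1) :: (inner i ++ [point i])),
      x ∈ polyline (point (j + 1) :: (inner j ++ [point j])) → j = i + 1 ∧ x = point (i + 1)
  eq_or_eq_of_mem : ∀ j, joined j → ∀ k < m,
    point k ∈ polyline (point (j + 1) :: (inner j ++ [point j])) → k = j ∨ k = j + 1

namespace PolygonalChain

variable {m : ℕ} (c : PolygonalChain E m)

/-- The broken line from `point (j + 1)` to `point j`, if these are joined. -/
def edge (j : ℕ) : Set E := polyline (c.point (j + 1) :: (c.inner j ++ [c.point j]))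

open Classical in
/-- The first index of the maximal run of joined points that leads up to the index. -/
noncomputable def start : ℕ → ℕ
  | 0 => 0
  | j + 1 => if c.joined j then start j else j + 1

open Classical in
/-- The vertices, except the last one, of the broken line from `point j` back to the start of its
run. -/
noncomputable def runInit : ℕ → List E
  | 0 => []
  | j + 1 => if c.joined j then (c.point (j + 1) :: c.inner j) ++ runInit j else []

/-- The vertices of the broken line from `point j` back to the start of its run. -/
noncomputable def run (j : ℕ) : List E := c.runInit j ++ [c.point (c.start j)]

/-- The indices at which a run of joined points ends. -/
def runEnds (c : PolygonalChain E m) : Set ℕ := {j | j < m ∧ ¬c.joined j}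

variable {c} {i j : ℕ}

lemma start_succ_of_joined (hj : c.joined j) : c.start (j + 1) = c.start j := if_pos hj

lemma start_succ_of_not_joined (hj : ¬c.joined j) : c.start (j + 1) = j + 1 := if_neg hj

lemma start_le (j : ℕ) : c.start j ≤ j := by
  induction j with
  | zero => exact le_rfl
  | succ j ih =>
    rw [start]
    split_ifs <;> omega

lemma lt_start (hi : ¬c.joined i) (hij : i < j) : i < c.start j := by
  induction hij with
  | refl => exact i.lt_succ_self.trans_eq (start_succ_of_not_joined hi).symm
  | @step j hij ih =>
    by_cases hj : c.joined j
    · rwa [start_succ_of_joined hj]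
    · rw [start_succ_of_not_joined hj]
      exact Nat.lt_succ_of_le (Nat.le_of_lt hij)

lemma run_succ_of_joined (hj : c.joined j) :
    c.run (j + 1) = (c.point (j + 1) :: c.inner j) ++ c.run j := by
  rw [run, run, start_succ_of_joined hj, runInit, if_pos hj, List.append_assoc]

lemma run_succ_of_not_joined (hj : ¬c.joined j) : c.run (j + 1) = [c.point (j + 1)] := by
  rw [run, start_succ_of_not_joined hj, runInit, if_neg hj, List.nil_append]

lemma exists_run_eq_cons (j : ℕ) : ∃ l, c.run j = c.point j :: l := by
  cases j with
  | zero => exact ⟨[], rfl⟩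
  | succ j =>
    by_cases hj : c.joined j
    · exact ⟨_, run_succ_of_joined hj⟩
    · exact ⟨[], run_succ_of_not_joined hj⟩

lemma point_mem_run (j : ℕ) : c.point j ∈ polyline (c.run j) := by
  obtain ⟨l, hl⟩ := c.exists_run_eq_cons j
  exact mem_polyline_of_mem (by simp [hl])

lemma polyline_run_succ (hj : c.joined j) :
    polyline (c.run (j + 1)) = c.edge j ∪ polyline (c.run j) := by
  obtain ⟨l, hl⟩ := c.exists_run_eq_cons j
  rw [run_succ_of_joined hj, hl, polyline_append_cons]
  rfl

lemma eq_or_exists_of_mem_run {x : E} (hx : x ∈ polyline (c.run j)) :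
    x = c.point j ∨ ∃ i, c.start j ≤ i ∧ i < j ∧ c.joined i ∧ x ∈ c.edge i := by
  induction j with
  | zero => exact .inl hx
  | succ j ih =>
    by_cases hj : c.joined j
    · rw [start_succ_of_joined hj]
      rw [polyline_run_succ hj] at hx
      rcases hx with hx | hx
      · exact .inr ⟨j, start_le j, j.lt_succ_self, hj, hx⟩
      · rcases ih hx with rfl | ⟨i, hi, hij, hi'⟩
        · exact .inr ⟨j, start_le j, j.lt_succ_self, hj, mem_polyline_of_mem (by simp)⟩
        · exact .inr ⟨i, hi, hij.trans j.lt_succ_self, hi'⟩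
    · rw [run_succ_of_not_joined hj] at hx
      exact .inl hx

lemma isSimplePolyline_run (j : ℕ) : IsSimplePolyline (c.run j) := by
  induction j with
  | zero => trivial
  | succ j ih =>
    by_cases hj : c.joined j
    · obtain ⟨l, hl⟩ := c.exists_run_eq_cons j
      rw [run_succ_of_joined hj, hl]
      refine .append (c.isSimplePolyline j hj) (hl ▸ ih) ?_
      rintro x ⟨hx, hx'⟩
      rw [← hl] at hx'
      rcases eq_or_exists_of_mem_run hx' with rfl | ⟨i, -, hij, hi, hxi⟩
      · rfl
      · obtain ⟨rfl, rfl⟩ := c.eq_of_mem_of_mem i j hi hj hij x hxi hx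
        rfl
    · rw [run_succ_of_not_joined hj]
      trivial

lemma disjoint_run (hi : i ∈ c.runEnds) (hj : j ∈ c.runEnds) (hij : i < j) :
    Disjoint (polyline (c.run i)) (polyline (c.run j)) := by
  have hij' : i < c.start j := lt_start hi.2 hij
  refine disjoint_left.2 fun x hxi hxj => ?_
  rcases eq_or_exists_of_mem_run hxi with rfl | ⟨a, -, hai, ha, hxa⟩ <;>
    rcases eq_or_exists_of_mem_run hxj with h | ⟨b, hjb, -, hb, hxb⟩
  · exact hij.ne (c.injOn hi.1 hj.1 h)
  · have := c.eq_or_eq_of_mem b hb i hi.1 hxb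
    omega
  · have := c.eq_or_eq_of_mem a ha j hj.1 (h ▸ hxa)
    omega
  · have := (c.eq_of_mem_of_mem a b ha hb (by omega) x hxa hxb).1
    omega

lemma pairwise_disjoint_run :
    Pairwise (Function.onFun Disjoint fun j : c.runEnds => polyline (c.run j)) := by
  have : Std.Symm (Function.onFun Disjoint fun j : c.runEnds => polyline (c.run j)) :=
    ⟨fun _ _ h => h.symm⟩
  exact pairwise_iff_lt.2 fun i j hij => disjoint_run i.2 j.2 hij

lemma exists_mem_runEnds {i : ℕ} (hi : i < m) : ∃ j ∈ c.runEnds, i ≤ j ∧ c.start j = c.start i ∧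
    polyline (c.run i) ⊆ polyline (c.run j) := by
  by_cases hc : c.joined i
  · obtain ⟨j, hj, hij, hstart, hsub⟩ := exists_mem_runEnds (c.lt_of_joined i hc)
    refine ⟨j, hj, by omega, hstart.trans (start_succ_of_joined hc), subset_trans ?_ hsub⟩
    rw [polyline_run_succ hc]
    exact subset_union_right
  · exact ⟨i, ⟨hi, hc⟩, le_rfl, rfl, subset_rfl⟩
termination_by m - i

end PolygonalChain

end Chain

section NormaliseChain

lemma one_lt_rank_pt : 1 < Module.rank ℝ Pt := by
  simp only [rank_prod', Module.rank_self]
  norm_num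

namespace PolygonalChain

variable {m : ℕ} (c : PolygonalChain Pt m)

/-- The homeomorphism `h` maps the broken line leading up to the end `j` of a run into
`[2 * j, 2 * j + 1] × {0}`, with its start at `(2 * j, 0)`. -/
def IsNormalising (c : PolygonalChain Pt m) (h : Pt ≃ₜ Pt) : Prop :=
  ∀ j ∈ c.runEnds, h (c.point (c.start j)) = (2 * (j : ℝ), 0) ∧
    ∀ x ∈ polyline (c.run j), (h x).2 = 0 ∧ (h x).1 ∈ Icc (2 * j : ℝ) (2 * j + 1)

lemma exists_isNormalising : ∃ h, c.IsNormalising h := by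
  have hfin : c.runEnds.Finite := (finite_Iio m).subset fun j hj => hj.1
  have := hfin.to_subtype
  have start_mem (j : ℕ) : c.point (c.start j) ∈ polyline (c.run j) :=
    mem_polyline_of_mem (List.mem_append_right _ (List.mem_singleton_self _))
  have injOn_start : InjOn (fun j => c.point (c.start j)) hfin.toFinset := by
    intro i hi j hj hij
    rw [Finite.coe_toFinset] at hi hj
    by_contra hne
    exact disjoint_left.1 (c.pairwise_disjoint_run (i := ⟨i, hi⟩) (j := ⟨j, hj⟩) (by simpa))
      (start_mem i) (by simpa [hij] using start_mem j)
  obtain ⟨e, he, g, hg⟩ := exists_homeomorph_apply_add_smul injOn_start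
  obtain ⟨f, hf⟩ := exists_homeomorph_mapsTo_segment (E := Pt) one_lt_rank_pt he
    (fun j : c.runEnds => c.isSimplePolyline_run j) c.pairwise_disjoint_run
  refine ⟨f.trans g, fun j hj => ?_⟩
  obtain ⟨hstart, hrun⟩ := hf ⟨j, hj⟩
  have hgj := hg j (hfin.mem_toFinset.2 hj)
  refine ⟨?_, fun x hx => ?_⟩
  · rw [Homeomorph.trans_apply, hstart]
    simpa using hgj 0 (by simp)
  · have := hrun hx
    rw [segment_eq_image'] at this
    obtain ⟨t, ht, hft⟩ := this
    rw [Homeomorph.trans_apply, ← hft, add_sub_cancel_left, hgj t ht]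
    simpa using ht

variable {c} {h : Pt ≃ₜ Pt} {i j : ℕ}

lemma IsNormalising.snd_eq_zero (hh : c.IsNormalising h) (hi : i < m) {x : Pt}
    (hx : x ∈ polyline (c.run i)) : (h x).2 = 0 := by
  obtain ⟨j, hj, -, -, hsub⟩ := c.exists_mem_runEnds hi
  exact ((hh j hj).2 x (hsub hx)).1

lemma IsNormalising.snd_eq_zero_of_mem_edge (hh : c.IsNormalising h) (hi : c.joined i) {x : Pt}
    (hx : x ∈ c.edge i) : (h x).2 = 0 := by
  refine hh.snd_eq_zero (c.lt_of_joined i hi) ?_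
  rw [polyline_run_succ hi]
  exact .inl hx

lemma IsNormalising.apply_point (hh : c.IsNormalising h) (hi : i < m) :
    h (c.point i) = ((h (c.point i)).1, 0) :=
  Prod.ext rfl (hh.snd_eq_zero hi (point_mem_run i))

lemma IsNormalising.image_edge (hh : c.IsNormalising h) (hi : c.joined i) :
    h '' c.edge i = (·, 0) '' uIcc (h (c.point (i + 1))).1 (h (c.point i)).1 := by
  have arc := (isArcBetween_polyline (c.isSimplePolyline i hi)).image_homeomorph h
  have hi' := c.lt_of_joined i hi
  rw [hh.apply_point hi', hh.apply_point (Nat.lt_of_succ_lt hi')] at arc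
  rw [← segment_eq_uIcc, Prod.image_mk_segment_left]
  refine arc.eq_segment_of_axis ?_
  rintro _ ⟨x, hx, rfl⟩
  exact hh.snd_eq_zero_of_mem_edge hi hx

lemma IsNormalising.fst_ne_fst_succ (hh : c.IsNormalising h) (hi : i + 1 < m) :
    (h (c.point i)).1 ≠ (h (c.point (i + 1))).1 := by
  intro heq
  have hi' : i < m := Nat.lt_of_succ_lt hi
  have : h (c.point i) = h (c.point (i + 1)) := by
    rw [hh.apply_point hi', hh.apply_point hi, heq]
  exact i.lt_succ_self.ne (c.injOn hi' hi (h.injective this))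

lemma IsNormalising.fst_lt_fst_succ_of_lt (hh : c.IsNormalising h) (hi : c.joined i)
    (hi' : c.joined (i + 1)) (hlt : (h (c.point i)).1 < (h (c.point (i + 1))).1) :
    (h (c.point (i + 1))).1 < (h (c.point (i + 1 + 1))).1 := by
  by_contra! hle
  have hlt' := hle.lt_of_ne (hh.fst_ne_fst_succ (c.lt_of_joined _ hi')).symm
  let z := max (h (c.point i)).1 (h (c.point (i + 1 + 1))).1
  have hz : z < (h (c.point (i + 1))).1 := max_lt hlt hlt'
  obtain ⟨p, hp, hpz⟩ : ((z, 0) : Pt) ∈ h '' c.edge i := by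
    rw [hh.image_edge hi, uIcc_of_ge hlt.le]
    exact ⟨z, ⟨le_max_left _ _, hz.le⟩, rfl⟩
  obtain ⟨p', hp', hpz'⟩ : ((z, 0) : Pt) ∈ h '' c.edge (i + 1) := by
    rw [hh.image_edge hi', uIcc_of_le hlt'.le]
    exact ⟨z, ⟨le_max_right _ _, hz.le⟩, rfl⟩
  obtain rfl : p' = p := h.injective (hpz'.trans hpz.symm)
  obtain ⟨-, rfl⟩ := c.eq_of_mem_of_mem i (i + 1) hi hi' i.lt_succ_self p' hp hp'
  exact hz.ne' (congrArg Prod.fst hpz)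

lemma IsNormalising.fst_lt_fst_succ_of_not_joined (hh : c.IsNormalising h) (hc : ¬c.joined i)
    (hi : i + 1 < m) : (h (c.point i)).1 < (h (c.point (i + 1))).1 := by
  obtain ⟨j, hj, hij, -, hsub⟩ := c.exists_mem_runEnds hi
  have le_succ := ((hh j hj).2 _ (hsub (point_mem_run (i + 1)))).2.1
  have le := ((hh i ⟨Nat.lt_of_succ_lt hi, hc⟩).2 _ (point_mem_run i)).2.2
  have : (i + 1 : ℝ) ≤ j := mod_cast hij
  linarith

lemma IsNormalising.fst_lt_fst_succ_of_start_eq (hh : c.IsNormalising h) (hc : c.joined i)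
    (h_eq : c.start i = i) : (h (c.point i)).1 < (h (c.point (i + 1))).1 := by
  have hi := c.lt_of_joined i hc
  obtain ⟨j, hj, -, hstart, hsub⟩ := c.exists_mem_runEnds hi
  rw [start_succ_of_joined hc] at hstart
  refine lt_of_le_of_ne ?_ (hh.fst_ne_fst_succ hi)
  rw [← h_eq, ← hstart, (hh j hj).1, hstart, h_eq]
  exact ((hh j hj).2 _ (hsub (point_mem_run (i + 1)))).2.1

/- Within a run the abscissae are monotone, as the images of consecutive edges are segments of the
axis with only one common point. -/
lemma IsNormalising.fst_lt_fst_succ (hh : c.IsNormalising h) (hi : i + 1 < m) :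
    (h (c.point i)).1 < (h (c.point (i + 1))).1 := by
  induction i with
  | zero =>
    by_cases hc : c.joined 0
    · exact hh.fst_lt_fst_succ_of_start_eq hc rfl
    · exact hh.fst_lt_fst_succ_of_not_joined hc hi
  | succ k ih =>
    by_cases hc : c.joined (k + 1)
    · by_cases hk : c.joined k
      · exact hh.fst_lt_fst_succ_of_lt hk hc (ih (Nat.lt_of_succ_lt hi))
      · exact hh.fst_lt_fst_succ_of_start_eq hc (start_succ_of_not_joined hk)
    · exact hh.fst_lt_fst_succ_of_not_joined hc hi

lemma exists_homeomorph_apply_point (c : PolygonalChain Pt m) : ∃ h : Pt ≃ₜ Pt,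
    (∀ j < m, h (c.point j) = ((j : ℝ), 0)) ∧
      ∀ j, c.joined j → h '' c.edge j = segment ℝ ((j : ℝ), 0) ((j : ℝ) + 1, 0) := by
  obtain ⟨h, hh⟩ := c.exists_isNormalising
  obtain ⟨φ, hφ⟩ := exists_orderIso_apply_eq_natCast fun i hi => hh.fst_lt_fst_succ (i := i) hi
  let ψ : Pt ≃ₜ Pt := φ.toHomeomorph.prodCongr (.refl ℝ)
  have point_eq (j) (hj : j < m) : (h.trans ψ) (c.point j) = ((j : ℝ), 0) := by
    rw [Homeomorph.trans_apply, hh.apply_point hj, ← hφ j hj]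
    rfl
  refine ⟨h.trans ψ, point_eq, fun j hj => ?_⟩
  have arc := (isArcBetween_polyline (c.isSimplePolyline j hj)).image_homeomorph (h.trans ψ)
  have hjm := c.lt_of_joined j hj
  rw [point_eq j (by omega), point_eq (j + 1) hjm] at arc
  rw [segment_symm, ← Nat.cast_succ]
  refine arc.eq_segment_of_axis ?_
  rintro _ ⟨x, hx, rfl⟩
  exact hh.snd_eq_zero_of_mem_edge hj hx

end PolygonalChain

end NormaliseChain

section Lattice

/-- The integer point `z` as a point of the plane. -/
def toPlane (z : ℤ × ℤ) : Pt := (z.1, z.2)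

/-- The point with rounded down coordinates. -/
noncomputable def floorPt (x : Pt) : ℤ × ℤ := (⌊x.1⌋, ⌊x.2⌋)

/-- The point with rounded up coordinates. -/
noncomputable def ceilPt (x : Pt) : ℤ × ℤ := (⌈x.1⌉, ⌈x.2⌉)

lemma dist_toPlane (p q : ℤ × ℤ) : dist (toPlane p) (toPlane q) = dist p q := by
  simp only [toPlane, Prod.dist_eq, Int.dist_cast_real]

lemma toPlane_injective : Function.Injective toPlane := fun p q h => by
  rw [← dist_eq_zero, ← dist_toPlane, h, dist_self]

lemma exists_natCast_eq_dist (p q : ℤ × ℤ) : ∃ n : ℕ, dist p q = n :=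
  ⟨max (p.1 - q.1).natAbs (p.2 - q.2).natAbs, by
    simp [Prod.dist_eq, Int.dist_eq, Nat.cast_natAbs]⟩

lemma add_one_le_dist_of_lt {p q : ℤ × ℤ} {R : ℕ} (h : R < dist p q) : (R : ℝ) + 1 ≤ dist p q := by
  obtain ⟨n, hn⟩ := exists_natCast_eq_dist p q
  rw [hn] at h ⊢
  exact_mod_cast h

lemma dist_eq_one_of_adj {p q : ℤ × ℤ} (h : gridGraph.Adj p q) : dist p q = 1 := by
  rw [gridGraph_adj] at h
  rw [Prod.dist_eq, Int.dist_eq, Int.dist_eq]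
  rcases h with ⟨h | h, h'⟩ | ⟨h | h, h'⟩ <;> simp [← h, h']

lemma dist_toPlane_floorPt_le (x : Pt) : dist (toPlane (floorPt x)) x ≤ 1 := by
  have round (t : ℝ) : dist (⌊t⌋ : ℝ) t ≤ 1 := by
    rw [Real.dist_eq, abs_le]
    constructor <;> linarith [Int.floor_le t, Int.lt_floor_add_one t]
  exact max_le (round x.1) (round x.2)

lemma toPlane_floorPt_eq_of_floorPt_eq_ceilPt {x : Pt} (h : floorPt x = ceilPt x) :
    toPlane (floorPt x) = x := by
  have round {t : ℝ} (ht : ⌊t⌋ = ⌈t⌉) : (⌊t⌋ : ℝ) = t :=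
    (Int.floor_le t).antisymm (ht ▸ Int.le_ceil t)
  exact Prod.ext (round (congrArg Prod.fst h)) (round (congrArg Prod.snd h))

section AdjSegment

variable {p q : ℤ × ℤ} {x : Pt}

lemma round_eq_or_eq_of_mem_segment {f : ℝ → ℤ} (hf : Monotone f) (hint : ∀ k : ℤ, f k = k)
    (h : gridGraph.Adj p q) (hx : x ∈ segment ℝ (toPlane p) (toPlane q)) :
    (f x.1, f x.2) = p ∨ (f x.1, f x.2) = q := by
  have round {k : ℤ} {t : ℝ} (ht : t ∈ segment ℝ (k : ℝ) ((k + 1 : ℤ) : ℝ)) :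
      f t = k ∨ f t = k + 1 := by
    rw [segment_eq_Icc (by simp)] at ht
    have hk := hf ht.1
    have hk' := hf ht.2
    rw [hint] at hk hk'
    omega
  wlog hpq : (p.1 + 1 = q.1 ∧ p.2 = q.2) ∨ (p.2 + 1 = q.2 ∧ p.1 = q.1) generalizing p q
  · refine (this h.symm (segment_symm ℝ (toPlane p) _ ▸ hx) ?_).symm
    rw [gridGraph_adj] at h
    tauto
  obtain ⟨a, b⟩ := p
  obtain ⟨c, d⟩ := q
  rcases hpq with ⟨rfl, rfl⟩ | ⟨rfl, rfl⟩
  · rw [toPlane, toPlane, ← Prod.image_mk_segment_left] at hx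
    obtain ⟨t, ht, rfl⟩ := hx
    simpa [hint] using round ht
  · rw [toPlane, toPlane, ← Prod.image_mk_segment_right] at hx
    obtain ⟨t, ht, rfl⟩ := hx
    simpa [hint] using round ht

lemma floorPt_eq_or_eq_of_mem_segment (h : gridGraph.Adj p q)
    (hx : x ∈ segment ℝ (toPlane p) (toPlane q)) : floorPt x = p ∨ floorPt x = q :=
  round_eq_or_eq_of_mem_segment Int.floor_mono Int.floor_intCast h hx

lemma ceilPt_eq_or_eq_of_mem_segment (h : gridGraph.Adj p q)
    (hx : x ∈ segment ℝ (toPlane p) (toPlane q)) : ceilPt x = p ∨ ceilPt x = q :=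
  round_eq_or_eq_of_mem_segment Int.ceil_mono Int.ceil_intCast h hx

lemma eq_left_of_mem_segment_of_dist_le {c : ℤ × ℤ} {R : ℕ} (h : gridGraph.Adj p q)
    (hx : x ∈ segment ℝ (toPlane p) (toPlane q)) (hq : R < dist q c)
    (hxc : dist x (toPlane c) ≤ R) : x = toPlane p := by
  have hsum := dist_add_dist_of_mem_segment hx
  have htri := dist_triangle_left (toPlane q) (toPlane c) x
  rw [dist_toPlane, dist_eq_one_of_adj h] at hsum
  rw [dist_toPlane] at htri
  have := add_one_le_dist_of_lt hq
  exact (dist_le_zero.1 (by linarith)).symm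

lemma eq_or_eq_of_mem_segment_of_dist_le {c : ℤ × ℤ} {R : ℕ} (h : gridGraph.Adj p q)
    (hx : x ∈ segment ℝ (toPlane p) (toPlane q)) (hpq : R < dist p c ∨ R < dist q c)
    (hxc : dist x (toPlane c) ≤ R) : x = toPlane p ∨ x = toPlane q :=
  hpq.symm.imp (fun hq => eq_left_of_mem_segment_of_dist_le h hx hq hxc) fun hp =>
    eq_left_of_mem_segment_of_dist_le h.symm (segment_symm ℝ (toPlane p) _ ▸ hx) hp hxc

end AdjSegment

section GridWalk

open SimpleGraph

variable {p q : ℤ × ℤ} {w : gridGraph.Walk p q} {x : Pt}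

/-- The broken line in the plane traced by a walk in the grid. -/
def gridCurve (w : gridGraph.Walk p q) : Set Pt := polyline (w.support.map toPlane)

lemma gridCurve_cons {r : ℤ × ℤ} (h : gridGraph.Adj r p) (w : gridGraph.Walk p q) :
    gridCurve (w.cons h) = segment ℝ (toPlane r) (toPlane p) ∪ gridCurve w := by
  cases w <;> rfl

lemma eq_toPlane_or_exists_of_mem_gridCurve (hx : x ∈ gridCurve w) :
    x = toPlane p ∨ ∃ u v, s(u, v) ∈ w.edges ∧ x ∈ segment ℝ (toPlane u) (toPlane v) := by
  induction w with
  | nil => exact Or.inl hx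
  | cons h w ih =>
    rw [gridCurve_cons] at hx
    rcases hx with hx | hx
    · exact Or.inr ⟨_, _, by simp, hx⟩
    · rcases ih hx with rfl | ⟨u, v, huv, hx⟩
      · exact Or.inr ⟨_, _, List.mem_cons_self, right_mem_segment ℝ _ _⟩
      · exact Or.inr ⟨u, v, by simp [huv], hx⟩

lemma floorPt_toPlane (z : ℤ × ℤ) : floorPt (toPlane z) = z := by simp [floorPt, toPlane]

lemma ceilPt_toPlane (z : ℤ × ℤ) : ceilPt (toPlane z) = z := by simp [ceilPt, toPlane]

lemma floorPt_mem_support_of_mem_gridCurve (hx : x ∈ gridCurve w) : floorPt x ∈ w.support := by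
  rcases eq_toPlane_or_exists_of_mem_gridCurve hx with rfl | ⟨u, v, huv, hx⟩
  · simp [floorPt_toPlane]
  · rcases floorPt_eq_or_eq_of_mem_segment (w.adj_of_mem_edges huv) hx with h | h <;> rw [h]
    exacts [w.fst_mem_support_of_mem_edges huv, w.snd_mem_support_of_mem_edges huv]

lemma ceilPt_mem_support_of_mem_gridCurve (hx : x ∈ gridCurve w) : ceilPt x ∈ w.support := by
  rcases eq_toPlane_or_exists_of_mem_gridCurve hx with rfl | ⟨u, v, huv, hx⟩
  · simp [ceilPt_toPlane]
  · rcases ceilPt_eq_or_eq_of_mem_segment (w.adj_of_mem_edges huv) hx with h | h <;> rw [h]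
    exacts [w.fst_mem_support_of_mem_edges huv, w.snd_mem_support_of_mem_edges huv]

lemma isSimplePolyline_of_isPath (hw : w.IsPath) :
    IsSimplePolyline (w.support.map toPlane) := by
  induction w with
  | nil => trivial
  | @cons p r q h w ih =>
    rw [Walk.cons_isPath_iff] at hw
    have hp : ∀ z ∈ w.support, z = p ∨ z = r → z = r := by grind
    suffices hmeet : segment ℝ (toPlane p) (toPlane r) ∩ gridCurve w ⊆ {toPlane r} by
      rw [Walk.support_cons, List.map_cons]
      cases w <;> exact ⟨toPlane_injective.ne h.ne, hmeet, ih hw.1⟩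
    rintro x ⟨hx, hxw⟩
    have hfloor := hp _ (floorPt_mem_support_of_mem_gridCurve hxw)
      (floorPt_eq_or_eq_of_mem_segment h hx)
    have hceil := hp _ (ceilPt_mem_support_of_mem_gridCurve hxw)
      (ceilPt_eq_or_eq_of_mem_segment h hx)
    rw [mem_singleton_iff, ← hfloor,
      toPlane_floorPt_eq_of_floorPt_eq_ceilPt (hfloor.trans hceil.symm)]

lemma exists_mem_support_of_mem_gridCurve_of_dist_le {c : ℤ × ℤ} {R : ℕ} (hx : x ∈ gridCurve w)
    (hxc : dist x (toPlane c) ≤ R)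
    (hw : ∀ u v, s(u, v) ∈ w.edges → R < dist u c ∨ R < dist v c) :
    ∃ z ∈ w.support, x = toPlane z := by
  rcases eq_toPlane_or_exists_of_mem_gridCurve hx with rfl | ⟨u, v, huv, hx⟩
  · exact ⟨p, w.start_mem_support, rfl⟩
  · rcases eq_or_eq_of_mem_segment_of_dist_le (w.adj_of_mem_edges huv) hx (hw u v huv) hxc with
      h | h
    · exact ⟨u, w.fst_mem_support_of_mem_edges huv, h⟩
    · exact ⟨v, w.snd_mem_support_of_mem_edges huv, h⟩

end GridWalk

lemma eq_or_eq_of_mem_segment_of_dist_eq {E : Type*} [NormedAddCommGroup E] [NormedSpace ℝ E]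
    {a a' c x : E} (ha : dist a c = dist a' c) (hx : x ∈ segment ℝ c a)
    (hx' : x ∈ segment ℝ c a') : x = c ∨ a = a' := by
  rw [segment_eq_image_lineMap] at hx hx'
  obtain ⟨s, hs, rfl⟩ := hx
  obtain ⟨t, ht, hst⟩ := hx'
  have hdist := congrArg (dist · c) hst
  simp only [dist_lineMap_left, Real.norm_of_nonneg hs.1, Real.norm_of_nonneg ht.1,
    dist_comm c, ha] at hdist
  rcases mul_eq_mul_right_iff.1 hdist with rfl | h
  · rcases eq_or_ne t 0 with rfl | ht₀
    · simp
    · right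
      simpa [AffineMap.lineMap_apply, ht₀] using hst.symm
  · left
    simp [dist_eq_zero.1 (ha.trans h)]

end Lattice

section BoxDrawing

open SimpleGraph

lemma exists_walk_dist_le (z c : ℤ × ℤ) :
    ∃ w : gridGraph.Walk z c, ∀ x ∈ w.support, dist x c ≤ dist z c := by
  have step (z : ℤ × ℤ) (h : z ≠ c) : ∃ z', gridGraph.Adj z z' ∧ dist z' c ≤ dist z c ∧
      (z'.1 - c.1).natAbs + (z'.2 - c.2).natAbs < (z.1 - c.1).natAbs + (z.2 - c.2).natAbs := by
    obtain ⟨a, b⟩ := z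
    obtain ⟨a₀, b₀⟩ := c
    simp only [gridGraph_adj, Prod.dist_eq, Int.dist_eq, Prod.exists]
    norm_cast
    rw [Ne, Prod.mk_inj, not_and_or] at h
    rcases h with h | h <;> rcases lt_or_gt_of_ne h with h | h
    exacts [⟨a + 1, b, by grind⟩, ⟨a - 1, b, by grind⟩, ⟨a, b + 1, by grind⟩, ⟨a, b - 1, by grind⟩]
  induction hn : (z.1 - c.1).natAbs + (z.2 - c.2).natAbs using Nat.strong_induction_on
    generalizing z with
  | _ n ih =>
    rcases eq_or_ne z c with rfl | hz
    · exact ⟨.nil, by simp⟩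
    · obtain ⟨z', hadj, hdist, hlt⟩ := step z hz
      obtain ⟨w, hw⟩ := ih _ (hn ▸ hlt) z' rfl
      refine ⟨w.cons hadj, fun x hx => ?_⟩
      rcases List.mem_cons.1 hx with rfl | hx
      exacts [le_rfl, (hw x hx).trans hdist]

/-- A drawing in the integer grid of the multigraph whose edge `e` joins `src e` to `tgt e`: every
vertex is a square box, and every edge is a grid path from the boundary of one box to the boundary
of another which meets the boxes only in its ends and avoids the other paths. -/
structure BoxDrawing {E V : Type*} (src tgt : E → V) where
  radius : ℕ
  radius_pos : 0 < radius
  center : V → ℤ × ℤ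
  lt_dist_center : ∀ u v, u ≠ v → 2 * radius < dist (center u) (center v)
  first : E → ℤ × ℤ
  last : E → ℤ × ℤ
  path : ∀ e, gridGraph.Walk (first e) (last e)
  isPath : ∀ e, (path e).IsPath
  dist_first : ∀ e, dist (first e) (center (src e)) = radius
  dist_last : ∀ e, dist (last e) (center (tgt e)) = radius
  eq_of_mem_box : ∀ e, ∀ z ∈ (path e).support, ∀ v, dist z (center v) ≤ radius →
    v = src e ∧ z = first e ∨ v = tgt e ∧ z = last e
  disjoint : ∀ e e', e ≠ e' → ∀ z ∈ (path e).support, z ∉ (path e').support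

namespace BoxDrawing

variable {E V : Type*} {src tgt : E → V} (D : BoxDrawing src tgt)

/-- The path of the edge `e` has its end `z` on the box of the vertex `v`. -/
def IsPort (e : E) (v : V) (z : ℤ × ℤ) : Prop :=
  v = src e ∧ z = D.first e ∨ v = tgt e ∧ z = D.last e

variable {D}

lemma IsPort.mem_support {e : E} {v : V} {z : ℤ × ℤ} (h : D.IsPort e v z) :
    z ∈ (D.path e).support := by
  rcases h with ⟨-, rfl⟩ | ⟨-, rfl⟩
  exacts [(D.path e).start_mem_support, (D.path e).end_mem_support]

lemma IsPort.dist_eq {e : E} {v : V} {z : ℤ × ℤ} (h : D.IsPort e v z) :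
    dist z (D.center v) = D.radius := by
  rcases h with ⟨rfl, rfl⟩ | ⟨rfl, rfl⟩
  exacts [D.dist_first e, D.dist_last e]

lemma IsPort.center_ne {e : E} {v : V} {z : ℤ × ℤ} (h : D.IsPort e v z) :
    toPlane (D.center v) ≠ toPlane z := fun hz => by
  have := h.dist_eq
  rw [toPlane_injective hz, _root_.dist_self] at this
  exact D.radius_pos.ne (by exact_mod_cast this)

lemma IsPort.dist_le_of_mem_segment {e : E} {v : V} {z : ℤ × ℤ} (h : D.IsPort e v z) {x : Pt}
    (hx : x ∈ segment ℝ (toPlane (D.center v)) (toPlane z)) :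
    dist x (toPlane (D.center v)) ≤ D.radius := by
  refine (convex_closedBall _ _).segment_subset (Metric.mem_closedBall_self ?_) ?_ hx
  · positivity
  · rw [Metric.mem_closedBall, dist_toPlane, h.dist_eq]

variable (D)

lemma vertex_eq_of_dist_le {x : Pt} {u v : V} (hu : dist x (toPlane (D.center u)) ≤ D.radius)
    (hv : dist x (toPlane (D.center v)) ≤ D.radius) : u = v := by
  by_contra huv
  have := dist_triangle_left (toPlane (D.center u)) (toPlane (D.center v)) x
  rw [dist_toPlane] at this
  linarith [D.lt_dist_center u v huv]

lemma center_injective : Function.Injective D.center := fun u v huv =>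
  D.vertex_eq_of_dist_le (x := toPlane (D.center u)) (by rw [_root_.dist_self]; positivity)
    (by rw [huv, _root_.dist_self]; positivity)

section Branch

/-- The box of `v` together with the paths leaving it, deprived of their last points. -/
def branch (v : V) : Set (ℤ × ℤ) :=
  Metric.closedBall (D.center v) D.radius ∪
    {z | ∃ e, src e = v ∧ z ∈ (D.path e).support ∧ z ≠ D.last e}

lemma finite_branch [Finite E] (v : V) : (D.branch v).Finite := by
  refine (isCompact_closedBall _ _).finite_of_discrete.union ?_
  refine (finite_iUnion fun e => (D.path e).support.finite_toSet).subset ?_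
  rintro z ⟨e, -, hz, -⟩
  exact mem_iUnion.2 ⟨e, hz⟩

lemma eq_of_mem_branch_of_dist_le {u v : V} {z : ℤ × ℤ} (hz : z ∈ D.branch v)
    (hu : dist z (D.center u) ≤ D.radius) : u = v := by
  rcases hz with hz | ⟨e, rfl, hz, hlast⟩
  · rw [Metric.mem_closedBall] at hz
    rw [← dist_toPlane] at hu hz
    exact D.vertex_eq_of_dist_le hu hz
  · exact ((D.eq_of_mem_box e z hz u hu).resolve_right fun h => hlast h.2).1

lemma disjoint_branch {u v : V} (huv : u ≠ v) : Disjoint (D.branch u) (D.branch v) := by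
  refine disjoint_left.2 fun z hzu hzv => huv ?_
  rcases hzu with hz | ⟨e, rfl, hz, hlast⟩
  · exact D.eq_of_mem_branch_of_dist_le hzv hz
  rcases hzv with hz' | ⟨e', rfl, hz', -⟩
  · exact (D.eq_of_mem_branch_of_dist_le (Or.inr ⟨e, rfl, hz, hlast⟩) hz').symm
  · by_contra h
    exact D.disjoint e e' (ne_of_apply_ne src h) z hz hz'

lemma connected_branch (v : V) : (gridGraph.induce (D.branch v)).Connected := by
  refine induce_connected_of_patches (D.center v) (Or.inl (by simp)) fun {z} hz => ?_
  suffices h : ∃ w : gridGraph.Walk z (D.center v), ∀ x ∈ w.support, x ∈ D.branch v by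
    obtain ⟨w, hw⟩ := h
    exact ⟨_, Subset.rfl, _, hz, (w.induce _ hw).reachable.symm⟩
  have of_box {z : ℤ × ℤ} (hz : z ∈ Metric.closedBall (D.center v) D.radius) :
      ∃ w : gridGraph.Walk z (D.center v), ∀ x ∈ w.support, x ∈ D.branch v := by
    obtain ⟨w, hw⟩ := exists_walk_dist_le z (D.center v)
    exact ⟨w, fun x hx => Or.inl ((hw x hx).trans hz)⟩
  rcases hz with hz | ⟨e, rfl, hz, hlast⟩
  · exact of_box hz
  · obtain ⟨w, hw⟩ := of_box (Metric.mem_closedBall.2 (D.dist_first e).le)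
    refine ⟨((D.path e).takeUntil z hz).reverse.append w, fun x hx => ?_⟩
    rcases (Walk.mem_support_append_iff _ _).1 hx with hx | hx
    · rw [Walk.support_reverse, List.mem_reverse] at hx
      refine Or.inr ⟨e, rfl, (D.path e).support_takeUntil_subset_support hz hx, ?_⟩
      rintro rfl
      exact Walk.endpoint_notMem_support_takeUntil (D.isPath e) hz hlast.symm hx
    · exact hw x hx

variable (hne : ∀ e, src e ≠ tgt e)
include hne

lemma exists_adj_branch (e : E) :
    ∃ p ∈ D.branch (src e), ∃ q ∈ D.branch (tgt e), gridGraph.Adj p q := by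
  have hnil : ¬(D.path e).Nil := fun h => hne e <| D.vertex_eq_of_dist_le
    (by rw [dist_toPlane, D.dist_first]) (by rw [h.eq, dist_toPlane, D.dist_last])
  have hadj := (D.path e).adj_penultimate hnil
  exact ⟨_, Or.inr ⟨e, rfl, (D.path e).getVert_mem_support _, hadj.ne⟩, _,
    Or.inl (D.dist_last e).le, hadj⟩

end Branch

section Arc

/-- The broken line representing `e`: its path, extended to the centers of the boxes of its ends. -/
noncomputable def vertices (e : E) : List Pt :=
  toPlane (D.center (src e)) :: ((D.path e).support.map toPlane ++ [toPlane (D.center (tgt e))])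

lemma polyline_vertices (e : E) : polyline (D.vertices e) = gridCurve (D.path e) ∪
    ⋃ (v) (z) (_ : D.IsPort e v z), segment ℝ (toPlane (D.center v)) (toPlane z) := by
  rw [vertices, polyline_cons _ (by simp), polyline_concat (by simp), gridCurve]
  ext x
  simp only [ne_eq, List.map_eq_nil_iff, Walk.support_ne_nil, not_false_eq_true,
    List.head_append_of_ne_nil, List.head_map, Walk.head_support, List.getLast_map,
    Walk.getLast_support, segment_symm ℝ (toPlane (D.last e)), mem_union, IsPort, mem_iUnion,
    exists_prop, or_and_right, exists_or, ↓existsAndEq, and_true, true_and]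
  tauto

variable (hne : ∀ e, src e ≠ tgt e)
include hne

variable {D} in
lemma IsPort.unique {e : E} {v : V} {z z' : ℤ × ℤ} (h : D.IsPort e v z) (h' : D.IsPort e v z') :
    z = z' := by
  grind [IsPort]

lemma exists_isPort_of_mem_gridCurve {e : E} {v : V} {x : Pt} (hx : x ∈ gridCurve (D.path e))
    (hv : dist x (toPlane (D.center v)) ≤ D.radius) : ∃ z, D.IsPort e v z ∧ x = toPlane z := by
  obtain ⟨z, hz, rfl⟩ := exists_mem_support_of_mem_gridCurve_of_dist_le hx hv fun p q hpq => by
    by_contra! h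
    have hp := D.eq_of_mem_box e p (Walk.fst_mem_support_of_mem_edges _ hpq) v h.1
    have hq := D.eq_of_mem_box e q (Walk.snd_mem_support_of_mem_edges _ hpq) v h.2
    exact (Walk.adj_of_mem_edges _ hpq).ne (IsPort.unique hne hp hq)
  rw [dist_toPlane] at hv
  exact ⟨z, D.eq_of_mem_box e z hz v hv, rfl⟩

lemma exists_isPort_of_mem_polyline {e : E} {v : V} {x : Pt} (hx : x ∈ polyline (D.vertices e))
    (hv : dist x (toPlane (D.center v)) ≤ D.radius) :
    ∃ z, D.IsPort e v z ∧ x ∈ segment ℝ (toPlane (D.center v)) (toPlane z) := by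
  rw [polyline_vertices] at hx
  rcases hx with hx | hx
  · obtain ⟨z, hz, rfl⟩ := D.exists_isPort_of_mem_gridCurve hne hx hv
    exact ⟨z, hz, right_mem_segment ℝ _ _⟩
  · simp only [mem_iUnion] at hx
    obtain ⟨u, z, hz, hx⟩ := hx
    obtain rfl := D.vertex_eq_of_dist_le (hz.dist_le_of_mem_segment hx) hv
    exact ⟨z, hz, hx⟩

lemma isSimplePolyline_vertices (e : E) : IsSimplePolyline (D.vertices e) := by
  have hfirst : D.IsPort e (src e) (D.first e) := Or.inl ⟨rfl, rfl⟩
  have hlast : D.IsPort e (tgt e) (D.last e) := Or.inr ⟨rfl, rfl⟩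
  have meet {v : V} {z : ℤ × ℤ} (hz : D.IsPort e v z) {x : Pt} (hx : x ∈ gridCurve (D.path e))
      (hxz : x ∈ segment ℝ (toPlane (D.center v)) (toPlane z)) : x = toPlane z := by
    obtain ⟨z', hz', rfl⟩ :=
      D.exists_isPort_of_mem_gridCurve hne hx (hz.dist_le_of_mem_segment hxz)
    rw [IsPort.unique hne hz hz']
  refine .concat (l := _ :: _) (.cons (isSimplePolyline_of_isPath (D.isPath e)) ?_ ?_ ?_) ?_ ?_ ?_
  · simp
  · simpa using hfirst.center_ne
  · rintro x ⟨hx, hxw⟩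
    simp only [List.head_map, Walk.head_support, mem_singleton_iff] at hx ⊢
    exact meet hfirst hxw hx
  · simp
  · simpa using hlast.center_ne.symm
  · rintro x ⟨hx, hxl⟩
    rw [polyline_cons _ (by simp)] at hx
    simp only [List.head_map, Walk.head_support, mem_union, ne_eq, List.map_eq_nil_iff,
      Walk.support_ne_nil, not_false_eq_true, List.getLast_cons, List.getLast_map,
      Walk.getLast_support, mem_singleton_iff] at hx hxl ⊢
    rw [segment_symm] at hxl
    rcases hx with hx | hx
    · exact absurd (D.vertex_eq_of_dist_le (hfirst.dist_le_of_mem_segment hx)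
        (hlast.dist_le_of_mem_segment hxl)) (hne e)
    · exact meet hlast hx hxl

lemma exists_eq_center_of_mem_of_mem {e e' : E} (hee' : e ≠ e') {x : Pt}
    (hx : x ∈ polyline (D.vertices e)) (hx' : x ∈ polyline (D.vertices e')) :
    ∃ v, (v = src e ∨ v = tgt e) ∧ (v = src e' ∨ v = tgt e') ∧ x = toPlane (D.center v) := by
  suffices h : ∃ v, dist x (toPlane (D.center v)) ≤ D.radius by
    obtain ⟨v, hv⟩ := h
    obtain ⟨z, hz, hxz⟩ := D.exists_isPort_of_mem_polyline hne hx hv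
    obtain ⟨z', hz', hxz'⟩ := D.exists_isPort_of_mem_polyline hne hx' hv
    refine ⟨v, hz.imp And.left And.left, hz'.imp And.left And.left,
      (eq_or_eq_of_mem_segment_of_dist_eq ?_ hxz hxz').resolve_right fun h => ?_⟩
    · rw [dist_toPlane, dist_toPlane, hz.dist_eq, hz'.dist_eq]
    · exact D.disjoint e e' hee' z hz.mem_support (toPlane_injective h ▸ hz'.mem_support)
  rw [polyline_vertices] at hx hx'
  simp only [mem_union, mem_iUnion] at hx hx'
  rcases hx with hx | ⟨v, z, hz, hx⟩
  · rcases hx' with hx' | ⟨v, z, hz, hx'⟩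
    · exact absurd (floorPt_mem_support_of_mem_gridCurve hx')
        (D.disjoint e e' hee' _ (floorPt_mem_support_of_mem_gridCurve hx))
    · exact ⟨v, hz.dist_le_of_mem_segment hx'⟩
  · exact ⟨v, hz.dist_le_of_mem_segment hx⟩

lemma eq_src_or_eq_tgt_of_center_mem {e : E} {v : V}
    (h : toPlane (D.center v) ∈ polyline (D.vertices e)) : v = src e ∨ v = tgt e := by
  obtain ⟨z, hz, -⟩ := D.exists_isPort_of_mem_polyline hne h
    (by rw [_root_.dist_self]; positivity)
  exact hz.imp And.left And.left

end Arc

end BoxDrawing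

end BoxDrawing

section PolygonalDrawing

open SimpleGraph

section Ends

variable {V : Type*} {G : SimpleGraph V}

/-- The first end of an edge, for an arbitrary choice of an orientation. -/
noncomputable def edgeSrc (e : G.edgeSet) : V := (Quot.out e.1).1

/-- The second end of an edge, for the orientation chosen in `edgeSrc`. -/
noncomputable def edgeTgt (e : G.edgeSet) : V := (Quot.out e.1).2

lemma mk_edgeSrc_edgeTgt (e : G.edgeSet) : s(edgeSrc e, edgeTgt e) = e.1 := Quot.out_eq e.1

lemma adj_edgeSrc_edgeTgt (e : G.edgeSet) : G.Adj (edgeSrc e) (edgeTgt e) := by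
  rw [← mem_edgeSet, mk_edgeSrc_edgeTgt]
  exact e.2

lemma mem_edge_iff {e : G.edgeSet} {v : V} : v ∈ e.1 ↔ v = edgeSrc e ∨ v = edgeTgt e := by
  rw [← mk_edgeSrc_edgeTgt, Sym2.mem_iff]

lemma BoxDrawing.exists_polyline (D : BoxDrawing (edgeSrc (G := G)) edgeTgt) (e : G.edgeSet)
    {u v : V} (he : e.1 = s(u, v)) :
    ∃ l, IsSimplePolyline (toPlane (D.center u) :: (l ++ [toPlane (D.center v)])) ∧
      polyline (D.vertices e) =
        polyline (toPlane (D.center u) :: (l ++ [toPlane (D.center v)])) := by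
  have hsimple := D.isSimplePolyline_vertices (fun e => (adj_edgeSrc_edgeTgt e).ne) e
  rw [← mk_edgeSrc_edgeTgt] at he
  rcases Sym2.eq_iff.1 he with ⟨rfl, rfl⟩ | ⟨rfl, rfl⟩
  · exact ⟨_, hsimple, rfl⟩
  · rw [← polyline_reverse]
    refine ⟨((D.path e).support.map toPlane).reverse, ?_, ?_⟩
    · simpa [vertices] using hsimple.reverse
    · simp [vertices]

theorem BoxDrawing.isDegenerate_five [Finite V] (D : BoxDrawing (edgeSrc (G := G)) edgeTgt) :
    IsDegenerate G 5 := by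
  refine isDegenerate_five_of_gridModel (B := fun v => (D.finite_branch v).toFinset)
    (fun u v huv => ?_) (fun v => ?_) fun u v huv => ?_
  · simpa [Function.onFun] using D.disjoint_branch huv
  · rw [Finite.coe_toFinset]
    exact D.connected_branch v
  · simp only [Finite.mem_toFinset]
    obtain ⟨p, hp, q, hq, hpq⟩ :=
      D.exists_adj_branch (fun e => (adj_edgeSrc_edgeTgt e).ne) ⟨s(u, v), huv⟩
    rcases Sym2.eq_iff.1 (mk_edgeSrc_edgeTgt ⟨s(u, v), huv⟩) with ⟨h₁, h₂⟩ | ⟨h₁, h₂⟩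
    · exact ⟨p, h₁ ▸ hp, q, h₂ ▸ hq, hpq⟩
    · exact ⟨q, h₂ ▸ hq, p, h₁ ▸ hp, hpq.symm⟩

end Ends

variable {V : Type} [Fintype V] {G : SimpleGraph V}

/-- All edges are drawn as broken lines. -/
def PlanarDrawing.IsPolygonal (Γ : PlanarDrawing G) : Prop :=
  ∀ u v, G.Adj u v → ∃ l, IsSimplePolyline (Γ.ρ u :: (l ++ [Γ.ρ v])) ∧
    Γ.arc s(u, v) = polyline (Γ.ρ u :: (l ++ [Γ.ρ v]))

namespace BoxDrawing

theorem exists_isPolygonal (D : BoxDrawing (edgeSrc (G := G)) edgeTgt) :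
    ∃ Γ : PlanarDrawing G, Γ.IsPolygonal := by
  have hne (e : G.edgeSet) : edgeSrc e ≠ edgeTgt e := (adj_edgeSrc_edgeTgt e).ne
  let arc (e : Sym2 V) : Set Pt := ⋃ h : e ∈ G.edgeSet, polyline (D.vertices ⟨e, h⟩)
  have arc_eq (e : G.edgeSet) : arc e = polyline (D.vertices e) := by simp [arc]
  have arc_polyline (u v : V) (h : G.Adj u v) :=
    arc_eq ⟨s(u, v), h⟩ ▸ D.exists_polyline ⟨s(u, v), h⟩ rfl
  refine ⟨⟨fun v => toPlane (D.center v), toPlane_injective.comp D.center_injective, arc,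
    fun u v h => ?_, fun e he v hv => ?_, fun e he e' he' hne' x hx => ?_⟩, arc_polyline⟩
  · obtain ⟨l, hl, harc⟩ := arc_polyline u v h
    exact harc ▸ isArcBetween_polyline hl
  · rw [arc_eq ⟨e, he⟩] at hv
    exact (mem_edge_iff (e := ⟨e, he⟩)).2 (D.eq_src_or_eq_tgt_of_center_mem hne hv)
  · rw [arc_eq ⟨e, he⟩, arc_eq ⟨e', he'⟩] at hx
    obtain ⟨v, hv, hv', rfl⟩ :=
      D.exists_eq_center_of_mem_of_mem hne (Subtype.coe_ne_coe.1 hne') hx.1 hx.2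
    exact ⟨v, (mem_edge_iff (e := ⟨e, he⟩)).2 hv, (mem_edge_iff (e := ⟨e', he'⟩)).2 hv', rfl⟩

end BoxDrawing

end PolygonalDrawing

section CoreDrawing

open Topology

lemma IsArcBetween.isCompact {A : Set Pt} {p q : Pt} (hA : IsArcBetween A p q) : IsCompact A := by
  obtain ⟨f, hf, -, -, -, rfl⟩ := hA
  exact isCompact_Icc.image_of_continuousOn hf

lemma IsArcBetween.exists_core {A : Set Pt} {p q : Pt} (hA : IsArcBetween A p q) {r : ℝ}
    (hr : 0 < r) : ∃ C ⊆ A, IsCompact C ∧ IsPreconnected C ∧ p ∉ C ∧ q ∉ C ∧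
      (∃ x ∈ C, dist x p ≤ r) ∧ ∃ x ∈ C, dist x q ≤ r := by
  obtain ⟨f, hf, hinj, rfl, rfl, rfl⟩ := hA
  have h₀ : (0 : ℝ) ∈ Icc (0 : ℝ) 1 := left_mem_Icc.2 zero_le_one
  have h₁ : (1 : ℝ) ∈ Icc (0 : ℝ) 1 := right_mem_Icc.2 zero_le_one
  obtain ⟨s, hs, hsr⟩ : ∃ s ∈ Ioo (0 : ℝ) 2⁻¹, dist (f s) (f 0) < r := by
    have : ∀ᶠ s in 𝓝[>] (0 : ℝ), dist (f s) (f 0) < r := by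
      rw [← nhdsWithin_Ioo_eq_nhdsGT one_pos]
      exact Metric.tendsto_nhds.1 ((hf 0 h₀).mono Ioo_subset_Icc_self) r hr
    exact (Filter.Eventually.and (Ioo_mem_nhdsGT (by norm_num)) this).exists
  obtain ⟨t, ht, htr⟩ : ∃ t ∈ Ioo (2⁻¹ : ℝ) 1, dist (f t) (f 1) < r := by
    have : ∀ᶠ t in 𝓝[<] (1 : ℝ), dist (f t) (f 1) < r := by
      rw [← nhdsWithin_Ioo_eq_nhdsLT one_pos]
      exact Metric.tendsto_nhds.1 ((hf 1 h₁).mono Ioo_subset_Icc_self) r hr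
    exact (Filter.Eventually.and (Ioo_mem_nhdsLT (by norm_num)) this).exists
  have hst : s ≤ t := (hs.2.trans ht.1).le
  have hsub : Icc s t ⊆ Icc 0 1 := Icc_subset_Icc hs.1.le ht.2.le
  refine ⟨f '' Icc s t, image_mono hsub, isCompact_Icc.image_of_continuousOn (hf.mono hsub),
    isPreconnected_Icc.image f (hf.mono hsub), fun h => ?_, fun h => ?_,
    ⟨f s, mem_image_of_mem f (left_mem_Icc.2 hst), hsr.le⟩,
    ⟨f t, mem_image_of_mem f (right_mem_Icc.2 hst), htr.le⟩⟩
  · exact hs.1.not_ge ((hinj.mem_image_iff hsub h₀).1 h).1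
  · exact ht.2.not_ge ((hinj.mem_image_iff hsub h₁).1 h).2

lemma eventually_forall_lt_dist {X ι : Type*} [MetricSpace X] [Finite ι] {K L : ι → Set X}
    (hK : ∀ i, IsCompact (K i)) (hL : ∀ i, IsCompact (L i)) (h : ∀ i, Disjoint (K i) (L i)) :
    ∀ᶠ r in 𝓝[>] (0 : ℝ), ∀ i, ∀ x ∈ K i, ∀ y ∈ L i, r < dist x y := by
  refine Filter.eventually_all.2 fun i => ?_
  obtain ⟨r, hr, h⟩ := Metric.exists_pos_forall_lt_edist (hK i) (hL i).isClosed (h i)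
  filter_upwards [Ioo_mem_nhdsGT (NNReal.coe_pos.2 hr)] with s hs x hx y hy
  have := h x hx y hy
  rw [edist_nndist, ENNReal.coe_lt_coe] at this
  exact hs.2.trans (by exact_mod_cast this)

/-- A fuzzy drawing of the multigraph whose edge `e` joins `src e` to `tgt e`: vertices are points,
and edges are connected sets which come within distance `r` of the ends of the edge but stay away
from all other vertices and from each other. -/
structure CoreDrawing {E V : Type*} (src tgt : E → V) (r δ : ℝ) where
  position : V → Pt
  core : E → Set Pt
  isPreconnected_core : ∀ e, IsPreconnected (core e)
  exists_dist_src_le : ∀ e, ∃ x ∈ core e, dist x (position (src e)) ≤ r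
  exists_dist_tgt_le : ∀ e, ∃ x ∈ core e, dist x (position (tgt e)) ≤ r
  lt_dist_position : ∀ u v, u ≠ v → 4 * r < dist (position u) (position v)
  lt_dist_core_position : ∀ e, ∀ x ∈ core e, ∀ v, v ≠ src e → v ≠ tgt e →
    2 * r < dist x (position v)
  lt_dist_core : ∀ e e', e ≠ e' → ∀ x ∈ core e, ∀ y ∈ core e', δ < dist x y

/-- The image of a fuzzy drawing under the homothety of ratio `t`. -/
def CoreDrawing.smul {E V : Type*} {src tgt : E → V} {r δ : ℝ} (D : CoreDrawing src tgt r δ)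
    {t : ℝ} (ht : 0 < t) : CoreDrawing src tgt (t * r) (t * δ) where
  position v := t • D.position v
  core e := (t • ·) '' D.core e
  isPreconnected_core e := (D.isPreconnected_core e).image _ (continuous_const_smul t).continuousOn
  exists_dist_src_le e := by
    obtain ⟨x, hx, hdist⟩ := D.exists_dist_src_le e
    refine ⟨_, mem_image_of_mem _ hx, ?_⟩
    rw [dist_smul₀, Real.norm_of_nonneg ht.le]
    gcongr
  exists_dist_tgt_le e := by
    obtain ⟨x, hx, hdist⟩ := D.exists_dist_tgt_le e
    refine ⟨_, mem_image_of_mem _ hx, ?_⟩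
    rw [dist_smul₀, Real.norm_of_nonneg ht.le]
    gcongr
  lt_dist_position u v huv := by
    rw [dist_smul₀, Real.norm_of_nonneg ht.le, mul_left_comm]
    exact mul_lt_mul_of_pos_left (D.lt_dist_position u v huv) ht
  lt_dist_core_position e := by
    rintro - ⟨x, hx, rfl⟩ v hs hv
    rw [dist_smul₀, Real.norm_of_nonneg ht.le, mul_left_comm]
    exact mul_lt_mul_of_pos_left (D.lt_dist_core_position e x hx v hs hv) ht
  lt_dist_core e e' hee' := by
    rintro - ⟨x, hx, rfl⟩ - ⟨y, hy, rfl⟩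
    rw [dist_smul₀, Real.norm_of_nonneg ht.le]
    exact mul_lt_mul_of_pos_left (D.lt_dist_core e e' hee' x hx y hy) ht

lemma PlanarDrawing.exists_coreDrawing {V : Type} [Fintype V] {G : SimpleGraph V}
    (Γ : PlanarDrawing G) :
    ∃ r > 0, ∃ δ > 0, Nonempty (CoreDrawing (edgeSrc (G := G)) edgeTgt r δ) := by
  classical
  have isArc (e : G.edgeSet) : IsArcBetween (Γ.arc e) (Γ.ρ (edgeSrc e)) (Γ.ρ (edgeTgt e)) :=
    mk_edgeSrc_edgeTgt e ▸ Γ.arc_isArc _ _ (adj_edgeSrc_edgeTgt e)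
  have hvertex := eventually_forall_lt_dist (ι := {p : V × V // p.1 ≠ p.2})
    (K := fun p => {Γ.ρ p.1.1}) (L := fun p => {Γ.ρ p.1.2}) (fun _ => isCompact_singleton)
    (fun _ => isCompact_singleton) fun p => disjoint_singleton.2 (Γ.inj.ne p.2)
  have harc := eventually_forall_lt_dist
    (ι := {p : G.edgeSet × V // p.2 ≠ edgeSrc p.1 ∧ p.2 ≠ edgeTgt p.1})
    (K := fun p => Γ.arc p.1.1) (L := fun p => {Γ.ρ p.1.2}) (fun p => (isArc p.1.1).isCompact)
    (fun _ => isCompact_singleton) fun p => disjoint_singleton_right.2 fun h =>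
      not_or.2 p.2 (mem_edge_iff.1 (Γ.vertex_mem _ p.1.1.2 _ h))
  obtain ⟨ε, ⟨hvertex, harc⟩, hε : 0 < ε⟩ := ((hvertex.and harc).and self_mem_nhdsWithin).exists
  choose core hsub hcompact hconn hsrc htgt near_src near_tgt using fun e =>
    (isArc e).exists_core (div_pos hε four_pos)
  have hcore := eventually_forall_lt_dist (ι := {p : G.edgeSet × G.edgeSet // p.1 ≠ p.2})
    (K := fun p => core p.1.1) (L := fun p => core p.1.2) (fun p => hcompact p.1.1)
    (fun p => hcompact p.1.2) fun p => disjoint_left.2 fun x hx hx' => by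
      obtain ⟨v, hv, -, rfl⟩ := Γ.arcs_cross _ p.1.1.2 _ p.1.2.2 (Subtype.coe_ne_coe.2 p.2) x
        ⟨hsub _ hx, hsub _ hx'⟩
      rcases mem_edge_iff.1 hv with rfl | rfl
      exacts [hsrc _ hx, htgt _ hx]
  obtain ⟨δ, hcore, hδ : 0 < δ⟩ := (hcore.and self_mem_nhdsWithin).exists
  refine ⟨ε / 4, div_pos hε four_pos, δ, hδ, ⟨Γ.ρ, core, hconn, near_src, near_tgt,
    fun u v huv => ?_, fun e x hx v hs ht => ?_, fun e e' hee' => hcore ⟨(e, e'), hee'⟩⟩⟩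
  · have := hvertex ⟨(u, v), huv⟩ _ rfl _ rfl
    linarith
  · have := harc ⟨(e, v), hs, ht⟩ x (hsub e hx) _ rfl
    linarith

end CoreDrawing

section CoreToBox

lemma exists_isPath_between {V : Type*} {G : SimpleGraph V} {A B : Set V} {a b : V}
    (w : G.Walk a b) (ha : a ∈ A) (hb : b ∈ B) :
    ∃ a' ∈ A, ∃ b' ∈ B, ∃ p : G.Walk a' b', p.IsPath ∧ p.support ⊆ w.support ∧
      ∀ z ∈ p.support, (z ∈ A → z = a') ∧ (z ∈ B → z = b') := by
  classical
  induction hn : w.length using Nat.strong_induction_on generalizing a b with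
  | _ n ih =>
    by_cases hA : ∃ z ∈ w.support, z ∈ A ∧ z ≠ a
    · obtain ⟨z, hz, hzA, hza⟩ := hA
      obtain ⟨a', ha', b', hb', p, hp, hpw, hpz⟩ :=
        ih _ (hn ▸ w.length_dropUntil_lt_length hz hza) (w.dropUntil z hz) hzA hb rfl
      exact ⟨a', ha', b', hb', p, hp,
        List.Subset.trans hpw (w.support_dropUntil_subset_support hz), hpz⟩
    by_cases hB : ∃ z ∈ w.support, z ∈ B ∧ z ≠ b
    · obtain ⟨z, hz, hzB, hzb⟩ := hB
      obtain ⟨a', ha', b', hb', p, hp, hpw, hpz⟩ :=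
        ih _ (hn ▸ w.length_takeUntil_lt_length hz hzb) (w.takeUntil z hz) ha hzB rfl
      exact ⟨a', ha', b', hb', p, hp,
        List.Subset.trans hpw (w.support_takeUntil_subset_support hz), hpz⟩
    push Not at hA hB
    have hsub := w.support_bypass_subset_support
    exact ⟨a, ha, b, hb, w.bypass, w.bypass_isPath, hsub, fun z hz =>
      ⟨hA z (hsub hz), hB z (hsub hz)⟩⟩

lemma dist_eq_of_adj {p q c : ℤ × ℤ} {R : ℕ} (h : gridGraph.Adj p q) (hp : dist p c ≤ R)
    (hq : R < dist q c) : dist p c = R := by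
  have := dist_triangle_left q c p
  have := dist_eq_one_of_adj h
  have := add_one_le_dist_of_lt hq
  linarith

lemma abs_dist_floorPt_sub_dist_le (x y : Pt) :
    |dist (floorPt x) (floorPt y) - dist x y| ≤ 2 := by
  have := dist_dist_dist_le (toPlane (floorPt x)) (toPlane (floorPt y)) x y
  rw [dist_toPlane, Real.dist_eq] at this
  linarith [dist_toPlane_floorPt_le x, dist_toPlane_floorPt_le y]

lemma exists_walk_floorPt {C : Set Pt} (hC : IsPreconnected C) {x y : Pt} (hx : x ∈ C)
    (hy : y ∈ C) : ∃ w : gridGraph.Walk (floorPt x) (floorPt y),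
      ∀ z ∈ w.support, ∃ p ∈ C, dist (toPlane z) p ≤ 4 := by
  refine hC.induction₂ (fun x y => ∃ w : gridGraph.Walk (floorPt x) (floorPt y),
    ∀ z ∈ w.support, ∃ p ∈ C, dist (toPlane z) p ≤ 4) (fun x _ => ?_) ?_ ?_ hx hy
  · filter_upwards [mem_nhdsWithin_of_mem_nhds (Metric.closedBall_mem_nhds x one_pos),
      self_mem_nhdsWithin] with y hyx hy
    obtain ⟨w, hw⟩ := exists_walk_dist_le (floorPt x) (floorPt y)
    refine ⟨w, fun z hz => ⟨y, hy, ?_⟩⟩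
    have hxy := (abs_le.1 (abs_dist_floorPt_sub_dist_le x y)).2
    rw [Metric.mem_closedBall, dist_comm] at hyx
    have htri := dist_triangle (toPlane z) (toPlane (floorPt y)) y
    rw [dist_toPlane] at htri
    linarith [hw z hz, dist_toPlane_floorPt_le y]
  · rintro x y z - - - ⟨w, hw⟩ ⟨w', hw'⟩
    exact ⟨w.append w', fun z hz => ((w.mem_support_append_iff w').1 hz).elim (hw z) (hw' z)⟩
  · rintro x y - - ⟨w, hw⟩
    exact ⟨w.reverse, fun z hz => hw z (by simpa using hz)⟩

namespace CoreDrawing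

variable {E V : Type*} {src tgt : E → V} {r δ : ℝ} (D : CoreDrawing src tgt r δ) {R : ℕ}

lemma lt_dist_floorPt_position (hR : R + 1 ≤ 2 * r) {u v : V} (huv : u ≠ v) :
    2 * R < dist (floorPt (D.position u)) (floorPt (D.position v)) := by
  have := (abs_le.1 (abs_dist_floorPt_sub_dist_le (D.position u) (D.position v))).1
  linarith [D.lt_dist_position u v huv]

lemma exists_floorPt_mem_closedBall (hR : r + 2 ≤ R) {C : Set Pt} {v : V}
    (h : ∃ x ∈ C, dist x (D.position v) ≤ r) :
    ∃ x ∈ C, floorPt x ∈ Metric.closedBall (floorPt (D.position v)) R := by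
  obtain ⟨x, hx, hxv⟩ := h
  have := (abs_le.1 (abs_dist_floorPt_sub_dist_le x (D.position v))).2
  exact ⟨x, hx, Metric.mem_closedBall.2 (by linarith)⟩

lemma eq_or_eq_of_dist_floorPt_le (hR : R + 5 ≤ 2 * r) {e : E} {z : ℤ × ℤ} {x : Pt} {v : V}
    (hx : x ∈ D.core e) (hzx : dist (toPlane z) x ≤ 4)
    (hz : dist z (floorPt (D.position v)) ≤ R) : v = src e ∨ v = tgt e := by
  by_contra! h
  have htri := dist_triangle4 x (toPlane z) (toPlane (floorPt (D.position v))) (D.position v)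
  rw [dist_comm x (toPlane z), dist_toPlane] at htri
  linarith [D.lt_dist_core_position e x hx v h.1 h.2, dist_toPlane_floorPt_le (D.position v)]

lemma exists_isPath (hrR : r + 2 ≤ R) (hR : R + 5 ≤ 2 * r) (hne : ∀ e, src e ≠ tgt e) (e : E) :
    ∃ a b, ∃ p : gridGraph.Walk a b, p.IsPath ∧
      dist a (floorPt (D.position (src e))) = R ∧ dist b (floorPt (D.position (tgt e))) = R ∧
      (∀ z ∈ p.support, ∀ v, dist z (floorPt (D.position v)) ≤ R →
        v = src e ∧ z = a ∨ v = tgt e ∧ z = b) ∧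
      ∀ z ∈ p.support, ∃ x ∈ D.core e, dist (toPlane z) x ≤ 4 := by
  obtain ⟨x, hx, hxA⟩ := D.exists_floorPt_mem_closedBall hrR (D.exists_dist_src_le e)
  obtain ⟨y, hy, hyB⟩ := D.exists_floorPt_mem_closedBall hrR (D.exists_dist_tgt_le e)
  obtain ⟨w, hw⟩ := exists_walk_floorPt (D.isPreconnected_core e) hx hy
  obtain ⟨a, ha, b, hb, p, hp, hpw, hends⟩ := exists_isPath_between w hxA hyB
  simp only [Metric.mem_closedBall] at ha hb hends
  have hnil : ¬p.Nil := fun h => by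
    have htri := dist_triangle_left (floorPt (D.position (src e))) (floorPt (D.position (tgt e))) b
    rw [h.eq] at ha
    linarith [D.lt_dist_floorPt_position (by linarith) (hne e)]
  have hsnd := p.adj_snd hnil
  have hpen := p.adj_penultimate hnil
  refine ⟨a, b, p, hp,
    dist_eq_of_adj hsnd ha <| not_le.1 fun h =>
      hsnd.ne ((hends _ (p.getVert_mem_support 1)).1 h).symm,
    dist_eq_of_adj hpen.symm hb <| not_le.1 fun h =>
      hpen.ne ((hends _ (p.getVert_mem_support _)).2 h),
    fun z hz v hzv => ?_, fun z hz => hw z (hpw hz)⟩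
  obtain ⟨x, hx, hzx⟩ := hw z (hpw hz)
  rcases D.eq_or_eq_of_dist_floorPt_le hR hx hzx hzv with rfl | rfl
  · exact Or.inl ⟨rfl, (hends z hz).1 hzv⟩
  · exact Or.inr ⟨rfl, (hends z hz).2 hzv⟩

include D in
lemma nonempty_boxDrawing (hr : 8 ≤ r) (hδ : 8 ≤ δ) (hne : ∀ e, src e ≠ tgt e) :
    Nonempty (BoxDrawing src tgt) := by
  obtain ⟨R, hrR, hR⟩ : ∃ R : ℕ, r + 2 ≤ R ∧ R + 5 ≤ 2 * r := by
    refine ⟨⌈r⌉₊ + 2, ?_, ?_⟩ <;> push_cast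
    · linarith [Nat.le_ceil r]
    · linarith [Nat.ceil_lt_add_one (by linarith : 0 ≤ r)]
  choose first last path isPath dist_first dist_last eq_of_mem_box exists_core using
    D.exists_isPath hrR hR hne
  refine ⟨{
    radius := R
    radius_pos := Nat.cast_pos.1 (by linarith : (0 : ℝ) < R)
    center v := floorPt (D.position v)
    lt_dist_center u v := D.lt_dist_floorPt_position (by linarith)
    first, last, path, isPath, dist_first, dist_last, eq_of_mem_box
    disjoint e e' hee' z hz hz' := ?_ }⟩
  obtain ⟨x, hx, hzx⟩ := exists_core e z hz
  obtain ⟨y, hy, hzy⟩ := exists_core e' z hz'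
  linarith [D.lt_dist_core e e' hee' x hx y hy, dist_triangle_left x y (toPlane z)]

end CoreDrawing

lemma PlanarDrawing.nonempty_boxDrawing {V : Type} [Fintype V] {G : SimpleGraph V}
    (Γ : PlanarDrawing G) : Nonempty (BoxDrawing (edgeSrc (G := G)) edgeTgt) := by
  obtain ⟨r, hr, δ, hδ, ⟨D⟩⟩ := Γ.exists_coreDrawing
  have ht : 0 < 8 / r + 8 / δ := by positivity
  refine (D.smul ht).nonempty_boxDrawing ?_ ?_ fun e => (adj_edgeSrc_edgeTgt e).ne
  · rw [add_mul, div_mul_cancel₀ _ hr.ne']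
    linarith [show 0 ≤ 8 / δ * r by positivity]
  · rw [add_mul, div_mul_cancel₀ _ hδ.ne']
    linarith [show 0 ≤ 8 / r * δ by positivity]

end CoreToBox

section Alignment

/-- The image of a drawing under a homeomorphism of the plane. -/
def PlanarDrawing.image {V : Type} [Fintype V] {G : SimpleGraph V} (Γ : PlanarDrawing G)
    (h : Pt ≃ₜ Pt) : PlanarDrawing G where
  ρ v := h (Γ.ρ v)
  inj := h.injective.comp Γ.inj
  arc e := h '' Γ.arc e
  arc_isArc u v huv := (Γ.arc_isArc u v huv).image_homeomorph h
  vertex_mem e he w hw := Γ.vertex_mem e he w (h.injective.mem_set_image.1 hw)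
  arcs_cross e he e' he' hne x hx := by
    rw [← image_inter h.injective] at hx
    obtain ⟨y, hy, rfl⟩ := hx
    obtain ⟨w, hw, hw', rfl⟩ := Γ.arcs_cross e he e' he' hne y hy
    exact ⟨w, hw, hw', rfl⟩

/-- The vertices `w 0, …, w (m - 1)` are the points `0, …, m - 1` of the horizontal axis, and the
edge from `w j` to `w (j + 1)` is a segment of that axis whenever `c j` holds. -/
structure PlanarDrawing.IsAligned {V : Type} [Fintype V] {G : SimpleGraph V}
    (Γ : PlanarDrawing G) (m : ℕ) (w : ℕ → V) (c : ℕ → Prop) : Prop where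
  ρ_eq : ∀ j < m, Γ.ρ (w j) = ((j : ℝ), 0)
  arc_eq : ∀ j, c j → Γ.arc s(w j, w (j + 1)) = segment ℝ ((j : ℝ), 0) ((j : ℝ) + 1, 0)

section

variable {V : Type} [Fintype V] {G : SimpleGraph V} {Γ : PlanarDrawing G} {m : ℕ} {w : ℕ → V}
  {c : ℕ → Prop}

lemma PlanarDrawing.eq_succ_of_mem_arc_of_mem_arc (Γ : PlanarDrawing G) (hw : InjOn w (Iio m))
    {i j : ℕ} (hi : G.Adj (w i) (w (i + 1))) (hj : G.Adj (w j) (w (j + 1))) (hij : i < j)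
    (hjm : j + 1 < m) {x : Pt} (hx : x ∈ Γ.arc s(w i, w (i + 1)))
    (hx' : x ∈ Γ.arc s(w j, w (j + 1))) : j = i + 1 ∧ x = Γ.ρ (w (i + 1)) := by
  have index {k l : ℕ} (hk : k < m) (hl : l < m) (h : w k = w l) : k = l := hw hk hl h
  have hne : s(w i, w (i + 1)) ≠ s(w j, w (j + 1)) := by
    grind
  obtain ⟨v, hv, hv', rfl⟩ := Γ.arcs_cross _ hi _ hj hne x ⟨hx, hx'⟩
  rw [Sym2.mem_iff] at hv hv'
  grind

lemma PlanarDrawing.IsPolygonal.exists_polygonalChain (hΓ : Γ.IsPolygonal) (hw : InjOn w (Iio m))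
    (hc : ∀ j, c j → j + 1 < m ∧ G.Adj (w j) (w (j + 1))) :
    ∃ C : PolygonalChain Pt m, (∀ j, C.point j = Γ.ρ (w j)) ∧
      ∀ j, c j → C.joined j ∧ C.edge j = Γ.arc s(w j, w (j + 1)) := by
  have exists_inner (j : ℕ) : ∃ l, c j → IsSimplePolyline (Γ.ρ (w (j + 1)) :: (l ++ [Γ.ρ (w j)])) ∧
      Γ.arc s(w j, w (j + 1)) = polyline (Γ.ρ (w (j + 1)) :: (l ++ [Γ.ρ (w j)])) := by
    by_cases hj : c j
    · obtain ⟨l, hl⟩ := hΓ _ _ (hc j hj).2.symm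
      exact ⟨l, fun _ => Sym2.eq_swap ▸ hl⟩
    · exact ⟨[], fun h => absurd h hj⟩
  choose inner hinner using exists_inner
  refine ⟨{
    point j := Γ.ρ (w j)
    joined := c
    inner := inner
    lt_of_joined j hj := (hc j hj).1
    injOn := Γ.inj.comp_injOn hw
    isSimplePolyline j hj := (hinner j hj).1
    eq_of_mem_of_mem i j hi hj hij x hx hx' := ?_
    eq_or_eq_of_mem j hj k hk hx := ?_ }, fun _ => rfl, fun j hj => ⟨hj, (hinner j hj).2.symm⟩⟩
  · rw [← (hinner _ ‹_›).2] at hx hx'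
    exact Γ.eq_succ_of_mem_arc_of_mem_arc hw (hc i hi).2 (hc j hj).2 hij (hc j hj).1 hx hx'
  · rw [← (hinner j hj).2] at hx
    have hjm := (hc j hj).1
    exact (Sym2.mem_iff.1 (Γ.vertex_mem _ (hc j hj).2 _ hx)).imp
      (hw hk (j.lt_succ_self.trans hjm)) (hw hk hjm)

theorem PlanarDrawing.exists_isAligned (Γ : PlanarDrawing G) (hw : InjOn w (Iio m))
    (hc : ∀ j, c j → j + 1 < m ∧ G.Adj (w j) (w (j + 1))) :
    ∃ Γ' : PlanarDrawing G, Γ'.IsAligned m w c := by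
  obtain ⟨D⟩ := Γ.nonempty_boxDrawing
  obtain ⟨Γ', hΓ'⟩ := D.exists_isPolygonal
  obtain ⟨C, hpoint, hedge⟩ := hΓ'.exists_polygonalChain hw hc
  obtain ⟨h, hh, hh'⟩ := C.exists_homeomorph_apply_point
  refine ⟨Γ'.image h, fun j hj => (congrArg h (hpoint j)).symm.trans (hh j hj), fun j hj => ?_⟩
  exact (congrArg (h '' ·) (hedge j hj).2).symm.trans (hh' j (hedge j hj).1)

theorem PlanarDrawing.exists_injOn_not_adj [Nonempty V] (Γ : PlanarDrawing G)
    (hm : 4 * m ≤ Fintype.card V) :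
    ∃ w : ℕ → V, InjOn w (Iio m) ∧ ∀ i j, i + 1 < j → j < m → ¬G.Adj (w i) (w j) := by
  obtain ⟨D⟩ := Γ.nonempty_boxDrawing
  obtain ⟨l, hnodup, hlin, hl⟩ := exists_isLinear_of_isDegenerate_five D.isDegenerate_five
  have hml : m ≤ l.length := by omega
  have getD_eq {j : ℕ} (hj : j < m) : l.getD j (Classical.arbitrary V) = l[j] := by
    rw [List.getD_eq_getElem]
  refine ⟨fun j => l.getD j (Classical.arbitrary V), fun i hi j hj hij => ?_, fun i j hij hj => ?_⟩
  · simp only [getD_eq hi, getD_eq hj] at hij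
    exact hnodup.getElem_inj_iff.1 hij
  · simp only [getD_eq hj, getD_eq (show i < m by omega)]
    exact hlin.not_adj hij (by omega)

end

lemma isSefeNoMap_of_isAligned {V₁ V₂ : Type} [Fintype V₁] [Fintype V₂] {G₁ : SimpleGraph V₁}
    {G₂ : SimpleGraph V₂} {Γ₁ : PlanarDrawing G₁} {Γ₂ : PlanarDrawing G₂} {m : ℕ} {w : ℕ → V₁}
    {a : ℕ → V₂} {c : ℕ → Prop} (h₁ : Γ₁.IsAligned m w c) (h₂ : Γ₂.IsAligned m a c)
    (hw : ∀ i j, i + 1 < j → j < m → ¬G₁.Adj (w i) (w j)) (ha : SurjOn a (Iio m) univ)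
    (hc : ∀ j, j + 1 < m → G₁.Adj (w j) (w (j + 1)) → G₂.Adj (a j) (a (j + 1)) → c j) :
    IsSefeNoMap Γ₁ Γ₂ := by
  have ρ_eq {j : ℕ} (hj : j < m) : Γ₂.ρ (a j) = Γ₁.ρ (w j) := by rw [h₁.ρ_eq j hj, h₂.ρ_eq j hj]
  refine ⟨?_, fun u v x y huv hxy hρ => ?_⟩
  · rintro - ⟨x, rfl⟩
    obtain ⟨j, hj, rfl⟩ := ha (mem_univ x)
    exact ⟨w j, (ρ_eq hj).symm⟩
  obtain ⟨i, hi : i < m, rfl⟩ := ha (mem_univ x)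
  obtain ⟨j, hj : j < m, rfl⟩ := ha (mem_univ y)
  wlog hij : i < j generalizing i j
  · rw [Sym2.eq_swap (a := a i)]
    refine this j hj i hi hxy.symm (hρ.trans (pair_comm _ _)) ?_
    exact (not_lt.1 hij).lt_of_ne fun h => hxy.ne (congrArg a h.symm)
  have huv_eq : s(u, v) = s(w i, w j) := by
    rw [ρ_eq hi, ρ_eq hj, pair_eq_pair_iff] at hρ
    simpa [Γ₁.inj.eq_iff] using hρ
  have hadj : G₁.Adj (w i) (w j) := by rwa [← SimpleGraph.mem_edgeSet, ← huv_eq]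
  obtain rfl : j = i + 1 := (not_lt.1 fun h => hw i j h hj hadj).antisymm hij
  have hci := hc i hj hadj hxy
  rw [huv_eq, h₁.arc_eq i hci, h₂.arc_eq i hci]

end Alignment

/-- Every `n`-vertex planar graph and every planar graph with at most `n/4`
vertices admit a SefeNoMap. -/
theorem sefeNoMap_of_quarter {V₁ V₂ : Type} [Fintype V₁] [Fintype V₂]
    (G₁ : SimpleGraph V₁) (G₂ : SimpleGraph V₂) (n : ℕ)
    (hn : Fintype.card V₁ = n)
    (hplanar₁ : Nonempty (PlanarDrawing G₁)) (hplanar₂ : Nonempty (PlanarDrawing G₂))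
    (hcard : 4 * Fintype.card V₂ ≤ n) :
    ∃ (Γ₁ : PlanarDrawing G₁) (Γ₂ : PlanarDrawing G₂), IsSefeNoMap Γ₁ Γ₂ := by
  obtain ⟨Δ₁⟩ := hplanar₁
  obtain ⟨Δ₂⟩ := hplanar₂
  rcases isEmpty_or_nonempty V₂ with hV₂ | hV₂
  · exact ⟨Δ₁, Δ₂, by rintro - ⟨v, rfl⟩; exact isEmptyElim v, fun u v a => isEmptyElim a⟩
  set m := Fintype.card V₂
  have hm : 0 < m := Fintype.card_pos
  have : Nonempty V₁ := Fintype.card_pos_iff.1 (by omega)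
  obtain ⟨w, hw, hlin⟩ := Δ₁.exists_injOn_not_adj (m := m) (by omega)
  obtain ⟨a, ha⟩ : ∃ a : ℕ → V₂, BijOn a (Iio m) univ :=
    (finite_Iio m).exists_bijOn_of_encard_eq (by simp [← Finset.coe_Iio, m])
  let c (j : ℕ) : Prop := j + 1 < m ∧ G₁.Adj (w j) (w (j + 1)) ∧ G₂.Adj (a j) (a (j + 1))
  obtain ⟨Γ₁, hΓ₁⟩ := Δ₁.exists_isAligned (c := c) hw fun j hj => ⟨hj.1, hj.2.1⟩
  obtain ⟨Γ₂, hΓ₂⟩ := Δ₂.exists_isAligned (c := c) ha.injOn fun j hj => ⟨hj.1, hj.2.2⟩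
  exact ⟨Γ₁, Γ₂, isSefeNoMap_of_isAligned hΓ₁ hΓ₂ hlin ha.surjOn fun j hj h₁ h₂ => ⟨hj, h₁, h₂⟩⟩
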